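/- Let Ω ⊂ ℂⁿ, n ≥ 2, be a bounded pseudoconvex domain with C^∞ boundary, and let p ∈ ∂Ω be a strongly pseudoconvex boundary point. If F : Ω → Ω is a holomorphic map such that F(z₀) = z₀ for some z₀ ∈ Ω and F(z) = z + o(‖z−p‖²) as z → p within Ω, then F(z) = z for all z ∈ Ω. -/

import Mathlib

open Complex Topology Filter Metric Set Function

noncomputable section

/-- `ℂⁿ` as a normed space. -/
abbrev En (n : ℕ) : Type := EuclideanSpace ℂ (Fin n)

/-- A domain: a nonempty open connected set. -/
def IsDomain' {n : ℕ} (Ω : Set (En n)) : Prop :=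
  IsOpen Ω ∧ IsConnected Ω

/-- The Levi form of `ρ` at `q` in direction `ξ`:
`(1/4)(H_q(ξ,ξ) + H_q(iξ,iξ))` with `H_q` the second real Fréchet derivative. -/
def LeviForm {n : ℕ} (ρ : En n → ℝ) (q ξ : En n) : ℝ :=
  (1 / 4) * (iteratedFDeriv ℝ 2 ρ q ![ξ, ξ] + iteratedFDeriv ℝ 2 ρ q ![I • ξ, I • ξ])

/-- `ξ` lies in the complex tangent space of `{ρ = 0}` at `q`. -/
def InCplxTangent {n : ℕ} (ρ : En n → ℝ) (q ξ : En n) : Prop :=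
  fderiv ℝ ρ q ξ = 0 ∧ fderiv ℝ ρ q (I • ξ) = 0

/-- `ρ` is a `C^m` defining function for `Ω`. -/
def IsDefiningFunction {n : ℕ} (Ω : Set (En n)) (m : ℕ∞) (ρ : En n → ℝ) : Prop :=
  ContDiff ℝ m ρ ∧ Ω = {z | ρ z < 0} ∧ frontier Ω = {z | ρ z = 0} ∧
    ∀ q ∈ frontier Ω, fderiv ℝ ρ q ≠ 0

/-- `q` is a strongly pseudoconvex point with respect to `ρ`. -/
def StronglyPcxAt {n : ℕ} (ρ : En n → ℝ) (q : En n) : Prop :=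
  ∀ ξ : En n, ξ ≠ 0 → InCplxTangent ρ q ξ → 0 < LeviForm ρ q ξ

/-- `Ω` is pseudoconvex with `C^∞` boundary, witnessed by the defining function `ρ`. -/
def IsPcxCinfBoundary {n : ℕ} (Ω : Set (En n)) (ρ : En n → ℝ) : Prop :=
  IsDefiningFunction Ω ⊤ ρ ∧
    ∀ q ∈ frontier Ω, ∀ ξ : En n, InCplxTangent ρ q ξ → 0 ≤ LeviForm ρ q ξ

/-- `F z = z + o(‖z - p‖^k)` as `z → p` within `Ω`. -/
def LittleOh {n : ℕ} (Ω : Set (En n)) (F : En n → En n) (p : En n) (k : ℕ) : Prop :=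
  Tendsto (fun z => ‖F z - z‖ / ‖z - p‖ ^ k) (𝓝[Ω] p) (𝓝 0)

/-- `F` is an automorphism of `Ω`: a holomorphic bijection with holomorphic inverse. -/
def IsAutomorphismOf {n : ℕ} (F : En n → En n) (Ω : Set (En n)) : Prop :=
  DifferentiableOn ℂ F Ω ∧ MapsTo F Ω Ω ∧
    ∃ G : En n → En n, DifferentiableOn ℂ G Ω ∧ MapsTo G Ω Ω ∧
      (∀ z ∈ Ω, G (F z) = z) ∧ (∀ z ∈ Ω, F (G z) = z)

section HolomorphicTools

variable {E V : Type*} [NormedAddCommGroup E] [NormedSpace ℂ E]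
  [NormedAddCommGroup V] [NormedSpace ℂ V]

/-- Schwarz-type Lipschitz bound for a bounded holomorphic map at the centre of a ball. -/
theorem norm_sub_center_le {f : E → V} {z w : E} {r B : ℝ}
    (hd : DifferentiableOn ℂ f (ball z r)) (hB : ∀ x ∈ ball z r, ‖f x‖ ≤ B) (hw : w ∈ ball z r) :
    ‖f w - f z‖ ≤ 2 * B / r * ‖w - z‖ := by
  have hr : 0 < r := nonempty_ball.1 ⟨w, hw⟩
  have := dist_le_div_mul_dist_of_mapsTo_ball (R₂ := 2 * B) hd (fun x hx => by
    rw [mem_closedBall, dist_eq_norm]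
    linarith [norm_sub_le (f x) (f z), hB x hx, hB z (mem_ball_self hr)]) hw
  simpa [dist_eq_norm] using this

/-- Cauchy estimate for the derivative of a bounded holomorphic map. -/
theorem norm_fderiv_center_le {f : E → V} {z : E} {r B : ℝ} (hr : 0 < r)
    (hd : DifferentiableOn ℂ f (ball z r)) (hB : ∀ x ∈ ball z r, ‖f x‖ ≤ B) :
    ‖fderiv ℂ f z‖ ≤ 2 * B / r :=
  norm_fderiv_le_div_of_mapsTo_ball hd (fun x hx => by
    rw [mem_closedBall, dist_eq_norm]
    linarith [norm_sub_le (f x) (f z), hB x hx, hB z (mem_ball_self hr)]) hr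

/-- Cauchy estimate for a directional derivative, from a bound along a complex line. -/
theorem norm_fderiv_apply_le {f : E → V} {z v : E} {r B : ℝ} (hr : 0 < r)
    (hd : ∀ ζ : ℂ, ‖ζ‖ < r → DifferentiableAt ℂ f (z + ζ • v))
    (hB : ∀ ζ : ℂ, ‖ζ‖ < r → ‖f (z + ζ • v)‖ ≤ B) :
    ‖fderiv ℂ f z v‖ ≤ 2 * B / r := by
  have hg : DifferentiableOn ℂ (fun ζ : ℂ => f (z + ζ • v)) (ball 0 r) := fun ζ hζ =>
    ((hd ζ (by simpa using hζ)).comp (f := fun ζ : ℂ => z + ζ • v) ζ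
      (by fun_prop)).differentiableWithinAt
  have h1 : HasDerivAt (fun ζ : ℂ => f (z + ζ • v)) (fderiv ℂ f z v) 0 := by
    have h0 : HasFDerivAt f (fderiv ℂ f z) (z + (0 : ℂ) • v) := by
      have := (hd 0 (by simpa using hr)).hasFDerivAt
      simpa only [zero_smul, add_zero] using this
    have hl : HasDerivAt (fun ζ : ℂ => z + ζ • v) v 0 := by
      simpa using ((hasDerivAt_id (0 : ℂ)).smul_const v).const_add z
    exact h0.comp_hasDerivAt (0 : ℂ) hl
  have h3 := norm_fderiv_center_le hr hg (fun ζ hζ => hB ζ (by simpa using hζ))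
  rw [← norm_deriv_eq_norm_fderiv, h1.deriv] at h3
  exact h3

/-- Second order Taylor estimate for a bounded holomorphic map. -/
theorem norm_sub_sub_fderiv_le {f : E → V} {z w : E} {r B : ℝ}
    (hd : DifferentiableOn ℂ f (ball z r)) (hB : ∀ x ∈ ball z r, ‖f x‖ ≤ B) (hw : w ∈ ball z r) :
    ‖f w - f z - fderiv ℂ f z (w - z)‖ ≤ 4 * B * (‖w - z‖ / r) ^ 2 := by
  have hr : 0 < r := nonempty_ball.1 ⟨w, hw⟩
  have hdz : DifferentiableAt ℂ f z := hd.differentiableAt (ball_mem_nhds _ hr)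
  set g : E → V := fun x => f x - fderiv ℂ f z (x - z) with hg
  have hgz : g z = f z := by simp [hg]
  have hgd : DifferentiableOn ℂ g (ball z r) :=
    hd.sub ((fderiv ℂ f z).differentiable.comp (differentiable_id.sub_const z)).differentiableOn
  have hmap : MapsTo g (ball z r) (closedBall (g z) (4 * B)) := by
    intro x hx
    have h1 := (fderiv ℂ f z).le_opNorm (x - z)
    have h2 := norm_fderiv_center_le hr hd hB
    have h3 : ‖x - z‖ < r := by simpa [dist_eq_norm] using hx
    have h4 : ‖fderiv ℂ f z (x - z)‖ ≤ 2 * B := by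
      refine h1.trans ((mul_le_mul h2 h3.le (norm_nonneg _) ((norm_nonneg _).trans h2)).trans ?_)
      rw [div_mul_cancel₀ _ hr.ne']
    rw [mem_closedBall, dist_eq_norm, hgz]
    have h5 : g x - f z = f x - f z - fderiv ℂ f z (x - z) := by simp only [hg]; abel
    rw [h5]
    linarith [norm_sub_le (f x - f z) (fderiv ℂ f z (x - z)), norm_sub_le (f x) (f z), hB x hx,
      hB z (mem_ball_self hr)]
  have ho : (g · - g z) =o[𝓝 z] (fun w ↦ ‖w - z‖ ^ 1) := by
    have := hdz.hasFDerivAt.isLittleO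
    simp only [pow_one]
    refine (this.norm_right).congr_left fun x => ?_
    simp only [hg]; simp; abel
  have := dist_le_mul_div_pow_of_mapsTo_ball_of_isLittleO hgd hmap ho hw
  rw [dist_eq_norm, dist_eq_norm, hgz] at this
  have h5 : g w - f z = f w - f z - fderiv ℂ f z (w - z) := by simp only [hg]; abel
  rw [h5] at this
  simpa using this

/-- Pointwise ultrafilter limits of uniformly bounded holomorphic maps are holomorphic, and the
derivatives converge. -/
theorem exists_hasFDerivAt_of_ultrafilter_tendsto [FiniteDimensional ℂ E] [FiniteDimensional ℂ V]
    {ι : Type*} (U : Ultrafilter ι) {f : ι → E → V} {g : E → V} {Ω : Set E} {B : ℝ}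
    (hΩ : IsOpen Ω) (hd : ∀ i, DifferentiableOn ℂ (f i) Ω) (hB : ∀ i, ∀ x ∈ Ω, ‖f i x‖ ≤ B)
    (hlim : ∀ x ∈ Ω, Tendsto (fun i => f i x) U (𝓝 (g x))) {z : E} (hz : z ∈ Ω) :
    ∃ D : E →L[ℂ] V, HasFDerivAt g D z ∧ Tendsto (fun i => fderiv ℂ (f i) z) U (𝓝 D) := by
  obtain ⟨r, hr, hball⟩ := Metric.isOpen_iff.1 hΩ z hz
  have : ProperSpace (E →L[ℂ] V) := FiniteDimensional.proper ℂ _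
  obtain ⟨D, -, hD⟩ := (isCompact_closedBall (0 : E →L[ℂ] V) (2 * B / r)).ultrafilter_le_nhds
    (U.map fun i => fderiv ℂ (f i) z) (by
      refine le_principal_iff.2 (Ultrafilter.mem_map.2 (Filter.univ_mem' fun i => ?_))
      simpa using norm_fderiv_center_le hr ((hd i).mono hball) (fun x hx => hB i x (hball hx)))
  have hD' : Tendsto (fun i => fderiv ℂ (f i) z) U (𝓝 D) := hD
  refine ⟨D, ?_, hD'⟩
  have key : ∀ w ∈ ball z r, ‖g w - g z - D (w - z)‖ ≤ 4 * B * (‖w - z‖ / r) ^ 2 := by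
    intro w hw
    have h1 : Tendsto (fun i => ‖f i w - f i z - fderiv ℂ (f i) z (w - z)‖) U
        (𝓝 ‖g w - g z - D (w - z)‖) :=
      (((hlim w (hball hw)).sub (hlim z hz)).sub
        ((ContinuousLinearMap.apply ℂ V (w - z)).continuous.tendsto D |>.comp hD')).norm
    exact le_of_tendsto h1 (Eventually.of_forall fun i =>
      norm_sub_sub_fderiv_le ((hd i).mono hball) (fun x hx => hB i x (hball hx)) hw)
  rw [hasFDerivAt_iff_isLittleO]
  have hO : (fun w => g w - g z - D (w - z)) =O[𝓝 z] fun w => ‖w - z‖ ^ 2 := by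
    refine Asymptotics.IsBigO.of_bound (4 * B / r ^ 2) ?_
    filter_upwards [ball_mem_nhds z hr] with w hw
    refine (key w hw).trans (le_of_eq ?_)
    rw [Real.norm_of_nonneg (by positivity)]
    field_simp
  refine hO.trans_isLittleO ?_
  have : Tendsto (fun w : E => w - z) (𝓝 z) (𝓝 0) := by
    have : Continuous fun w : E => w - z := by fun_prop
    simpa using this.tendsto z
  exact ((Asymptotics.isLittleO_norm_pow_id (E' := E) one_lt_two).comp_tendsto this)

/-- Identity theorem for bounded holomorphic maps on connected open sets. -/
theorem eqOn_zero_of_eventuallyEq_zero {f : E → V} {Ω : Set E} {B : ℝ} (hΩ : IsOpen Ω)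
    (hc : IsPreconnected Ω) (hd : DifferentiableOn ℂ f Ω) (hB : ∀ x ∈ Ω, ‖f x‖ ≤ B) {z : E}
    (hz : z ∈ Ω) (h0 : ∀ᶠ x in 𝓝 z, f x = 0) : ∀ x ∈ Ω, f x = 0 := by
  have hsub : Ω ⊆ {x | ∀ᶠ y in 𝓝 x, f y = 0} := by
    refine hc.subset_of_closure_inter_subset isOpen_setOfPred_eventually_nhds ⟨z, hz, h0⟩ ?_
    rintro x ⟨hx, hxΩ⟩
    obtain ⟨r, hr, hball⟩ := Metric.isOpen_iff.1 hΩ x hxΩ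
    obtain ⟨y, hy, hxy⟩ := Metric.mem_closure_iff.1 hx (r / 2) (by positivity)
    have hy' : ∀ᶠ u in 𝓝 y, f u = 0 := hy
    have hyb : ball y (r / 2) ⊆ Ω := (ball_subset_ball' (by
      rw [dist_comm] at hxy; linarith)).trans hball
    have hall : ∀ w ∈ ball y (r / 2), f w = 0 := by
      intro w hw
      have hq : dist w y / (r / 2) < 1 := by
        rw [div_lt_one (by positivity)]; exact hw
      have hfy : f y = 0 := hy'.self_of_nhds
      have hn : ∀ n : ℕ, ‖f w‖ ≤ B * (dist w y / (r / 2)) ^ (n + 1) := by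
        intro n
        have := dist_le_mul_div_pow_of_mapsTo_ball_of_isLittleO (n := n) (R₂ := B)
          (hd.mono hyb) (fun u hu => by
            rw [mem_closedBall, dist_eq_norm, hfy, sub_zero]; exact hB u (hyb hu)) (by
            refine (Asymptotics.isLittleO_zero _ _).congr' ?_ EventuallyEq.rfl
            filter_upwards [hy'] with u hu
            simp [hu, hfy]) hw
        simpa [dist_eq_norm, hfy] using this
      have hlim : Tendsto (fun n : ℕ => B * (dist w y / (r / 2)) ^ (n + 1)) atTop (𝓝 (B * 0)) :=
        ((tendsto_pow_atTop_nhds_zero_of_lt_one (by positivity) hq).comp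
          (tendsto_add_atTop_nat 1)).const_mul B
      have := ge_of_tendsto' hlim hn
      exact norm_le_zero_iff.1 (by simpa using this)
    exact mem_of_superset (isOpen_ball.mem_nhds (by simpa using hxy)) hall
  exact fun x hx => (hsub hx).self_of_nhds

/-- Three circles estimate: a bounded holomorphic function on a disc which is small on a smaller
disc is bounded by a power of the modulus in between. -/
theorem norm_le_pow_of_norm_le_on_small_disc {f : ℂ → V} {r R B : ℝ} {p : ℕ} (hr : 0 < r)
    (hd : DifferentiableOn ℂ f (ball 0 R)) (hB : ∀ ζ : ℂ, ‖ζ‖ < R → ‖f ζ‖ ≤ B)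
    (hs : ∀ ζ : ℂ, ‖ζ‖ ≤ r → ‖f ζ‖ ≤ B * (r / R) ^ p) {ζ : ℂ} (h1 : r ≤ ‖ζ‖) (h2 : ‖ζ‖ < R) :
    ‖f ζ‖ ≤ B * (‖ζ‖ / R) ^ p := by
  have hR : 0 < R := hr.trans_le h1 |>.trans h2
  have hB0 : 0 ≤ B := (norm_nonneg _).trans (hB ζ h2)
  have key : ∀ R' : ℝ, ‖ζ‖ < R' → R' < R → ‖f ζ‖ ≤ B * (‖ζ‖ / R') ^ p := by
    intro R' hR'1 hR'2
    have hrR' : 0 < R' := (norm_nonneg _).trans_lt hR'1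
    set W : Set ℂ := ball 0 R' \ closedBall 0 r with hW
    have hWcl : closure W ⊆ closedBall 0 R' \ ball 0 r := by
      refine closure_minimal (fun x hx => ⟨ball_subset_closedBall hx.1, fun h => hx.2
        (ball_subset_closedBall h)⟩) (isClosed_closedBall.sdiff isOpen_ball)
    have hfr : frontier W ⊆ sphere 0 R' ∪ sphere 0 r := by
      intro x hx
      have hx1 := hWcl hx.1
      have hx2 : x ∉ W := by
        have : IsOpen W := isOpen_ball.sdiff isClosed_closedBall
        rw [this.frontier_eq] at hx
        exact hx.2
      simp only [hW, Set.mem_sdiff, mem_closedBall, mem_ball, dist_zero_right, mem_union,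
        mem_sphere] at *
      rcases lt_or_eq_of_le hx1.1 with h | h
      · right
        by_contra hne
        exact hx2 ⟨h, fun h' => hx1.2 (lt_of_le_of_ne h' hne)⟩
      · exact Or.inl h
    have hgd : DifferentiableOn ℂ (fun x : ℂ => (x ^ p)⁻¹ • f x) (ball 0 R \ {0}) := by
      refine DifferentiableOn.smul ?_ (hd.mono Set.sdiff_subset)
      intro x hx
      exact ((differentiableAt_id.pow p).inv (pow_ne_zero _ hx.2)).differentiableWithinAt
    have hsub : closure W ⊆ ball 0 R \ {0} := by
      intro x hx
      have := hWcl hx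
      refine ⟨closedBall_subset_ball hR'2 this.1, fun h => this.2 ?_⟩
      rw [mem_singleton_iff] at h
      simp [h, hr]
    have hmax := Complex.norm_le_of_forall_mem_frontier_norm_le (C := B / R' ^ p) (U := W) (z := ζ)
      (isBounded_ball.subset Set.sdiff_subset)
      ((hgd.mono hsub).diffContOnCl) (fun x hx => by
        rw [norm_smul, norm_inv, norm_pow]
        rcases hfr hx with h | h
        · rw [mem_sphere, dist_zero_right] at h
          rw [h, inv_mul_eq_div]
          gcongr
          exact hB x (h ▸ hR'2)
        · rw [mem_sphere, dist_zero_right] at h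
          rw [h]
          calc (r ^ p)⁻¹ * ‖f x‖ ≤ (r ^ p)⁻¹ * (B * (r / R) ^ p) := by
                gcongr; exact hs x h.le
            _ = B / R ^ p := by rw [div_pow]; field_simp
            _ ≤ B / R' ^ p := by gcongr)
    rcases eq_or_lt_of_le h1 with h | h
    · refine (hs ζ h.ge).trans ?_
      rw [← h]
      gcongr
    · have := hmax (subset_closure (show ζ ∈ W by simp [hW, hR'1, h]))
      rw [norm_smul, norm_inv, norm_pow, inv_mul_le_iff₀ (pow_pos (hr.trans h) _)] at this
      refine this.trans (le_of_eq ?_)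
      rw [div_pow]; ring
  have hlim : Tendsto (fun R' : ℝ => B * (‖ζ‖ / R') ^ p) (𝓝[<] R) (𝓝 (B * (‖ζ‖ / R) ^ p)) := by
    have : ContinuousAt (fun R' : ℝ => B * (‖ζ‖ / R') ^ p) R := by
      fun_prop (disch := exact hR.ne')
    exact this.tendsto.mono_left nhdsWithin_le_nhds
  refine ge_of_tendsto hlim ?_
  filter_upwards [Ioo_mem_nhdsLT h2] with R' hR'
  exact key R' hR'.1 hR'.2

end HolomorphicTools

section LocalGeometry

/-- Second order Taylor expansion with Peano remainder. -/
theorem exists_taylor_two {E : Type*} [NormedAddCommGroup E] [NormedSpace ℝ E] {ρ : E → ℝ}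
    (hρ : ContDiff ℝ 2 ρ) (p : E) {ε : ℝ} (hε : 0 < ε) :
    ∃ δ > 0, ∀ z, ‖z - p‖ < δ →
      |ρ z - ρ p - fderiv ℝ ρ p (z - p) - (1 / 2) * fderiv ℝ (fderiv ℝ ρ) p (z - p) (z - p)| ≤
        ε * ‖z - p‖ ^ 2 := by
  set D := fderiv ℝ (fderiv ℝ ρ) p with hDdef
  have hD : HasFDerivAt (fderiv ℝ ρ) D p :=
    ((hρ.fderiv_right (m := 1) (by norm_num)).differentiable (by norm_num) p).hasFDerivAt
  have hsymm : ∀ x y, D x y = D y x := fun x y =>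
    (hρ.contDiffAt.isSymmSndFDerivAt (x := p) (by simp)).eq x y
  obtain ⟨δ, hδ, h⟩ := Metric.eventually_nhds_iff.1 (hD.isLittleO.def hε)
  refine ⟨δ, hδ, fun z hz => ?_⟩
  set R : E → ℝ := fun z => ρ z - fderiv ℝ ρ p (z - p) - (1 / 2) * D (z - p) (z - p) with hR
  have hRd : ∀ x, HasFDerivAt R (fderiv ℝ ρ x - fderiv ℝ ρ p - D (x - p)) x := by
    intro x
    have h1 : HasFDerivAt (fun z : E => z - p) (ContinuousLinearMap.id ℝ E) x :=
      (hasFDerivAt_id x).sub_const p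
    have h2 := ((hρ.differentiable (by norm_num) x).hasFDerivAt.sub
      ((fderiv ℝ ρ p).hasFDerivAt.comp x h1)).sub
      (((D.hasFDerivAt.comp x h1).clm_apply h1).const_mul (1 / 2 : ℝ))
    refine h2.congr_fderiv ?_
    ext v
    have := hsymm v (x - p)
    simp only [map_sub, sub_apply] at this
    simp [this]
    ring
  have hmv := Convex.norm_image_sub_le_of_norm_fderiv_le (𝕜 := ℝ) (f := R) (C := ε * ‖z - p‖)
    (s := closedBall p ‖z - p‖) (x := p) (y := z) (fun x _ => (hRd x).differentiableAt)
    (fun x hx => by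
      rw [(hRd x).fderiv]
      rw [mem_closedBall, dist_eq_norm] at hx
      refine (h (y := x) (by rw [dist_eq_norm]; exact hx.trans_lt hz)).trans ?_
      gcongr) (convex_closedBall _ _) (mem_closedBall_self (norm_nonneg _))
    (by simp [dist_eq_norm])
  have : R z - R p = ρ z - ρ p - fderiv ℝ ρ p (z - p) - (1 / 2) * D (z - p) (z - p) := by
    simp only [hR]; simp; ring
  rw [this, Real.norm_eq_abs] at hmv
  rw [pow_two, ← mul_assoc]
  exact hmv

variable {E : Type*} [NormedAddCommGroup E] [NormedSpace ℂ E] [NormedSpace ℝ E]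
  [IsScalarTower ℝ ℂ E]

/-- The complex quadratic part of a real symmetric bilinear form. -/
theorem exists_holomorphic_quadratic [FiniteDimensional ℂ E] (D : E →L[ℝ] E →L[ℝ] ℝ) :
    ∃ Q : E → ℂ, ContDiff ℂ 1 Q ∧ Q 0 = 0 ∧ HasFDerivAt Q (0 : E →L[ℂ] ℂ) 0 ∧
      ∀ ξ, (Q ξ).re = (1 / 4) * (D ξ ξ - D (I • ξ) (I • ξ)) := by
  have hsplit : ∀ (c : ℂ) (x : E), c • x = c.re • x + c.im • (I • x) := by
    intro c x
    nth_rewrite 1 [← Complex.re_add_im c]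
    rw [add_smul, mul_smul, ← algebraMap_smul ℂ c.re x, ← algebraMap_smul ℂ c.im (I • x)]
    rfl
  have hII : ∀ x : E, I • I • x = -x := fun x => by rw [smul_smul, I_mul_I, neg_one_smul]
  set b : E → E → ℂ := fun ξ η => (1 / 4 : ℂ) * ((D ξ η - D (I • ξ) (I • η) : ℝ) -
    I * (D (I • ξ) η + D ξ (I • η) : ℝ)) with hb
  set B : E →ₗ[ℂ] E →ₗ[ℂ] ℂ := LinearMap.mk₂ ℂ b
    (by intro x y z; simp only [hb, smul_add, map_add, _root_.add_apply]
        push_cast; ring)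
    (by
      intro c x y
      simp only [hb]
      rw [smul_comm I c x, hsplit c x, hsplit c (I • x), hII]
      simp only [map_add, map_smul, map_neg, _root_.add_apply,
        _root_.smul_apply, _root_.neg_apply, smul_eq_mul, smul_neg]
      push_cast
      linear_combination (1 / 4 : ℂ) * (c.im : ℂ) * (D (I • x) y + D x (I • y)) * I_mul_I +
        (1 / 4 : ℂ) * (((D x y : ℂ) - D (I • x) (I • y)) -
          I * ((D (I • x) y : ℂ) + D x (I • y))) * Complex.re_add_im c)
    (by intro x y z; simp only [hb, smul_add, map_add]; push_cast; ring)
    (by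
      intro c x y
      simp only [hb]
      rw [smul_comm I c y, hsplit c y, hsplit c (I • y), hII]
      simp only [map_add, map_smul, map_neg, smul_eq_mul, smul_neg]
      push_cast
      linear_combination (1 / 4 : ℂ) * (c.im : ℂ) * (D (I • x) y + D x (I • y)) * I_mul_I +
        (1 / 4 : ℂ) * (((D x y : ℂ) - D (I • x) (I • y)) -
          I * ((D (I • x) y : ℂ) + D x (I • y))) * Complex.re_add_im c)
    with hBdef
  set Bc : E →L[ℂ] E →L[ℂ] ℂ := LinearMap.toContinuousLinearMap
    ((LinearMap.toContinuousLinearMap (𝕜 := ℂ) (E := E) (F' := ℂ)).toLinearMap ∘ₗ B) with hBc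
  have hBcb : ∀ x y, Bc x y = b x y := fun x y => rfl
  refine ⟨fun ξ => Bc ξ ξ, ?_, by simp, ?_, ?_⟩
  · exact Bc.contDiff.clm_apply contDiff_id
  · have h := (Bc.hasFDerivAt (x := (0 : E))).clm_apply (hasFDerivAt_id (𝕜 := ℂ) (0 : E))
    refine h.congr_fderiv ?_
    ext v
    simp
  · intro ξ
    simp only [hBcb, hb]
    simp

/-- Adding a multiple of a semidefinite form positive on the kernel makes a quadratic
form uniformly positive. -/
theorem exists_penalty {X : Type*} [TopologicalSpace X] {S : Set X} (hS : IsCompact S)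
    {f q : X → ℝ} (hf : Continuous f) (hq : Continuous q) (hq0 : ∀ x, 0 ≤ q x)
    (h : ∀ x ∈ S, q x = 0 → 0 < f x) :
    ∃ K c : ℝ, 0 ≤ K ∧ 0 < c ∧ ∀ x ∈ S, c ≤ f x + K * q x := by
  obtain ⟨k, hk⟩ := hS.elim_directed_cover
    (fun k : ℕ => {x | 1 / ((k : ℝ) + 1) < f x + k * q x})
    (fun k => isOpen_lt continuous_const (by fun_prop)) (by
      intro x hx
      rw [mem_iUnion]
      have h0 : Tendsto (fun k : ℕ => 1 / ((k : ℝ) + 1)) atTop (𝓝 0) :=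
        tendsto_one_div_add_atTop_nhds_zero_nat
      rcases (hq0 x).eq_or_lt with h1 | h1
      · obtain ⟨k, hk⟩ := (h0.eventually_lt_const (h x hx h1.symm)).exists
        exact ⟨k, by simpa [← h1] using hk⟩
      · have h2 : Tendsto (fun k : ℕ => f x + k * q x) atTop atTop :=
          tendsto_atTop_add_const_left _ _
            (tendsto_natCast_atTop_atTop.atTop_mul_const h1)
        obtain ⟨k, hk1, hk2⟩ :=
          ((h0.eventually_lt_const zero_lt_one).and (h2.eventually_ge_atTop 1)).exists
        exact ⟨k, lt_of_lt_of_le hk1 hk2⟩)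
    (directed_of_isDirected_le (by
      intro i j hij x (hx : 1 / ((i : ℝ) + 1) < f x + i * q x)
      change 1 / ((j : ℝ) + 1) < f x + j * q x
      have hij' : (i : ℝ) ≤ j := by exact_mod_cast hij
      refine lt_of_le_of_lt ?_ (lt_of_lt_of_le hx ?_)
      · gcongr
      · have := mul_le_mul_of_nonneg_right hij' (hq0 x)
        linarith))
  exact ⟨k, 1 / ((k : ℝ) + 1), by positivity, by positivity, fun x hx => (hk hx).le⟩

set_option maxHeartbeats 1000000 in
/-- At a strongly pseudoconvex boundary point there is a holomorphic function peaking at that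
point, and an inner tangent ball. -/
theorem exists_peak_function {n : ℕ} {Ω : Set (En n)} {ρ : En n → ℝ}
    (hρ : IsDefiningFunction Ω ⊤ ρ) {p : En n} (hp : p ∈ frontier Ω) (hspc : StronglyPcxAt ρ p) :
    ∃ (L : En n → ℂ) (e : En n) (c δ : ℝ), ContDiff ℂ 1 L ∧ L p = 0 ∧ 0 < c ∧ 0 < δ ∧
      (∀ z ∈ Ω, ‖z - p‖ < δ → (L z).re ≤ -(c * ‖z - p‖ ^ 2)) ∧
      e ≠ 0 ∧ ball (p - e) ‖e‖ ⊆ Ω ∧ fderiv ℂ L p e ≠ 0 := by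
  obtain ⟨hsm, hΩ, hfr, hne⟩ := hρ
  have hρ2 : ContDiff ℝ 2 ρ := hsm.of_le (WithTop.coe_le_coe.2 (le_top : (2 : ℕ∞) ≤ ⊤))
  have hρp : ρ p = 0 := by
    have := hfr ▸ hp
    exact this
  set l := fderiv ℝ ρ p with hl
  set D := fderiv ℝ (fderiv ℝ ρ) p with hD
  have hlne : l ≠ 0 := hne p hp
  obtain ⟨K, c, hK, hc, hKc⟩ := exists_penalty (isCompact_sphere (0 : En n) 1)
    (f := fun ξ => (1 / 4) * (D ξ ξ + D (I • ξ) (I • ξ)))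
    (q := fun ξ => (1 / 2) * (l ξ ^ 2 + l (I • ξ) ^ 2))
    (by fun_prop) (by fun_prop) (fun x => by positivity) (by
      intro x hx h0
      have hx0 : x ≠ 0 := by
        rintro rfl
        simp at hx
      have h := hspc x hx0 ⟨
        pow_eq_zero_iff two_ne_zero |>.1 (by linarith [sq_nonneg (l x), sq_nonneg (l (I • x))]),
        pow_eq_zero_iff two_ne_zero |>.1 (by linarith [sq_nonneg (l x), sq_nonneg (l (I • x))])⟩
      simpa [LeviForm, iteratedFDeriv_two_apply] using h)
  have hLevi : ∀ ξ : En n, c * ‖ξ‖ ^ 2 ≤ (1 / 4) * (D ξ ξ + D (I • ξ) (I • ξ)) +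
      K * ((1 / 2) * (l ξ ^ 2 + l (I • ξ) ^ 2)) := by
    intro ξ
    rcases eq_or_ne ξ 0 with rfl | hξ
    · simp
    · have hn : 0 < ‖ξ‖ := norm_pos_iff.2 hξ
      have h := hKc (‖ξ‖⁻¹ • ξ) (by simp [norm_smul, hn.ne'])
      rw [smul_comm I ‖ξ‖⁻¹ ξ] at h
      simp only [map_smul, _root_.smul_apply, smul_eq_mul] at h
      have h2 := mul_le_mul_of_nonneg_left h (sq_nonneg ‖ξ‖)
      calc c * ‖ξ‖ ^ 2 = ‖ξ‖ ^ 2 * c := mul_comm _ _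
        _ ≤ _ := h2
        _ = _ := by field_simp
  set M : En n →L[ℝ] En n →L[ℝ] ℝ := D + (2 * K) • l.smulRight l with hM
  have hMa : ∀ x y, M x y = D x y + 2 * K * (l x * l y) := by
    intro x y; simp [hM]
  obtain ⟨Q, hQ1, hQ0, hQd, hQre⟩ := exists_holomorphic_quadratic M
  set lC : StrongDual ℂ (En n) := StrongDual.extendRCLike l with hlC
  have hlre : ∀ x, (lC x).re = l x := by
    intro x
    simp [hlC, StrongDual.extendRCLike_apply]
  set v := (InnerProductSpace.toDual ℂ (En n)).symm lC with hv
  have hvin : ∀ x, lC x = inner ℂ v x := fun x => by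
    rw [hv, InnerProductSpace.toDual_symm_apply]
  have hv0 : v ≠ 0 := by
    intro h0
    apply hlne
    ext x
    rw [← hlre, hvin, h0]
    simp
  have hvpos : 0 < ‖v‖ := norm_pos_iff.2 hv0
  obtain ⟨δ₀, hδ₀, hT⟩ := exists_taylor_two hρ2 p (ε := c / 4) (by positivity)
  set A : ℝ := 1 + c / 4 + (1 / 2) * ‖D‖ with hA
  have hA0 : 0 < A := by positivity
  have hDb : ∀ x, |D x x| ≤ ‖D‖ * ‖x‖ ^ 2 := by
    intro x
    have := D.le_opNorm₂ x x
    rw [Real.norm_eq_abs] at this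
    linarith [this, pow_two ‖x‖, mul_assoc ‖D‖ ‖x‖ ‖x‖]
  have hlin : ∀ z, ‖z - p‖ < δ₀ → |ρ z - l (z - p)| ≤ A * ‖z - p‖ ^ 2 := by
    intro z hz
    have h1 := hT z hz
    rw [hρp] at h1
    have h2 := hDb (z - p)
    rw [abs_le] at h1 h2 ⊢
    have h3 : A * ‖z - p‖ ^ 2 =
        ‖z - p‖ ^ 2 + c / 4 * ‖z - p‖ ^ 2 + 1 / 2 * (‖D‖ * ‖z - p‖ ^ 2) := by rw [hA]; ring
    have h4 := sq_nonneg ‖z - p‖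
    constructor <;> linarith
  have hfd : HasFDerivAt (fun z => lC (z - p) + Q (z - p)) lC p := by
    have h1 : HasFDerivAt (fun z : En n => z - p) (ContinuousLinearMap.id ℂ (En n)) p :=
      (hasFDerivAt_id p).sub_const p
    have h2 : HasFDerivAt Q (0 : En n →L[ℂ] ℂ) (p - p) := by simpa using hQd
    have := (lC.hasFDerivAt.comp p h1).add (HasFDerivAt.comp (g := Q) (f := fun z => z - p) p h2 h1)
    refine this.congr_fderiv ?_
    ext x; simp
  set t : ℝ := min (1 / (2 * A)) (δ₀ / (2 * ‖v‖)) with ht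
  have ht0 : 0 < t := lt_min (by positivity) (by positivity)
  have htA : t * (2 * A) ≤ 1 := by
    rw [← le_div_iff₀ (by positivity)]; exact min_le_left _ _
  have htδ : t * (2 * ‖v‖) ≤ δ₀ := by
    rw [← le_div_iff₀ (by positivity)]; exact min_le_right _ _
  have hne' : ‖(t : ℂ) • v‖ = t * ‖v‖ := by
    rw [norm_smul, Complex.norm_real, Real.norm_of_nonneg ht0.le]
  set m : ℝ := ‖l‖ + 1 with hm
  have hm0 : 0 < m := by positivity
  have hρlip : ∀ z, ‖z - p‖ < min δ₀ (1 / A) → |ρ z| ≤ m * ‖z - p‖ := by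
    intro z hz
    have h1 := hlin z (hz.trans_le (min_le_left _ _))
    have h2 := l.le_opNorm (z - p)
    rw [Real.norm_eq_abs] at h2
    have h3 : A * ‖z - p‖ ≤ 1 := by
      have := hz.le.trans (min_le_right _ _)
      rw [le_div_iff₀ hA0] at this
      linarith
    have h4 : A * ‖z - p‖ ^ 2 ≤ ‖z - p‖ := by
      calc A * ‖z - p‖ ^ 2 = A * ‖z - p‖ * ‖z - p‖ := by ring
        _ ≤ 1 * ‖z - p‖ := by gcongr
        _ = ‖z - p‖ := one_mul _
    rw [hm]
    rw [abs_le] at h1 h2 ⊢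
    constructor <;> linarith
  set δ : ℝ := min (min δ₀ (1 / A)) (min (1 / ((K + 1) * m)) (c / (8 * (K + 1) * A * m))) with hδ
  refine ⟨fun z => lC (z - p) + Q (z - p), (t : ℂ) • v, c / 4, δ, ?_, by simp [hQ0],
    by positivity, by positivity, ?_, ?_, ?_, ?_⟩
  · have hs : ContDiff ℂ 1 fun z : En n => z - p := contDiff_id.sub contDiff_const
    exact (lC.contDiff.comp hs).add (hQ1.comp hs)
  · intro z hz hzδ
    have hz1 : ‖z - p‖ < min δ₀ (1 / A) := hzδ.trans_le (min_le_left _ _)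
    have hz2 : ‖z - p‖ * ((K + 1) * m) < 1 := by
      rw [← lt_div_iff₀ (by positivity)]
      exact hzδ.trans_le ((min_le_right _ _).trans (min_le_left _ _))
    have hz3 : ‖z - p‖ * (8 * (K + 1) * A * m) < c := by
      rw [← lt_div_iff₀ (by positivity)]
      exact hzδ.trans_le ((min_le_right _ _).trans (min_le_right _ _))
    have hρz : ρ z < 0 := by rw [hΩ] at hz; exact hz
    set x := z - p with hx
    have hnx := norm_nonneg x
    have hb := hρlip z hz1
    have h1 := hlin z (hz1.trans_le (min_le_left _ _))
    have h2 := hT z (hz1.trans_le (min_le_left _ _))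
    have hlb : |l x| ≤ m * ‖x‖ := by
      have := l.le_opNorm x
      rw [Real.norm_eq_abs] at this
      rw [hm, add_mul, one_mul]
      linarith
    have hneg : ρ z + K * ρ z ^ 2 < 0 := by
      have : 0 < 1 + K * ρ z := by
        have h3 := (abs_le.1 hb).1
        have h4 := mul_le_mul_of_nonneg_left h3 hK
        have h5 : 0 ≤ m * ‖x‖ := by positivity
        linarith
      linarith [mul_neg_of_neg_of_pos hρz this]
    have hsq : K * l x ^ 2 ≤ K * ρ z ^ 2 + c / 4 * ‖x‖ ^ 2 := by
      have h5 : |l x ^ 2 - ρ z ^ 2| ≤ (A * ‖x‖ ^ 2) * (2 * (m * ‖x‖)) := by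
        have : l x ^ 2 - ρ z ^ 2 = -((ρ z - l x) * (ρ z + l x)) := by ring
        rw [this, abs_neg, abs_mul]
        refine mul_le_mul h1 ((abs_add_le _ _).trans (by linarith)) (abs_nonneg _) (by positivity)
      have h6 : K * (l x ^ 2 - ρ z ^ 2) ≤ K * ((A * ‖x‖ ^ 2) * (2 * (m * ‖x‖))) :=
        mul_le_mul_of_nonneg_left ((le_abs_self _).trans h5) hK
      have h7 : K * ((A * ‖x‖ ^ 2) * (2 * (m * ‖x‖))) ≤
          (K + 1) * ((A * ‖x‖ ^ 2) * (2 * (m * ‖x‖))) := by gcongr; linarith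
      have h8 : (K + 1) * ((A * ‖x‖ ^ 2) * (2 * (m * ‖x‖))) ≤ c / 4 * ‖x‖ ^ 2 := by
        calc _ = (‖x‖ * (8 * (K + 1) * A * m)) * (‖x‖ ^ 2 / 4) := by ring
          _ ≤ c * (‖x‖ ^ 2 / 4) := by gcongr
          _ = _ := by ring
      linarith
    have hLx := hLevi x
    have hre : (lC x + Q x).re = l x + (1 / 4) * (M x x - M (I • x) (I • x)) := by
      rw [Complex.add_re, hlre, hQre]
    change (lC x + Q x).re ≤ _
    rw [hre, hMa, hMa]
    rw [hρp] at h2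
    have h7 : -(c / 4 * ‖x‖ ^ 2) ≤ ρ z - 0 - l x - 1 / 2 * D x x := (abs_le.1 h2).1
    have h8 : 0 ≤ c * ‖x‖ ^ 2 := by positivity
    linarith
  · simp [hv0, ht0.ne']
  · intro z hz
    rw [mem_ball, dist_eq_norm, hne'] at hz
    rw [hΩ]
    change ρ z < 0
    have hz' : ‖(z - p) + (t : ℂ) • v‖ < t * ‖v‖ := by
      rwa [show (z - p) + (t : ℂ) • v = z - (p - (t : ℂ) • v) by abel]
    set x := z - p with hx
    have hsq : ‖x + (t : ℂ) • v‖ ^ 2 < (t * ‖v‖) ^ 2 := by gcongr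
    rw [norm_add_sq (𝕜 := ℂ), hne', inner_smul_right] at hsq
    have hin : RCLike.re ((t : ℂ) * inner ℂ x v) = t * l x := by
      rw [← hlre, hvin]
      have : (inner ℂ v x).re = (inner ℂ x v).re := by
        exact inner_re_symm (𝕜 := ℂ) v x
      rw [this]; simp
    rw [hin] at hsq
    have hxlt : ‖x‖ < δ₀ := by
      have : ‖x‖ ≤ ‖x + (t : ℂ) • v‖ + ‖(t : ℂ) • v‖ := by
        simpa using norm_sub_le (x + (t : ℂ) • v) ((t : ℂ) • v)
      rw [hne'] at this
      linarith
    have h1 := (abs_le.1 (hlin z hxlt)).2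
    have h2 : t * ρ z ≤ t * l x + t * (A * ‖x‖ ^ 2) := by
      rw [← mul_add]; exact mul_le_mul_of_nonneg_left (by linarith) ht0.le
    have h3 : t * (A * ‖x‖ ^ 2) ≤ (1 / 2) * ‖x‖ ^ 2 := by
      linarith [mul_le_mul_of_nonneg_right htA (sq_nonneg ‖x‖)]
    have h4 : t * ρ z < 0 := by linarith
    exact (pos_iff_neg_of_mul_neg h4).1 ht0
  · rw [hfd.fderiv, map_smul, hvin, inner_self_eq_norm_sq_to_K]
    simp [hv0, ht0.ne']

end LocalGeometry

section Harnack

variable {E : Type*} [NormedAddCommGroup E]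

/-- The size function attached to a peak function. -/
def peakSize (L : E → ℂ) (p w : E) : ℝ := ‖L w‖ + ‖w - p‖ ^ 2

theorem peakSize_nonneg (L : E → ℂ) (p w : E) : 0 ≤ peakSize L p w := by
  unfold peakSize; positivity

variable [NormedSpace ℂ E]

/-- `L` is a holomorphic function peaking at `p` relative to the set `X`. -/
structure IsPeakFunction (L : E → ℂ) (X : Set E) (p : E) (c δ : ℝ) : Prop where
  contDiff : ContDiff ℂ 1 L
  map_point : L p = 0
  c_pos : 0 < c
  δ_pos : 0 < δ
  re_le : ∀ z ∈ X, ‖z - p‖ < δ → (L z).re ≤ -(c * ‖z - p‖ ^ 2)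

theorem IsPeakFunction.closure {L : E → ℂ} {X : Set E} {p : E} {c δ : ℝ}
    (h : IsPeakFunction L X p c δ) : IsPeakFunction L (closure X) p c δ := by
  refine ⟨h.contDiff, h.map_point, h.c_pos, h.δ_pos, fun z hz hzδ => ?_⟩
  have hL := h.contDiff.continuous
  have hcl : IsClosed {z | (L z).re ≤ -(c * ‖z - p‖ ^ 2)} := isClosed_le (by fun_prop) (by fun_prop)
  have hz2 : z ∈ _root_.closure (ball p δ ∩ X) :=
    isOpen_ball.inter_closure ⟨by simpa [dist_eq_norm] using hzδ, hz⟩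
  exact closure_minimal (fun w hw => h.re_le w hw.2 (by simpa [dist_eq_norm] using hw.1)) hcl hz2

/-- Holomorphic discs centred near a peak point stay near it on compact subsets of the disc. -/
theorem IsPeakFunction.exists_norm_sub_lt [FiniteDimensional ℂ E] {L : E → ℂ} {X : Set E} {p : E}
    {c δ : ℝ} (h : IsPeakFunction L X p c δ) (hX : IsCompact X) {ε : ℝ} (hε : 0 < ε) :
    ∃ η > 0, ∀ G : ℂ → E, DifferentiableOn ℂ G (ball 0 1) → MapsTo G (ball 0 1) X →
      ‖G 0 - p‖ < η → ∀ ζ : ℂ, ‖ζ‖ ≤ 3 / 4 → ‖G ζ - p‖ < ε := by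
  by_contra! hcon
  choose G hGd hGX hG0 ζ hζ hζε using fun k : ℕ => hcon (1 / ((k : ℝ) + 1)) (by positivity)
  obtain ⟨B, hB⟩ := hX.isBounded.exists_norm_le
  set U : Ultrafilter ℕ := hyperfilter ℕ with hU
  have hlim : ∀ w ∈ ball (0 : ℂ) 1, ∃ x ∈ X, Tendsto (fun k => G k w) U (𝓝 x) := by
    intro w hw
    obtain ⟨x, hx, hx'⟩ := hX.ultrafilter_le_nhds (U.map fun k => G k w)
      (le_principal_iff.2 (Ultrafilter.mem_map.2 (Filter.univ_mem' fun k => hGX k hw)))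
    exact ⟨x, hx, hx'⟩
  choose! g hgX hg using hlim
  obtain ⟨ξ, hξ, hξlim⟩ := (isCompact_closedBall (0 : ℂ) (3 / 4)).ultrafilter_le_nhds (U.map ζ)
    (le_principal_iff.2 (Ultrafilter.mem_map.2 (Filter.univ_mem' fun k => by
      simpa using hζ k)))
  have hξ' : Tendsto ζ U (𝓝 ξ) := hξlim
  have hUat : (U : Filter ℕ) ≤ atTop := Nat.hyperfilter_le_atTop
  have hgd : ∀ w ∈ ball (0 : ℂ) 1, DifferentiableAt ℂ g w := fun w hw => by
    obtain ⟨D, hD, -⟩ := exists_hasFDerivAt_of_ultrafilter_tendsto U isOpen_ball hGd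
      (fun k x hx => hB _ (hGX k hx)) hg hw
    exact hD.differentiableAt
  have h01 : (0 : ℂ) ∈ ball (0 : ℂ) 1 := by simp
  have hg0 : g 0 = p := by
    refine tendsto_nhds_unique (hg 0 h01) ?_
    rw [tendsto_iff_norm_sub_tendsto_zero]
    exact squeeze_zero (fun _ => norm_nonneg _) (fun k => (hG0 k).le)
      (tendsto_one_div_add_atTop_nhds_zero_nat.mono_left hUat)
  have hLd : Differentiable ℂ L := h.contDiff.differentiable (by norm_num)
  have hnear : ∀ᶠ w in 𝓝 (0 : ℂ), w ∈ ball (0 : ℂ) 1 ∧ ‖g w - p‖ < δ := by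
    refine Filter.Eventually.and (isOpen_ball.mem_nhds h01) ?_
    have hc : ContinuousAt (fun w => ‖g w - p‖) 0 :=
      ((hgd 0 h01).continuousAt.sub continuousAt_const).norm
    exact hc.eventually_lt continuousAt_const (by simpa [hg0] using h.δ_pos)
  have hmax : IsLocalMax (norm ∘ fun w => Complex.exp (L (g w))) 0 := by
    filter_upwards [hnear] with w hw
    simp only [comp_apply, Complex.norm_exp, hg0, h.map_point, Complex.zero_re]
    refine Real.exp_le_exp.2 ((h.re_le _ (hgX w hw.1) hw.2).trans ?_)
    have := mul_nonneg h.c_pos.le (sq_nonneg ‖g w - p‖)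
    linarith
  have hev : ∀ᶠ w in 𝓝 (0 : ℂ), g w - p = 0 := by
    have := Complex.norm_eventually_eq_of_isLocalMax (f := fun w => Complex.exp (L (g w)))
      (by
        filter_upwards [hnear] with w hw
        exact ((hLd _).comp w (hgd w hw.1)).cexp) hmax
    filter_upwards [this, hnear] with w hw hw2
    simp only [Complex.norm_exp, hg0, h.map_point, Complex.zero_re] at hw
    have h1 := Real.exp_injective hw
    have h2 := h.re_le _ (hgX w hw2.1) hw2.2
    rw [h1] at h2
    have h3 : ‖g w - p‖ ^ 2 ≤ 0 := by
      by_contra! h4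
      linarith [mul_pos h.c_pos h4]
    exact norm_le_zero_iff.1 (by
      by_contra! h4
      exact absurd h3 (not_le.2 (by positivity)))
  have hall := eqOn_zero_of_eventuallyEq_zero (f := fun w => g w - p) (B := B + ‖p‖) isOpen_ball
    (convex_ball (0 : ℂ) 1).isPreconnected
    (fun w hw => ((hgd w hw).sub_const p).differentiableWithinAt)
    (fun w hw => (norm_sub_le _ _).trans (by gcongr; exact hB _ (hgX w hw))) h01 hev
  have hξ34 : ‖ξ‖ ≤ 3 / 4 := by simpa using hξ
  have hξ1 : ξ ∈ ball (0 : ℂ) 1 := by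
    simp only [mem_ball, dist_zero_right]; linarith
  have hGξ : Tendsto (fun k => ‖G k ξ - p‖) U (𝓝 0) := by
    have := ((hg ξ hξ1).sub_const p).norm
    rwa [hall ξ hξ1, norm_zero] at this
  have hsub : ball ξ (1 / 4) ⊆ ball (0 : ℂ) 1 := ball_subset_ball' (by
    rw [dist_zero_right]; linarith)
  have hdiff : Tendsto (fun k => ‖G k (ζ k) - G k ξ‖) U (𝓝 0) := by
    have h1 : Tendsto (fun k => 2 * B / (1 / 4) * ‖ζ k - ξ‖) U (𝓝 (2 * B / (1 / 4) * 0)) := by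
      refine Tendsto.const_mul _ ?_
      exact tendsto_iff_norm_sub_tendsto_zero.1 hξ'
    rw [mul_zero] at h1
    refine squeeze_zero' (Eventually.of_forall fun _ => norm_nonneg _) ?_ h1
    filter_upwards [hξ'.eventually (ball_mem_nhds ξ (by norm_num : (0 : ℝ) < 1 / 4))] with k hk
    exact norm_sub_center_le ((hGd k).mono hsub) (fun x hx => hB _ (hGX k (hsub hx))) hk
  have hsum := hdiff.add hGξ
  rw [add_zero] at hsum
  obtain ⟨k, hk⟩ := (hsum.eventually_lt_const hε).exists
  have := norm_sub_le_norm_sub_add_norm_sub (G k (ζ k)) (G k ξ) p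
  linarith [hζε k]

/-- Harnack inequality for the size function on the half disc. -/
theorem IsPeakFunction.exists_harnack_half [FiniteDimensional ℂ E] {L : E → ℂ} {X : Set E} {p : E}
    {c δ : ℝ} (h : IsPeakFunction L X p c δ) (hX : IsCompact X) :
    ∃ C : ℝ, 1 ≤ C ∧ ∀ G : ℂ → E, DifferentiableOn ℂ G (ball 0 1) → MapsTo G (ball 0 1) X →
      ∀ ζ : ℂ, ‖ζ‖ ≤ 1 / 2 → peakSize L p (G ζ) ≤ C * peakSize L p (G 0) := by
  obtain ⟨η, hη, hnear⟩ := h.exists_norm_sub_lt hX h.δ_pos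
  have hcont : Continuous (peakSize L p) := by
    have := h.contDiff.continuous
    unfold peakSize
    fun_prop
  obtain ⟨M, hM⟩ := hX.exists_bound_of_continuousOn hcont.continuousOn
  have hc := h.c_pos
  refine ⟨max (max (5 * (1 + 1 / c)) (M / η ^ 2)) 1, le_max_right _ _, fun G hGd hGX ζ hζ => ?_⟩
  have h0 := peakSize_nonneg L p (G 0)
  by_cases hcase : ‖G 0 - p‖ < η
  · have hGn := hnear G hGd hGX hcase
    have hsub : ball (0 : ℂ) (3 / 4) ⊆ ball 0 1 := ball_subset_ball (by norm_num)
    have hLd : Differentiable ℂ L := h.contDiff.differentiable (by norm_num)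
    have hd : DifferentiableOn ℂ (fun w => L (G w)) (ball 0 (3 / 4)) :=
      hLd.comp_differentiableOn (hGd.mono hsub)
    have hre : ∀ w ∈ ball (0 : ℂ) (3 / 4), (L (G w)).re ≤ -(c * ‖G w - p‖ ^ 2) := fun w hw =>
      h.re_le _ (hGX (hsub hw)) (hGn w (by simpa using (mem_ball.1 hw).le))
    have hζ' : ζ ∈ ball (0 : ℂ) (3 / 4) := by
      rw [mem_ball, dist_zero_right]; linarith
    have hBC : ∀ m : ℝ, 0 < m → ‖L (G ζ)‖ ≤ 4 * m + 5 * ‖L (G 0)‖ := by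
      intro m hm
      have := Complex.borelCaratheodory hm hd (fun w hw => by
        have h1 := hre w hw
        have h2 := mul_nonneg hc.le (sq_nonneg ‖G w - p‖)
        change (L (G w)).re ≤ m
        linarith) (by norm_num) hζ'
      refine this.trans (add_le_add ?_ ?_)
      · rw [div_le_iff₀ (by linarith)]
        have : m * ‖ζ‖ ≤ m * (1 / 2) := by gcongr
        linarith
      · rw [div_le_iff₀ (by linarith)]
        have : ‖L (G 0)‖ * ‖ζ‖ ≤ ‖L (G 0)‖ * (1 / 2) := by gcongr
        linarith
    have hB5 : ‖L (G ζ)‖ ≤ 5 * ‖L (G 0)‖ := by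
      refine le_of_forall_pos_le_add fun ε hε => ?_
      have := hBC (ε / 4) (by positivity)
      linarith
    have hsq : ‖G ζ - p‖ ^ 2 ≤ (1 / c) * ‖L (G ζ)‖ := by
      have h1 := hre ζ hζ'
      have h2 := (abs_le.1 (Complex.abs_re_le_norm (L (G ζ)))).1
      rw [one_div, inv_mul_eq_div, le_div_iff₀ hc]
      linarith
    have h1 : peakSize L p (G ζ) ≤ 5 * (1 + 1 / c) * peakSize L p (G 0) := by
      calc peakSize L p (G ζ) ≤ (1 + 1 / c) * ‖L (G ζ)‖ := by unfold peakSize; linarith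
        _ ≤ (1 + 1 / c) * (5 * ‖L (G 0)‖) := by gcongr
        _ = 5 * (1 + 1 / c) * ‖L (G 0)‖ := by ring
        _ ≤ 5 * (1 + 1 / c) * peakSize L p (G 0) := by
          gcongr; unfold peakSize; linarith [sq_nonneg ‖G 0 - p‖]
    refine h1.trans ?_
    gcongr
    exact (le_max_left _ _).trans (le_max_left _ _)
  · push Not at hcase
    have h1 : η ^ 2 ≤ peakSize L p (G 0) := by
      have : η ^ 2 ≤ ‖G 0 - p‖ ^ 2 := by gcongr
      unfold peakSize
      linarith [norm_nonneg (L (G 0))]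
    have h2 : peakSize L p (G ζ) ≤ M := (le_abs_self _).trans (hM _ (hGX (by
      rw [mem_ball, dist_zero_right]; linarith)))
    have hM0 : 0 ≤ M := (peakSize_nonneg _ _ _).trans h2
    calc peakSize L p (G ζ) ≤ M := h2
      _ = M / η ^ 2 * η ^ 2 := by field_simp
      _ ≤ M / η ^ 2 * peakSize L p (G 0) := by gcongr
      _ ≤ _ := by
        gcongr
        exact (le_max_right _ _).trans (le_max_left _ _)

theorem norm_one_add_sq_sub (a : ℝ) (w : ℂ) :
    ‖1 + a * w‖ ^ 2 - ‖w + a‖ ^ 2 = (1 - a ^ 2) * (1 - ‖w‖ ^ 2) := by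
  simp only [Complex.sq_norm, Complex.normSq_apply]
  simp
  ring

theorem norm_moebius_lt_one {a : ℝ} (ha : |a| < 1) {w : ℂ} (hw : ‖w‖ < 1) :
    1 + a * w ≠ 0 ∧ ‖(w + a) / (1 + a * w)‖ < 1 := by
  have h1 := norm_one_add_sq_sub a w
  have h2 : 0 < (1 - a ^ 2) * (1 - ‖w‖ ^ 2) := by
    refine mul_pos ?_ ?_
    · linarith [(sq_lt_one_iff_abs_lt_one a).2 ha]
    · linarith [pow_lt_one₀ (norm_nonneg w) hw two_ne_zero]
  have h3 : ‖w + a‖ < ‖1 + a * w‖ := by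
    refine lt_of_pow_lt_pow_left₀ 2 (norm_nonneg _) (by linarith)
  have h4 : 0 < ‖1 + a * w‖ := (norm_nonneg _).trans_lt h3
  exact ⟨norm_pos_iff.1 h4, by rw [norm_div, div_lt_one h4]; exact h3⟩

/-- Harnack inequality for the size function on the whole disc, with centre `a`. -/
theorem IsPeakFunction.exists_harnack [FiniteDimensional ℂ E] {L : E → ℂ} {X : Set E} {p : E}
    {c δ : ℝ} (h : IsPeakFunction L X p c δ) (hX : IsCompact X) :
    ∃ A : ℕ, 1 ≤ A ∧ ∀ G : ℂ → E, DifferentiableOn ℂ G (ball 0 1) → MapsTo G (ball 0 1) X →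
      ∀ a : ℝ, |a| < 1 → ∀ ζ : ℂ, ‖ζ‖ < 1 → peakSize L p (G ζ) ≤
        (4 * ‖1 - a * ζ‖ ^ 2 / ((1 - a ^ 2) * (1 - ‖ζ‖ ^ 2))) ^ A * peakSize L p (G a) := by
  obtain ⟨C, hC1, hC⟩ := h.exists_harnack_half hX
  obtain ⟨A, hA⟩ := pow_unbounded_of_one_lt C (one_lt_two : (1 : ℝ) < 2)
  have step : ∀ G : ℂ → E, DifferentiableOn ℂ G (ball 0 1) → MapsTo G (ball 0 1) X →
      ∀ (j : ℕ) (ζ : ℂ), ‖ζ‖ ≤ 1 - (1 / 2) ^ j →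
        peakSize L p (G ζ) ≤ C ^ j * peakSize L p (G 0) := by
    intro G hGd hGX j
    induction j with
    | zero =>
      intro ζ hζ
      have : ζ = 0 := norm_le_zero_iff.1 (by simpa using hζ)
      simp [this]
    | succ j ih =>
      intro ζ hζ
      set q : ℝ := (1 / 2) ^ j with hq
      have hq0 : 0 < q := by positivity
      have hq1 : q ≤ 1 := pow_le_one₀ (by norm_num) (by norm_num)
      rw [pow_succ, ← hq] at hζ
      have hd0 : 0 < 1 - q * (1 / 2) := by linarith
      set s : ℝ := (1 - q) / (1 - q * (1 / 2)) with hs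
      have hs0 : 0 ≤ s := div_nonneg (by linarith) hd0.le
      have h1s : 1 - s = q / 2 / (1 - q * (1 / 2)) := by
        rw [hs, eq_div_iff hd0.ne', sub_mul, div_mul_cancel₀ _ hd0.ne']; ring
      have hsζ : ‖(s : ℂ) * ζ‖ ≤ 1 - q := by
        rw [norm_mul, Complex.norm_real, Real.norm_of_nonneg hs0]
        calc s * ‖ζ‖ ≤ s * (1 - q * (1 / 2)) := by gcongr
          _ = 1 - q := div_mul_cancel₀ _ hd0.ne'
      have hdζ : ‖ζ - s * ζ‖ ≤ q / 2 := by
        have : ζ - s * ζ = ((1 - s : ℝ) : ℂ) * ζ := by push_cast; ring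
        rw [this, norm_mul, Complex.norm_real, h1s, Real.norm_of_nonneg (by positivity)]
        calc q / 2 / (1 - q * (1 / 2)) * ‖ζ‖ ≤ q / 2 / (1 - q * (1 / 2)) * (1 - q * (1 / 2)) := by
              gcongr
          _ = q / 2 := div_mul_cancel₀ _ hd0.ne'
      have hmaps : MapsTo (fun w : ℂ => (s : ℂ) * ζ + q * w) (ball 0 1) (ball 0 1) := by
        intro w hw
        rw [mem_ball, dist_zero_right] at hw ⊢
        calc ‖(s : ℂ) * ζ + q * w‖ ≤ ‖(s : ℂ) * ζ‖ + ‖(q : ℂ) * w‖ := norm_add_le _ _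
          _ = ‖(s : ℂ) * ζ‖ + q * ‖w‖ := by
            rw [norm_mul (q : ℂ), Complex.norm_real, Real.norm_of_nonneg hq0.le]
          _ < (1 - q) + q * 1 := add_lt_add_of_le_of_lt hsζ (by gcongr)
          _ = 1 := by ring
      have hthis := hC (fun w => G ((s : ℂ) * ζ + q * w))
        (hGd.comp (by fun_prop) hmaps) (hGX.comp hmaps) ((ζ - s * ζ) / q) (by
          rw [norm_div, Complex.norm_real, Real.norm_of_nonneg hq0.le, div_le_iff₀ hq0]
          linarith)
      have hqne : (q : ℂ) ≠ 0 := by exact_mod_cast hq0.ne'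
      simp only [mul_div_cancel₀ _ hqne, mul_zero, add_zero, add_sub_cancel] at hthis
      calc _ ≤ C * peakSize L p (G (s * ζ)) := hthis
        _ ≤ C * (C ^ j * peakSize L p (G 0)) := by gcongr; exact ih _ hsζ
        _ = _ := by ring
  have center : ∀ G : ℂ → E, DifferentiableOn ℂ G (ball 0 1) → MapsTo G (ball 0 1) X →
      ∀ ζ : ℂ, ‖ζ‖ < 1 → peakSize L p (G ζ) ≤ (2 / (1 - ‖ζ‖)) ^ A * peakSize L p (G 0) := by
    intro G hGd hGX ζ hζ
    have h1 : 0 < 1 - ‖ζ‖ := by linarith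
    obtain ⟨j, hj1, hj2⟩ := exists_nat_pow_near (x := 1 / (1 - ‖ζ‖)) (y := 2)
      (by rw [le_div_iff₀ h1]; linarith [norm_nonneg ζ]) one_lt_two
    have h2 := step G hGd hGX (j + 1) ζ (by
      rw [div_lt_iff₀ h1] at hj2
      have : (1 / 2 : ℝ) ^ (j + 1) < 1 - ‖ζ‖ := by
        rw [one_div, inv_pow, inv_lt_iff_one_lt_mul₀ (by positivity)]
        linarith
      linarith)
    refine h2.trans ?_
    gcongr
    · exact peakSize_nonneg _ _ _
    · calc C ^ (j + 1) ≤ (2 ^ A) ^ (j + 1) := by gcongr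
        _ = (2 ^ j * 2) ^ A := by rw [← pow_mul, ← pow_succ, ← pow_mul, mul_comm]
        _ ≤ (2 / (1 - ‖ζ‖)) ^ A := by
          gcongr
          rw [div_eq_mul_one_div, mul_comm]
          gcongr
  have hA1 : 1 ≤ A := by
    by_contra! hA0
    interval_cases A
    linarith [hA]
  refine ⟨A, hA1, fun G hGd hGX a ha ζ hζ => ?_⟩
  have hmaps : MapsTo (fun w : ℂ => (w + a) / (1 + a * w)) (ball 0 1) (ball 0 1) := by
    intro w hw
    simpa using (norm_moebius_lt_one ha (by simpa using hw)).2
  have hdm : DifferentiableOn ℂ (fun w : ℂ => (w + a) / (1 + a * w)) (ball 0 1) := by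
    intro w hw
    have hne := (norm_moebius_lt_one ha (w := w) (by simpa using hw)).1
    have : DifferentiableAt ℂ (fun w : ℂ => (w + a) / (1 + a * w)) w := by
      fun_prop (disch := exact hne)
    exact this.differentiableWithinAt
  have hna : |-a| < 1 := by rwa [abs_neg]
  obtain ⟨hne, hlt⟩ := norm_moebius_lt_one hna hζ
  set w : ℂ := (ζ + (-a : ℝ)) / (1 + (-a : ℝ) * ζ) with hw
  have ha2 : 0 < 1 - a ^ 2 := by linarith [(sq_lt_one_iff_abs_lt_one a).2 ha]
  have hback : (w + a) / (1 + a * w) = ζ := by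
    have hne' : 1 - a * ζ ≠ 0 := by
      convert hne using 1; push_cast; ring
    have ha2c : (1 : ℂ) - a ^ 2 ≠ 0 := by exact_mod_cast ha2.ne'
    have hwd : w = (ζ - a) / (1 - a * ζ) := by
      rw [hw]; push_cast; congr 1; ring
    generalize hd : 1 - a * ζ = d at hne' hwd
    have h1 : w + a = ζ * (1 - a ^ 2) / d := by
      rw [hwd, eq_div_iff hne', add_mul, div_mul_cancel₀ _ hne', ← hd]; ring
    have h2 : 1 + a * w = (1 - a ^ 2) / d := by
      rw [hwd, eq_div_iff hne', add_mul, mul_assoc, div_mul_cancel₀ _ hne', ← hd]; ring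
    rw [h1, h2, div_div_div_cancel_right₀ hne', mul_div_cancel_right₀ _ ha2c]
  have hmain := center (fun w => G ((w + a) / (1 + a * w))) (hGd.comp hdm hmaps) (hGX.comp hmaps)
    w hlt
  simp only [hback, zero_add, mul_zero, add_zero, div_one] at hmain
  refine hmain.trans ?_
  have hζ2 : 0 < 1 - ‖ζ‖ ^ 2 := by linarith [pow_lt_one₀ (norm_nonneg ζ) hζ two_ne_zero]
  have hpos : 0 < ‖1 + (-a : ℝ) * ζ‖ := norm_pos_iff.2 hne
  have hw1 : 1 - ‖w‖ ^ 2 = (1 - a ^ 2) * (1 - ‖ζ‖ ^ 2) / ‖1 + (-a : ℝ) * ζ‖ ^ 2 := by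
    have := norm_one_add_sq_sub (-a) ζ
    rw [hw, norm_div, div_pow, ← neg_sq a, ← this, sub_div, div_self (pow_pos hpos 2).ne']
  have hnorm : ‖1 - a * ζ‖ = ‖1 + (-a : ℝ) * ζ‖ := by congr 1; push_cast; ring
  have h1 : (4 * ‖1 - a * ζ‖ ^ 2 / ((1 - a ^ 2) * (1 - ‖ζ‖ ^ 2))) = 4 / (1 - ‖w‖ ^ 2) := by
    rw [hw1, hnorm, div_div_eq_mul_div]
  rw [h1]
  have h2 : 0 < 1 - ‖w‖ := by linarith
  refine mul_le_mul_of_nonneg_right (pow_le_pow_left₀ (by positivity) ?_ _) (peakSize_nonneg _ _ _)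
  have h3 : 1 - ‖w‖ ^ 2 = (1 - ‖w‖) * (1 + ‖w‖) := by ring
  rw [div_le_div_iff₀ h2 (by rw [h3]; exact mul_pos h2 (by linarith [norm_nonneg w])), h3]
  have := mul_le_mul_of_nonneg_left hlt.le h2.le
  linarith

/-- Hopf-type decay: a holomorphic function of controlled boundary growth that is tiny near the
centre of the disc is still small at distance `τ` from the boundary. -/
theorem norm_le_of_growth {V : Type*} [NormedAddCommGroup V] [NormedSpace ℂ V] {f : ℂ → V}
    {τ B r : ℝ} {A q : ℕ} (hτ : 0 < τ) (hτ' : τ ≤ 1 / 2) (hr : 0 < r) (hr' : r ≤ 1 / 4)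
    (hB0 : 0 ≤ B)
    (hd : DifferentiableOn ℂ f (ball 0 1))
    (hB : ∀ ζ : ℂ, ‖ζ‖ < 1 → ‖f ζ‖ ≤ (4 * ‖1 - (1 - τ : ℝ) * ζ‖ ^ 2 /
      ((1 - (1 - τ) ^ 2) * (1 - ‖ζ‖ ^ 2))) ^ A * B)
    (hs : ∀ ζ : ℂ, ‖ζ‖ ≤ r → ‖f ζ‖ ≤ B * r ^ q) {b : ℂ} (hb : ‖b - (1 - τ : ℝ)‖ ≤ τ / 4) :
    ‖f b‖ ≤ 72 ^ A * B * (1 - τ / 4) ^ q := by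
  set a : ℝ := 1 - τ with ha
  have ha0 : 0 ≤ a := by linarith
  set R : ℝ := 1 - τ / 2 with hR
  have hR0 : 0 < R := by linarith
  have hlow : ∀ ζ : ℂ, ‖ζ‖ < 1 → τ ≤ ‖1 - a * ζ‖ := by
    intro ζ hζ
    have h1 := norm_sub_norm_le (1 : ℂ) (a * ζ)
    rw [norm_one, norm_mul, Complex.norm_real, Real.norm_of_nonneg ha0] at h1
    have : a * ‖ζ‖ ≤ a * 1 := by gcongr
    linarith
  set m : ℂ → ℂ := fun ζ => ((τ : ℂ) ^ 2 / (8 * (1 - a * ζ) ^ 2)) ^ A with hm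
  have hmn : ∀ ζ : ℂ, ‖m ζ‖ = (τ ^ 2 / (8 * ‖1 - a * ζ‖ ^ 2)) ^ A := by
    intro ζ
    simp only [hm, norm_pow, norm_div, norm_mul, Complex.norm_real, Real.norm_of_nonneg hτ.le]
    norm_num
  have hmd : DifferentiableOn ℂ m (ball 0 1) := by
    intro ζ hζ
    have h1 := hlow ζ (by simpa using hζ)
    have h2 : 1 - a * ζ ≠ 0 := norm_pos_iff.1 (hτ.trans_le h1)
    have h3 : (8 : ℂ) * (1 - a * ζ) ^ 2 ≠ 0 := mul_ne_zero (by norm_num) (pow_ne_zero _ h2)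
    have : DifferentiableAt ℂ m ζ := by
      simp only [hm]
      fun_prop (disch := exact h3)
    exact this.differentiableWithinAt
  have hbn1 : ‖b‖ ≤ a + τ / 4 := by
    have := norm_le_norm_sub_add b (a : ℂ)
    rw [Complex.norm_real, Real.norm_of_nonneg ha0] at this
    linarith
  have hbn2 : a - τ / 4 ≤ ‖b‖ := by
    have := norm_sub_norm_le (a : ℂ) b
    rw [Complex.norm_real, Real.norm_of_nonneg ha0, norm_sub_rev] at this
    linarith
  have hbR : ‖b‖ < R := by linarith
  have hkey := norm_le_pow_of_norm_le_on_small_disc (f := fun ζ => m ζ • f ζ) (r := r) (R := R)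
    (B := B) (p := q) hr
    ((hmd.smul hd).mono (ball_subset_ball (by linarith)))
    (by
      intro ζ hζ
      have hζ1 : ‖ζ‖ < 1 := by linarith
      have hnp : 0 < ‖1 - a * ζ‖ := hτ.trans_le (hlow ζ hζ1)
      have hz2 : τ / 2 ≤ 1 - ‖ζ‖ ^ 2 := by
        have h1 : ‖ζ‖ ^ 2 ≤ ‖ζ‖ := by
          rw [pow_two]; exact mul_le_of_le_one_left (norm_nonneg _) hζ1.le
        linarith
      have ha2 : τ * (3 / 2) ≤ 1 - a ^ 2 := by
        have : 1 - a ^ 2 = τ * (2 - τ) := by rw [ha]; ring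
        rw [this]; gcongr; linarith
      rw [norm_smul, hmn]
      calc (τ ^ 2 / (8 * ‖1 - a * ζ‖ ^ 2)) ^ A * ‖f ζ‖
          ≤ (τ ^ 2 / (8 * ‖1 - a * ζ‖ ^ 2)) ^ A *
            ((4 * ‖1 - a * ζ‖ ^ 2 / ((1 - a ^ 2) * (1 - ‖ζ‖ ^ 2))) ^ A * B) := by
            gcongr; exact hB ζ hζ1
        _ = (τ ^ 2 / (2 * ((1 - a ^ 2) * (1 - ‖ζ‖ ^ 2)))) ^ A * B := by
            rw [← mul_assoc, ← mul_pow]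
            congr 2
            field_simp
            norm_num
        _ ≤ 1 ^ A * B := by
            have hp : τ * (3 / 2) * (τ / 2) ≤ (1 - a ^ 2) * (1 - ‖ζ‖ ^ 2) :=
              mul_le_mul ha2 hz2 (by positivity) (by linarith)
            have hp0 : 0 < (1 - a ^ 2) * (1 - ‖ζ‖ ^ 2) := lt_of_lt_of_le (by positivity) hp
            gcongr
            rw [div_le_one (by positivity)]
            linarith [sq_nonneg τ]
        _ = B := by rw [one_pow, one_mul])
    (by
      intro ζ hζ
      have hζ1 : ‖ζ‖ < 1 := by linarith
      rw [norm_smul, hmn]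
      have h1 : (τ ^ 2 / (8 * ‖1 - a * ζ‖ ^ 2)) ^ A ≤ 1 := by
        refine pow_le_one₀ (by positivity) ?_
        have h2 : τ ^ 2 ≤ ‖1 - a * ζ‖ ^ 2 := by gcongr; exact hlow ζ hζ1
        rw [div_le_one (by have := sq_pos_of_pos hτ; linarith)]
        linarith [sq_nonneg ‖1 - a * ζ‖]
      calc _ ≤ 1 * (B * r ^ q) := by
            gcongr
            exact hs ζ hζ
        _ ≤ B * (r / R) ^ q := by
            rw [one_mul]
            gcongr
            rw [le_div_iff₀ hR0]
            exact mul_le_of_le_one_right hr.le (by linarith))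
    (ζ := b) (by linarith) hbR
  have hb1 : ‖b‖ < 1 := by linarith
  have hnp : 0 < ‖1 - a * b‖ := hτ.trans_le (hlow b hb1)
  rw [norm_smul, hmn] at hkey
  have hup : ‖1 - a * b‖ ≤ 3 * τ := by
    have h1 : 1 - a * b = ((1 - a ^ 2 : ℝ) : ℂ) - a * (b - a) := by push_cast; ring
    rw [h1]
    refine (norm_sub_le _ _).trans ?_
    rw [norm_mul, Complex.norm_real, Complex.norm_real, Real.norm_of_nonneg ha0]
    have h2 : 1 - a ^ 2 = τ * (2 - τ) := by rw [ha]; ring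
    rw [h2, Real.norm_of_nonneg (mul_nonneg hτ.le (by linarith))]
    have h3 : a * ‖b - a‖ ≤ 1 * (τ / 4) := by gcongr; linarith
    have h4 := sq_nonneg τ
    linarith
  have hquot : ‖b‖ / R ≤ 1 - τ / 4 := by
    rw [div_le_iff₀ hR0, hR]
    have h4 := sq_nonneg τ
    linarith
  have hinv : 1 ≤ 72 ^ A * (τ ^ 2 / (8 * ‖1 - a * b‖ ^ 2)) ^ A := by
    rw [← mul_pow]
    refine one_le_pow₀ ?_
    rw [← mul_div_assoc, one_le_div (by positivity)]
    have : ‖1 - a * b‖ ^ 2 ≤ (3 * τ) ^ 2 := by gcongr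
    linarith
  calc ‖f b‖ ≤ 72 ^ A * (τ ^ 2 / (8 * ‖1 - a * b‖ ^ 2)) ^ A * ‖f b‖ :=
        le_mul_of_one_le_left (norm_nonneg _) hinv
    _ = 72 ^ A * ((τ ^ 2 / (8 * ‖1 - a * b‖ ^ 2)) ^ A * ‖f b‖) := mul_assoc _ _ _
    _ ≤ 72 ^ A * (B * (‖b‖ / R) ^ q) := by gcongr
    _ ≤ 72 ^ A * (B * (1 - τ / 4) ^ q) := by gcongr
    _ = _ := by ring

end Harnack

section Iteration

/-- There is a nonprincipal ultrafilter on `ℕ` that is idempotent for addition. -/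
theorem exists_idempotent_ultrafilter_nat : ∃ U : Ultrafilter ℕ, (∀ᶠ k in (U : Filter ℕ), 1 ≤ k) ∧
    ∀ P : ℕ → Prop, (∀ᶠ k in (U : Filter ℕ), P k) →
      ∀ᶠ m in (U : Filter ℕ), ∀ᶠ n in (U : Filter ℕ), P (m + n) := by
  let _ : AddSemigroup (Ultrafilter ℕ+) := Ultrafilter.addSemigroup
  obtain ⟨U, hU⟩ := exists_idempotent_of_compact_t2_of_continuous_add_left
    (M := Ultrafilter ℕ+) Ultrafilter.continuous_add_left
  refine ⟨U.map (fun k : ℕ+ => (k : ℕ)), ?_, fun P hP => ?_⟩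
  · have h1 : ∀ᶠ k : ℕ+ in (U : Filter ℕ+), 1 ≤ (k : ℕ) := Eventually.of_forall fun k => k.pos
    exact h1
  · have h1 : ∀ᶠ k : ℕ+ in (U : Filter ℕ+), P k := hP
    rw [← hU, Ultrafilter.eventually_add] at h1
    have h2 : ∀ᶠ m : ℕ+ in (U : Filter ℕ+), ∀ᶠ n : ℕ+ in (U : Filter ℕ+),
        P ((m : ℕ) + (n : ℕ)) := by
      simpa using h1
    exact h2

variable {E V : Type*} [NormedAddCommGroup E] [NormedAddCommGroup V]

/-- Data of a limit of the iterates of `F` along an idempotent ultrafilter. -/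
structure IsIterateLimit (F : E → E) (Ω : Set E) (U : Ultrafilter ℕ) (g : E → E) : Prop where
  one_le : ∀ᶠ k in (U : Filter ℕ), 1 ≤ k
  mem_closure : ∀ z ∈ Ω, g z ∈ closure Ω
  tendsto : ∀ z ∈ Ω, Tendsto (fun k => F^[k] z) U (𝓝 (g z))
  idem : ∀ z ∈ Ω, g z ∈ Ω → g (g z) = g z
  comm : ∀ z ∈ Ω, g z ∈ Ω → ∀ k, F^[k] (g z) = g (F^[k] z)

theorem IsIterateLimit.norm_le {F g : E → E} {Ω : Set E} {U : Ultrafilter ℕ} {B : ℝ}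
    (h : IsIterateLimit F Ω U g)
    (hB : ∀ z ∈ Ω, ‖z‖ ≤ B) {z : E} (hz : z ∈ Ω) : ‖g z‖ ≤ B :=
  closure_minimal (fun z hz => hB z hz) (isClosed_le continuous_norm continuous_const)
    (h.mem_closure z hz)

variable [NormedSpace ℂ E] [NormedSpace ℂ V]

/-- Exponential decay, along multiples of some index, of a sequence of maps near a point. -/
def DecaysAt (Φ : ℕ → E → V) (D : ℝ) (x : E) : Prop :=
  ∃ r > 0, ∃ m : ℕ, 1 ≤ m ∧ ∀ z ∈ ball x r, ∀ j : ℕ, ‖Φ (m * j) z‖ ≤ D * (1 / 2) ^ j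

/-- Exponential decay spreads from a point to a ball of comparable size. -/
theorem DecaysAt.of_dist_lt {Φ : ℕ → E → V} {D R : ℝ} {x y : E} (hy : DecaysAt Φ D y)
    (hd : ∀ k, DifferentiableOn ℂ (Φ k) (ball x R)) (hB : ∀ k, ∀ z ∈ ball x R, ‖Φ k z‖ ≤ D)
    (hxy : dist x y < R / 4) : DecaysAt Φ D x := by
  obtain ⟨r, hr, m, hm, hdec⟩ := hy
  have hR : 0 < R := by linarith [dist_nonneg (x := x) (y := y)]
  have hD : 0 ≤ D := (norm_nonneg _).trans (hB 0 x (mem_ball_self hR))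
  set R' : ℝ := 3 * R / 4 with hR'
  set s : ℝ := min (r / 2) (R' / 2) with hs
  have hs0 : 0 < s := by positivity
  have hsr : s < r := (min_le_left _ _).trans_lt (by linarith)
  have hR'0 : 0 < R' := by positivity
  have hyR : ball y R' ⊆ ball x R := ball_subset_ball' (by rw [dist_comm]; linarith)
  obtain ⟨t, ht⟩ := exists_pow_lt_of_lt_one (div_pos hs0 hR'0) (by norm_num : (1 / 2 : ℝ) < 1)
  have ht1 : 1 ≤ t := by
    by_contra! h0
    have h0' : t = 0 := by lia
    rw [h0', pow_zero, lt_div_iff₀ hR'0] at ht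
    linarith [min_le_right (r / 2) (R' / 2)]
  refine ⟨R / 4, by positivity, m * t * 2, by nlinarith, fun w hw j => ?_⟩
  have hidx : m * t * 2 * j = m * (t * (2 * j)) := by ring
  rw [hidx]
  have hwy : ‖w - y‖ < R / 2 := by
    have := dist_triangle w x y
    rw [mem_ball] at hw
    rw [← dist_eq_norm]; linarith
  rcases le_or_gt s ‖w - y‖ with hcase | hcase
  · set d : ℝ := ‖w - y‖ with hd'
    have hd0 : 0 < d := hs0.trans_le hcase
    set u : E := ((d : ℂ)⁻¹) • (w - y) with hu
    have hu1 : ‖u‖ = 1 := by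
      rw [hu, norm_smul, norm_inv, Complex.norm_real, Real.norm_of_nonneg hd0.le, ← hd',
        inv_mul_cancel₀ hd0.ne']
    have hmem : ∀ (ζ : ℂ) (q : ℝ), ‖ζ‖ < q → y + ζ • u ∈ ball y q := by
      intro ζ q hζ
      rw [mem_ball, dist_eq_norm, add_sub_cancel_left, norm_smul, hu1, mul_one]
      exact hζ
    have hfd : DifferentiableOn ℂ (fun ζ : ℂ => Φ (m * (t * (2 * j))) (y + ζ • u)) (ball 0 R') := by
      refine (hd _).comp (by fun_prop) fun ζ hζ => hyR (hmem ζ R' (by simpa using hζ))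
    have h3 := norm_le_pow_of_norm_le_on_small_disc (p := 2 * j) hs0 hfd
      (fun ζ hζ => hB _ _ (hyR (hmem ζ R' hζ)))
      (fun ζ hζ => by
        refine (hdec _ (hmem ζ r (hζ.trans_lt hsr)) _).trans ?_
        rw [pow_mul]
        gcongr)
      (ζ := (d : ℂ)) (by rwa [Complex.norm_real, Real.norm_of_nonneg hd0.le])
      (by rw [Complex.norm_real, Real.norm_of_nonneg hd0.le]; linarith)
    have hw' : y + (d : ℂ) • u = w := by
      rw [hu, smul_inv_smul₀ (by exact_mod_cast hd0.ne')]; abel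
    rw [Complex.norm_real, Real.norm_of_nonneg hd0.le] at h3
    simp only [hw'] at h3
    refine h3.trans ?_
    rw [pow_mul]
    gcongr
    have h4 : d / R' ≤ 2 / 3 := by
      rw [div_le_iff₀ hR'0]; linarith
    calc (d / R') ^ 2 ≤ (2 / 3) ^ 2 := by gcongr
      _ ≤ 1 / 2 := by norm_num
  · refine (hdec w (by rw [mem_ball, dist_eq_norm]; linarith) _).trans ?_
    gcongr 1
    refine pow_le_pow_of_le_one (by norm_num) (by norm_num) ?_
    nlinarith

/-- Exponential decay of a bounded sequence of holomorphic maps propagates through a connected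
open set. -/
theorem DecaysAt.of_isPreconnected {Φ : ℕ → E → V} {D : ℝ} {Ω : Set E} (hΩ : IsOpen Ω)
    (hc : IsPreconnected Ω) (hd : ∀ k, DifferentiableOn ℂ (Φ k) Ω)
    (hB : ∀ k, ∀ z ∈ Ω, ‖Φ k z‖ ≤ D) {x : E} (hx : x ∈ Ω) (hdec : DecaysAt Φ D x) :
    ∀ y ∈ Ω, DecaysAt Φ D y := by
  have hopen : IsOpen {y | DecaysAt Φ D y} := by
    rw [Metric.isOpen_iff]
    rintro y ⟨r, hr, m, hm, h⟩
    refine ⟨r / 2, by positivity, fun w hw => ⟨r / 2, by positivity, m, hm, fun z hz => h z ?_⟩⟩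
    refine ball_subset_ball' ?_ hz
    rw [mem_ball] at hw; linarith
  refine hc.subset_of_closure_inter_subset hopen ⟨x, hx, hdec⟩ ?_
  rintro y ⟨hy, hyΩ⟩
  obtain ⟨R, hR, hball⟩ := Metric.isOpen_iff.1 hΩ y hyΩ
  obtain ⟨w, hw, hyw⟩ := Metric.mem_closure_iff.1 hy (R / 4) (by positivity)
  exact DecaysAt.of_dist_lt hw (fun k => (hd k).mono hball) (fun k z hz => hB k z (hball hz)) hyw

theorem DifferentiableOn.iterate' {F : E → E} {Ω : Set E} (hF : DifferentiableOn ℂ F Ω)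
    (hFΩ : MapsTo F Ω Ω) (k : ℕ) : DifferentiableOn ℂ F^[k] Ω := by
  induction k with
  | zero => exact differentiableOn_id
  | succ k ih => exact ih.comp hF hFΩ

theorem exists_isIterateLimit [FiniteDimensional ℂ E] {F : E → E} {Ω : Set E} (hΩ : IsOpen Ω)
    (hb : Bornology.IsBounded Ω) (hF : DifferentiableOn ℂ F Ω) (hFΩ : MapsTo F Ω Ω) :
    ∃ U g, IsIterateLimit F Ω U g := by
  obtain ⟨U, hU1, hU2⟩ := exists_idempotent_ultrafilter_nat
  have : ProperSpace E := FiniteDimensional.proper ℂ E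
  have hlim : ∀ z ∈ Ω, ∃ x ∈ closure Ω, Tendsto (fun k => F^[k] z) U (𝓝 x) := by
    intro z hz
    obtain ⟨x, hx, hx'⟩ := hb.isCompact_closure.ultrafilter_le_nhds (U.map fun k => F^[k] z)
      (le_principal_iff.2 (Ultrafilter.mem_map.2 (Filter.univ_mem' fun k =>
        subset_closure (hFΩ.iterate k hz))))
    exact ⟨x, hx, hx'⟩
  choose! g hg1 hg2 using hlim
  have hcont : ∀ k, ∀ z ∈ Ω, ContinuousAt F^[k] z := fun k z hz =>
    ((hF.iterate' hFΩ k).differentiableAt (hΩ.mem_nhds hz)).continuousAt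
  refine ⟨U, g, hU1, hg1, hg2, fun z hz hgz => ?_, fun z hz hgz k => ?_⟩
  · refine tendsto_nhds_unique (hg2 _ hgz) ((closed_nhds_basis (g z)).tendsto_right_iff.2 ?_)
    rintro s ⟨hs, hsc⟩
    filter_upwards [hU2 _ ((hg2 z hz).eventually hs)] with m hm
    refine hsc.mem_of_tendsto ((hcont m _ hgz).tendsto.comp (hg2 z hz)) (hm.mono fun n hn => ?_)
    rw [comp_apply, ← iterate_add_apply]
    exact hn
  · have h1 : Tendsto (fun n => F^[k] (F^[n] z)) U (𝓝 (F^[k] (g z))) :=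
      (hcont k _ hgz).tendsto.comp (hg2 z hz)
    have h2 := hg2 _ (hFΩ.iterate k hz)
    refine tendsto_nhds_unique h1 (h2.congr fun n => ?_)
    rw [← iterate_add_apply, ← iterate_add_apply, add_comm]

namespace IsIterateLimit

variable {F g : E → E} {Ω : Set E} {U : Ultrafilter ℕ}

variable [FiniteDimensional ℂ E]

theorem exists_hasFDerivAt (h : IsIterateLimit F Ω U g) (hΩ : IsOpen Ω)
    (hb : Bornology.IsBounded Ω) (hF : DifferentiableOn ℂ F Ω) (hFΩ : MapsTo F Ω Ω) {z : E}
    (hz : z ∈ Ω) :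
    ∃ D : E →L[ℂ] E, HasFDerivAt g D z ∧ Tendsto (fun k => fderiv ℂ F^[k] z) U (𝓝 D) := by
  obtain ⟨B, hB⟩ := hb.exists_norm_le
  exact exists_hasFDerivAt_of_ultrafilter_tendsto U hΩ (hF.iterate' hFΩ)
    (fun k x hx => hB _ (hFΩ.iterate k hx)) h.tendsto hz

theorem differentiableOn (h : IsIterateLimit F Ω U g) (hΩ : IsOpen Ω)
    (hb : Bornology.IsBounded Ω) (hF : DifferentiableOn ℂ F Ω) (hFΩ : MapsTo F Ω Ω) :
    DifferentiableOn ℂ g Ω := fun _ hz =>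
  let ⟨_, hD, _⟩ := h.exists_hasFDerivAt hΩ hb hF hFΩ hz
  hD.differentiableAt.differentiableWithinAt

/-- Near a fixed point the iterates converge exponentially fast towards the limit retraction. -/
theorem decaysAt_fixedPoint (h : IsIterateLimit F Ω U g) (hΩ : IsOpen Ω)
    (hb : Bornology.IsBounded Ω) (hF : DifferentiableOn ℂ F Ω) (hFΩ : MapsTo F Ω Ω) {B : ℝ}
    (hB : ∀ z ∈ Ω, ‖z‖ ≤ B) {z₀ : E} (hz₀ : z₀ ∈ Ω) (hfix : F z₀ = z₀) :
    DecaysAt (fun k z => F^[k] z - g (F^[k] z)) (2 * B) z₀ := by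
  have hB0 : 0 ≤ B := (norm_nonneg _).trans (hB z₀ hz₀)
  have hFk := fun k => hF.iterate' hFΩ k
  have hgd := h.differentiableOn hΩ hb hF hFΩ
  have hfixk : ∀ k, F^[k] z₀ = z₀ := iterate_fixed hfix
  have hg0 : g z₀ = z₀ := tendsto_nhds_unique (h.tendsto z₀ hz₀) (by
    simp only [hfixk]; exact tendsto_const_nhds)
  obtain ⟨r, hr, hball⟩ := Metric.isOpen_iff.1 hΩ z₀ hz₀
  obtain ⟨D, hD, hDlim⟩ := h.exists_hasFDerivAt hΩ hb hF hFΩ hz₀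
  obtain ⟨N, hN1, hN⟩ := (h.one_le.and
    ((tendsto_iff_norm_sub_tendsto_zero.1 hDlim).eventually_lt_const
      (by norm_num : (0 : ℝ) < 1 / 16))).exists
  set f : E → E := fun z => F^[N] z - g z with hf
  have hfd : DifferentiableOn ℂ f Ω := (hFk N).sub hgd
  have hfB : ∀ z ∈ Ω, ‖f z‖ ≤ 2 * B := fun z hz => by
    linarith [norm_sub_le (F^[N] z) (g z), hB _ (hFΩ.iterate N hz), h.norm_le hB hz]
  have hf0 : f z₀ = 0 := by simp [hf, hfixk, hg0]
  have hfder : fderiv ℂ f z₀ = fderiv ℂ F^[N] z₀ - D :=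
    (((hFk N).differentiableAt (hΩ.mem_nhds hz₀)).hasFDerivAt.sub hD).fderiv
  set s : ℝ := min (r / 2) (r ^ 2 / (128 * (B + 1))) with hs
  have hs0 : 0 < s := by positivity
  have hsr : s < r := (min_le_left _ _).trans_lt (by linarith)
  have hs2 : 8 * B * s ≤ r ^ 2 / 16 := by
    have h1 : s ≤ r ^ 2 / (128 * (B + 1)) := min_le_right _ _
    rw [le_div_iff₀ (by positivity)] at h1
    linarith
  have hfs : ∀ w ∈ ball z₀ s, ‖f w‖ ≤ s / 8 := by
    intro w hw
    have h1 := norm_sub_sub_fderiv_le (hfd.mono hball) (fun x hx => hfB x (hball hx))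
      (ball_subset_ball hsr.le hw)
    rw [hf0, sub_zero, hfder] at h1
    have hws : ‖w - z₀‖ ≤ s := by rw [← dist_eq_norm]; exact (mem_ball.1 hw).le
    have h2 : ‖(fderiv ℂ F^[N] z₀ - D) (w - z₀)‖ ≤ 1 / 16 * s :=
      (ContinuousLinearMap.le_opNorm _ _).trans (mul_le_mul hN.le hws (norm_nonneg _) (by norm_num))
    have h3 : 4 * (2 * B) * (‖w - z₀‖ / r) ^ 2 ≤ s / 16 := by
      calc 4 * (2 * B) * (‖w - z₀‖ / r) ^ 2 ≤ 4 * (2 * B) * (s / r) ^ 2 := by gcongr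
        _ = (8 * B * s) * s / r ^ 2 := by ring
        _ ≤ (r ^ 2 / 16) * s / r ^ 2 := by gcongr
        _ = s / 16 := by field_simp
    have h4 := norm_le_norm_sub_add (f w) ((fderiv ℂ F^[N] z₀ - D) (w - z₀))
    linarith
  have hflip : ∀ x ∈ ball z₀ (s / 4), ∀ y ∈ ball z₀ (s / 4), ‖f y - f x‖ ≤ 1 / 2 * ‖y - x‖ := by
    intro x hx y hy
    rw [mem_ball] at hx hy
    have hsub : ball x (s / 2) ⊆ ball z₀ s := ball_subset_ball' (by linarith)
    have := norm_sub_center_le (z := x) (r := s / 2)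
      (hfd.mono ((hsub.trans (ball_subset_ball hsr.le)).trans hball))
      (fun u hu => hfs u (hsub hu)) (w := y) (by
        rw [mem_ball]; linarith [dist_triangle_right y x z₀])
    refine this.trans (le_of_eq ?_)
    field_simp
    norm_num
  have hK : 0 < 1 + 2 * B / r := by positivity
  set t : ℝ := min r (s / 4 / (1 + 2 * B / r)) with ht
  have ht0 : 0 < t := by positivity
  have hFball : ∀ k, ∀ z ∈ ball z₀ r, ‖F^[k] z - z₀‖ ≤ 2 * B / r * ‖z - z₀‖ := by
    intro k z hz
    have := norm_sub_center_le ((hFk k).mono hball) (fun x hx => hB _ (hFΩ.iterate k (hball hx))) hz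
    rwa [hfixk] at this
  have hFs : ∀ k, ∀ z ∈ ball z₀ t, F^[k] z ∈ ball z₀ (s / 4) ∧ g (F^[k] z) ∈ ball z₀ (s / 4) := by
    intro k z hz
    rw [mem_ball, dist_eq_norm] at hz
    have hzr : z ∈ ball z₀ r := by rw [mem_ball, dist_eq_norm]; exact hz.trans_le (min_le_left _ _)
    have hlt : 2 * B / r * ‖z - z₀‖ < s / 4 := by
      have h1 := hz.trans_le (min_le_right _ _)
      rw [lt_div_iff₀ hK] at h1
      linarith [norm_nonneg (z - z₀)]
    refine ⟨by rw [mem_ball, dist_eq_norm]; exact (hFball k z hzr).trans_lt hlt, ?_⟩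
    rw [mem_ball, dist_eq_norm]
    refine lt_of_le_of_lt ?_ hlt
    refine le_of_tendsto ((h.tendsto _ (hFΩ.iterate k (hball hzr))).sub_const z₀).norm
      (Eventually.of_forall fun j => ?_)
    rw [← iterate_add_apply]
    exact hFball _ z hzr
  have hsΩ : ball z₀ (s / 4) ⊆ Ω := (ball_subset_ball (by linarith)).trans hball
  refine ⟨t, ht0, N, hN1, fun z hz j => ?_⟩
  have hzΩ : z ∈ Ω := hball (ball_subset_ball (min_le_left _ _) hz)
  induction j with
  | zero =>
    simp only [mul_zero, iterate_zero, id_eq, pow_zero, mul_one]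
    linarith [norm_sub_le z (g z), hB z hzΩ, h.norm_le hB hzΩ]
  | succ j ih =>
    obtain ⟨h1, h2⟩ := hFs (N * j) z hz
    have h3 := hflip _ h2 _ h1
    set y := F^[N * j] z with hy
    have hyΩ : y ∈ Ω := hsΩ h1
    have h4 : F^[N * (j + 1)] z = F^[N] y := by rw [hy, ← iterate_add_apply]; congr 2; ring
    have h5 : f y - f (g y) = F^[N] y - g (F^[N] y) := by
      simp only [hf, h.idem y hyΩ (hsΩ h2), h.comm y hyΩ (hsΩ h2)]; abel
    simp only [h4]
    rw [← h5]
    refine h3.trans ?_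
    rw [pow_succ]
    linarith

/-- The iterates converge exponentially fast towards the limit retraction near every point. -/
theorem decaysAt (h : IsIterateLimit F Ω U g) (hΩ : IsOpen Ω) (hc : IsPreconnected Ω)
    (hb : Bornology.IsBounded Ω) (hF : DifferentiableOn ℂ F Ω) (hFΩ : MapsTo F Ω Ω) {B : ℝ}
    (hB : ∀ z ∈ Ω, ‖z‖ ≤ B) {z₀ : E} (hz₀ : z₀ ∈ Ω) (hfix : F z₀ = z₀) :
    ∀ x ∈ Ω, DecaysAt (fun k z => F^[k] z - g (F^[k] z)) (2 * B) x := by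
  have hgd := h.differentiableOn hΩ hb hF hFΩ
  refine DecaysAt.of_isPreconnected hΩ hc (fun k => ?_) (fun k z hz => ?_) hz₀
    (h.decaysAt_fixedPoint hΩ hb hF hFΩ hB hz₀ hfix)
  · exact (hF.iterate' hFΩ k).sub (hgd.comp (hF.iterate' hFΩ k) (hFΩ.iterate k))
  · have h1 := hFΩ.iterate k hz
    linarith [norm_sub_le (F^[k] z) (g (F^[k] z)), hB _ h1, h.norm_le hB h1]

end IsIterateLimit

end Iteration

section Tools

variable {E V : Type*} [NormedAddCommGroup E] [NormedAddCommGroup V]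

/-- Up to time `M / τ`, the orbit of a point at distance `O(τ)` of a second order fixed boundary
point moves by `o(τ)` only. -/
theorem exists_norm_iterate_sub_le {F : E → E} {Ω : Set E} {p : E} (hFΩ : MapsTo F Ω Ω)
    (ho : ∀ ε > 0, ∃ η > 0, ∀ z ∈ Ω, ‖z - p‖ < η → ‖F z - z‖ ≤ ε * ‖z - p‖ ^ 2)
    {K M ε : ℝ} (hK : 0 < K) (hM : 0 < M) (hε : 0 < ε) :
    ∃ τ₀ > 0, ∀ τ, 0 < τ → τ < τ₀ → ∀ z ∈ Ω, ‖z - p‖ ≤ K * τ → ∀ k : ℕ, k * τ ≤ M →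
      ‖F^[k] z - z‖ ≤ ε * τ := by
  obtain ⟨η, hη, hη'⟩ := ho (ε / (M * (K + ε) ^ 2)) (by positivity)
  refine ⟨η / (K + ε), by positivity, fun τ hτ hτ0 z hz hzp => ?_⟩
  rw [lt_div_iff₀ (by positivity)] at hτ0
  have key : ∀ k : ℕ, k * τ ≤ M → ‖F^[k] z - z‖ ≤ k * τ * (ε / M * τ) := by
    intro k
    induction k with
    | zero => intro _; simp
    | succ k ih =>
      intro hk
      push_cast at hk
      have hk' : k * τ ≤ M := by linarith
      have h1 := ih hk'
      have h2 : ‖F^[k] z - z‖ ≤ ε * τ := by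
        refine h1.trans ?_
        calc k * τ * (ε / M * τ) ≤ M * (ε / M * τ) := by gcongr
          _ = ε * τ := by field_simp
      have h3 : ‖F^[k] z - p‖ ≤ (K + ε) * τ := by
        linarith [norm_sub_le_norm_sub_add_norm_sub (F^[k] z) z p]
      have h4 := hη' _ (hFΩ.iterate k hz) (h3.trans_lt (by linarith))
      have h5 : ‖F (F^[k] z) - F^[k] z‖ ≤ τ * (ε / M * τ) := by
        refine h4.trans ?_
        calc ε / (M * (K + ε) ^ 2) * ‖F^[k] z - p‖ ^ 2
            ≤ ε / (M * (K + ε) ^ 2) * ((K + ε) * τ) ^ 2 := by gcongr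
          _ = τ * (ε / M * τ) := by field_simp
      rw [iterate_succ_apply']
      have h6 := norm_sub_le_norm_sub_add_norm_sub (F (F^[k] z)) (F^[k] z) z
      push_cast
      linarith
  intro k hk
  refine (key k hk).trans ?_
  calc k * τ * (ε / M * τ) ≤ M * (ε / M * τ) := by gcongr
    _ = ε * τ := by field_simp

variable [NormedSpace ℂ E] [NormedSpace ℂ V]

/-- A bounded holomorphic map is strictly differentiable. -/
theorem hasStrictFDerivAt_of_differentiableOn_of_norm_le {f : E → V} {z : E} {r B : ℝ}
    (hr : 0 < r) (hd : DifferentiableOn ℂ f (ball z r)) (hB : ∀ x ∈ ball z r, ‖f x‖ ≤ B) :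
    HasStrictFDerivAt f (fderiv ℂ f z) z := by
  have hda : ∀ x ∈ ball z r, DifferentiableAt ℂ f x := fun x hx =>
    hd.differentiableAt (isOpen_ball.mem_nhds hx)
  have hB0 : 0 ≤ B := (norm_nonneg _).trans (hB z (mem_ball_self hr))
  refine hasStrictFDerivAt_of_hasFDerivAt_of_continuousAt (f' := fderiv ℂ f) ?_ ?_
  · filter_upwards [ball_mem_nhds z hr] with x hx using (hda x hx).hasFDerivAt
  · rw [ContinuousAt, tendsto_iff_norm_sub_tendsto_zero]
    have hlim : Tendsto (fun w => 32 * B / r ^ 2 * ‖w - z‖) (𝓝 z) (𝓝 0) := by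
      have : Continuous fun w : E => 32 * B / r ^ 2 * ‖w - z‖ := by fun_prop
      simpa using this.tendsto z
    refine squeeze_zero' (Eventually.of_forall fun _ => norm_nonneg _) ?_ hlim
    filter_upwards [ball_mem_nhds z (by positivity : 0 < r / 2)] with w hw
    rw [mem_ball, dist_eq_norm] at hw
    rcases eq_or_ne w z with rfl | hne
    · simp
    have hs : 0 < ‖w - z‖ := norm_pos_iff.2 (sub_ne_zero.2 hne)
    set s : ℝ := ‖w - z‖ with hsdef
    have hsub : ball w s ⊆ ball z r := ball_subset_ball' (by rw [dist_eq_norm]; linarith)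
    set φ : E → V := fun x => f x - f z - fderiv ℂ f z (x - z) with hφ
    have hφd : DifferentiableOn ℂ φ (ball w s) :=
      ((hd.mono hsub).sub_const _).sub (by fun_prop)
    have hφB : ∀ x ∈ ball w s, ‖φ x‖ ≤ 4 * B * (2 * s / r) ^ 2 := by
      intro x hx
      refine (norm_sub_sub_fderiv_le hd hB (hsub hx)).trans ?_
      have : ‖x - z‖ ≤ 2 * s := by
        rw [mem_ball, dist_eq_norm] at hx
        linarith [norm_sub_le_norm_sub_add_norm_sub x w z]
      gcongr
    have hder : fderiv ℂ φ w = fderiv ℂ f w - fderiv ℂ f z := by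
      have h1 : HasFDerivAt (fun x => fderiv ℂ f z (x - z)) (fderiv ℂ f z) w :=
        (fderiv ℂ f z).hasFDerivAt.comp w ((hasFDerivAt_id w).sub_const z)
      exact (((hda w (hsub (mem_ball_self hs))).hasFDerivAt.sub_const _).sub h1).fderiv
    have := norm_fderiv_center_le hs hφd hφB
    rw [hder] at this
    refine this.trans (le_of_eq ?_)
    field_simp
    ring

/-- A `C¹` function is Lipschitz on bounded sets. -/
theorem ContDiff.exists_norm_sub_le [FiniteDimensional ℂ E] {L : E → V} (hL : ContDiff ℂ 1 L)
    {X : Set E} (hX : Bornology.IsBounded X) :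
    ∃ K : ℝ, 1 ≤ K ∧ ∀ u ∈ X, ∀ v ∈ X, ‖L u - L v‖ ≤ K * ‖u - v‖ := by
  have : ProperSpace E := FiniteDimensional.proper ℂ E
  obtain ⟨R, hR⟩ := hX.subset_closedBall (0 : E)
  obtain ⟨K, hK⟩ := (isCompact_closedBall (0 : E) R).exists_bound_of_continuousOn
    (hL.continuous_fderiv (by norm_num)).continuousOn
  let _ : NormedSpace ℝ E := NormedSpace.restrictScalars ℝ ℂ E
  refine ⟨max K 1, le_max_right _ _, fun u hu v hv => ?_⟩
  exact (convex_closedBall (0 : E) R).norm_image_sub_le_of_norm_fderiv_le (𝕜 := ℂ)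
    (fun x _ => hL.differentiable (by norm_num) x)
    (fun x hx => (hK x hx).trans (le_max_left _ _)) (hR hv) (hR hu)

end Tools

section Injectivity

variable {E : Type*} [NormedAddCommGroup E] [InnerProductSpace ℂ E]

theorem norm_add_sq_of_inner_eq_zero {u v : E} (h : inner ℂ u v = 0) :
    ‖u + v‖ ^ 2 = ‖u‖ ^ 2 + ‖v‖ ^ 2 := by
  have := norm_add_sq_eq_norm_sq_add_norm_sq_of_inner_eq_zero u v h
  simpa [pow_two] using this

/-- Linear algebra: two operators that are close in an anisotropic sense, one of which is almost
the identity. -/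
theorem injective_of_anisotropic_estimates {e : E} {T S : E →L[ℂ] E} {f h : E →L[ℂ] ℂ}
    {c C s η : ℝ} (he : e ≠ 0) (hc : 0 < c) (hC : 0 ≤ C) (hs : 0 < s) (hη : 0 ≤ η)
    (hη' : η * (2 * (C + 1) / c + 1) < 1 / 2)
    (hT : ∀ v, ‖v‖ / 2 ≤ ‖T v‖) (hker : ∀ v, S v = 0 → h v = 0) (hfe : c ≤ ‖f e‖)
    (hfv : ∀ v, inner ℂ e v = 0 → ‖f v‖ ≤ C * s * ‖v‖)
    (hde : ‖(f - h) e‖ ≤ c / 2) (hdv : ∀ v, inner ℂ e v = 0 → ‖(f - h) v‖ ≤ s * ‖v‖)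
    (hTe : ‖(T - S) e‖ ≤ η / s) (hTv : ∀ v, inner ℂ e v = 0 → ‖(T - S) v‖ ≤ η * ‖v‖) :
    Injective S := by
  refine (injective_iff_map_eq_zero S).2 fun v hv => ?_
  set α : ℂ := inner ℂ e v / inner ℂ e e with hα
  set u : E := v - α • e with hu
  have hee : inner ℂ e e ≠ 0 := inner_self_ne_zero.2 he
  have hvu : v = α • e + u := by rw [hu]; abel
  have heu : inner ℂ e u = 0 := by
    rw [hu, inner_sub_right, inner_smul_right, hα, div_mul_cancel₀ _ hee, sub_self]
  have h1 : α * f e = α * (f - h) e + (f - h) u - f u := by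
    have h2 : f v = (f - h) v := by simp [hker v hv]
    rw [hvu] at h2
    simp only [map_add, map_smul, smul_eq_mul] at h2
    linear_combination h2
  have hα1 : ‖α‖ * (c / 2) ≤ (C + 1) * s * ‖u‖ := by
    have h2 : ‖α * f e‖ ≤ ‖α‖ * (c / 2) + s * ‖u‖ + C * s * ‖u‖ := by
      rw [h1]
      refine (norm_sub_le _ _).trans (add_le_add ((norm_add_le _ _).trans (add_le_add ?_
        (hdv u heu))) (hfv u heu))
      rw [norm_mul]
      gcongr
    rw [norm_mul] at h2
    have h3 : ‖α‖ * c ≤ ‖α‖ * ‖f e‖ := by gcongr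
    linarith
  have hα2 : ‖α‖ ≤ 2 * (C + 1) / c * s * ‖u‖ := by
    have : 2 * (C + 1) / c * s * ‖u‖ = ((C + 1) * s * ‖u‖) / (c / 2) := by field_simp
    rw [this, le_div_iff₀ (by positivity)]
    exact hα1
  have huv : ‖u‖ ≤ ‖v‖ := by
    have h2 : inner ℂ (α • e) u = 0 := by rw [inner_smul_left, heu, mul_zero]
    have h3 := norm_add_sq_of_inner_eq_zero h2
    rw [← hvu] at h3
    exact le_of_sq_le_sq (by linarith [sq_nonneg ‖α • e‖]) (norm_nonneg _)
  have h4 : ‖u‖ / 2 ≤ η * (2 * (C + 1) / c + 1) * ‖u‖ := by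
    have h5 : T v = α • (T - S) e + (T - S) u := by
      have : T v = (T - S) v := by simp [hv]
      rw [this]
      nth_rw 1 [hvu]
      rw [map_add, map_smul]
    calc ‖u‖ / 2 ≤ ‖v‖ / 2 := by gcongr
      _ ≤ ‖T v‖ := hT v
      _ ≤ ‖α‖ * (η / s) + η * ‖u‖ := by
        rw [h5]
        refine (norm_add_le _ _).trans (add_le_add ?_ (hTv u heu))
        rw [norm_smul]
        gcongr
      _ ≤ 2 * (C + 1) / c * s * ‖u‖ * (η / s) + η * ‖u‖ := by gcongr
      _ = η * (2 * (C + 1) / c + 1) * ‖u‖ := by field_simp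
  have hu0 : u = 0 := by
    by_contra hne
    have := mul_lt_mul_of_pos_right hη' (norm_pos_iff.2 hne)
    linarith
  have hα0 : α = 0 := by
    rw [hu0, norm_zero, mul_zero] at hα2
    exact norm_le_zero_iff.1 hα2
  rw [hvu, hu0, hα0, zero_smul, add_zero]

end Injectivity

section Comparison

variable {E : Type*} [NormedAddCommGroup E] [InnerProductSpace ℂ E]

theorem add_smul_add_mem_ball {c₀ e ξ : E} {β : ℂ} (h : inner ℂ e ξ = 0)
    (hlt : ‖β‖ ^ 2 * ‖e‖ ^ 2 + ‖ξ‖ ^ 2 < ‖e‖ ^ 2) : c₀ + β • e + ξ ∈ ball c₀ ‖e‖ := by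
  have h1 : inner ℂ (β • e) ξ = 0 := by rw [inner_smul_left, h, mul_zero]
  have h2 := norm_add_sq_of_inner_eq_zero h1
  rw [norm_smul, mul_pow] at h2
  rw [mem_ball, dist_eq_norm, add_assoc, add_sub_cancel_left]
  exact lt_of_pow_lt_pow_left₀ 2 (norm_nonneg _) (by linarith)

variable [FiniteDimensional ℂ E]

/-- Harnack inequality in the directions tangent to the inner ball. -/
theorem IsPeakFunction.exists_harnack_tangential {L : E → ℂ} {X : Set E} {p : E}
    {c δ : ℝ} (hP : IsPeakFunction L X p c δ) (hX : IsCompact X) :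
    ∃ C : ℝ, 1 ≤ C ∧ ∀ (c₀ e : E) (f : E → E), DifferentiableOn ℂ f (ball c₀ ‖e‖) →
      MapsTo f (ball c₀ ‖e‖) X → e ≠ 0 → ∀ τ : ℝ, 0 < τ → τ ≤ 1 / 2 →
      ∀ ξ, inner ℂ e ξ = 0 → 4 * ‖ξ‖ ^ 2 ≤ τ * ‖e‖ ^ 2 →
        peakSize L p (f (c₀ + ((1 - τ : ℝ) ^ 2 : ℂ) • e + ξ)) ≤
          C * peakSize L p (f (c₀ + ((1 - τ : ℝ) ^ 2 : ℂ) • e)) := by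
  obtain ⟨C, hC1, hC⟩ := hP.exists_harnack_half hX
  refine ⟨C, hC1, fun c₀ e f hfd hfX he τ hτ hτ' ξ hξ hξ' => ?_⟩
  have he2 : 0 < ‖e‖ ^ 2 := by have := norm_pos_iff.2 he; positivity
  have hmaps : MapsTo (fun ζ : ℂ => c₀ + ((1 - τ : ℝ) ^ 2 : ℂ) • e + ζ • ((2 : ℂ) • ξ))
      (ball 0 1) (ball c₀ ‖e‖) := by
    intro ζ hζ
    rw [mem_ball, dist_zero_right] at hζ
    refine add_smul_add_mem_ball ?_ ?_
    · rw [inner_smul_right, inner_smul_right, hξ, mul_zero, mul_zero]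
    · rw [norm_smul, norm_smul, norm_pow, Complex.norm_real, Real.norm_of_nonneg (by linarith),
        Complex.norm_ofNat]
      have h1 : ‖ζ‖ ^ 2 ≤ 1 := pow_le_one₀ (norm_nonneg _) hζ.le
      have h2 : (‖ζ‖ * (2 * ‖ξ‖)) ^ 2 ≤ τ * ‖e‖ ^ 2 := by
        calc (‖ζ‖ * (2 * ‖ξ‖)) ^ 2 = ‖ζ‖ ^ 2 * (4 * ‖ξ‖ ^ 2) := by ring
          _ ≤ 1 * (4 * ‖ξ‖ ^ 2) := by gcongr
          _ ≤ _ := by rwa [one_mul]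
      have h3 : ((1 - τ) ^ 2) ^ 2 ≤ (1 - τ) := by
        rw [← pow_mul]
        exact pow_le_of_le_one (by linarith) (by linarith) (by norm_num)
      have h4 : ((1 - τ) ^ 2) ^ 2 < 1 - τ := by
        refine lt_of_le_of_ne h3 fun h => ?_
        have h5 : ((1 - τ) ^ 2) ^ 2 ≤ (1 - τ) ^ 2 := by
          rw [← pow_mul]
          exact pow_le_pow_of_le_one (by linarith) (by linarith) (by norm_num)
        rw [h] at h5
        have : (1 - τ) * τ ≤ 0 := by linarith
        linarith [mul_pos (by linarith : 0 < 1 - τ) hτ]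
      have h6 := mul_lt_mul_of_pos_right h4 he2
      linarith
  have := hC (fun ζ => f (c₀ + ((1 - τ : ℝ) ^ 2 : ℂ) • e + ζ • ((2 : ℂ) • ξ)))
    (hfd.comp (by fun_prop) hmaps) (hfX.comp hmaps) (1 / 2) (by norm_num)
  simpa [smul_smul] using this

/-- Two maps into `X` which are extremely close near the centre `c₀` of the inner ball are still
close at distance `τ` of the peak point. -/
theorem IsPeakFunction.exists_comparison {L : E → ℂ} {X : Set E} {p : E}
    {c δ : ℝ} (hP : IsPeakFunction L X p c δ) (hX : IsCompact X) :
    ∃ (A : ℕ) (C : ℝ), 1 ≤ C ∧ ∀ (c₀ e : E) (f h : E → E), e ≠ 0 →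
      DifferentiableOn ℂ f (ball c₀ ‖e‖) → MapsTo f (ball c₀ ‖e‖) X →
      DifferentiableOn ℂ h (ball c₀ ‖e‖) → MapsTo h (ball c₀ ‖e‖) X →
      ∀ (τ r : ℝ) (q : ℕ), 0 < τ → τ ≤ r ^ 2 → 0 < r → r ≤ 1 / 4 →
      (∀ w, ‖w - c₀‖ ≤ 2 * r * ‖e‖ → ‖f w - h w‖ ≤ τ * r ^ q ∧
        ‖L (f w) - L (h w)‖ ≤ τ * r ^ q) →
      ∀ ξ, inner ℂ e ξ = 0 → 4 * ‖ξ‖ ^ 2 ≤ τ * ‖e‖ ^ 2 → ∀ b : ℂ, ‖b - (1 - τ : ℝ)‖ ≤ τ / 4 →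
        ‖L (f (c₀ + ((1 - τ : ℝ) * b) • e + ξ)) - L (h (c₀ + ((1 - τ : ℝ) * b) • e + ξ))‖ ≤
          72 ^ A * (C * (peakSize L p (f (c₀ + ((1 - τ : ℝ) ^ 2 : ℂ) • e)) +
            peakSize L p (h (c₀ + ((1 - τ : ℝ) ^ 2 : ℂ) • e))) + τ) * (1 - τ / 4) ^ q ∧
        ‖f (c₀ + ((1 - τ : ℝ) * b) • e + ξ) - h (c₀ + ((1 - τ : ℝ) * b) • e + ξ)‖ ≤
          72 ^ A * (2 * √(C * (peakSize L p (f (c₀ + ((1 - τ : ℝ) ^ 2 : ℂ) • e)) +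
            peakSize L p (h (c₀ + ((1 - τ : ℝ) ^ 2 : ℂ) • e)))) + τ) * (1 - τ / 4) ^ q := by
  obtain ⟨C, hC1, hC⟩ := hP.exists_harnack_tangential hX
  obtain ⟨A, hA1, hA⟩ := hP.exists_harnack hX
  refine ⟨A, C, hC1, fun c₀ e f h he hfd hfX hhd hhX τ r q hτ hτr hr hr' hs ξ hξ hξ' b hb => ?_⟩
  have he0 := norm_pos_iff.2 he
  have he2 : 0 < ‖e‖ ^ 2 := by positivity
  have hτ' : τ ≤ 1 / 2 := by
    refine hτr.trans ?_
    calc r ^ 2 ≤ (1 / 4) ^ 2 := by gcongr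
      _ ≤ 1 / 2 := by norm_num
  set x := peakSize L p (f (c₀ + ((1 - τ : ℝ) ^ 2 : ℂ) • e)) with hx
  set y := peakSize L p (h (c₀ + ((1 - τ : ℝ) ^ 2 : ℂ) • e)) with hy
  have hx0 : 0 ≤ x := peakSize_nonneg _ _ _
  have hy0 : 0 ≤ y := peakSize_nonneg _ _ _
  set ψ : ℂ → E := fun ζ => c₀ + ((1 - τ : ℝ) * ζ) • e + ξ with hψ
  have hmaps : MapsTo ψ (ball 0 1) (ball c₀ ‖e‖) := by
    intro ζ hζ
    rw [mem_ball, dist_zero_right] at hζ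
    refine add_smul_add_mem_ball hξ ?_
    rw [norm_mul, Complex.norm_real, Real.norm_of_nonneg (by linarith)]
    have h1 : ((1 - τ) * ‖ζ‖) ^ 2 * ‖e‖ ^ 2 ≤ (1 - τ) * ‖e‖ ^ 2 := by
      gcongr
      calc ((1 - τ) * ‖ζ‖) ^ 2 ≤ ((1 - τ) * 1) ^ 2 := by
            have : 0 ≤ 1 - τ := by linarith
            gcongr
        _ ≤ 1 - τ := by rw [mul_one]; exact pow_le_of_le_one (by linarith) (by linarith) two_ne_zero
    have h2 := mul_pos hτ he2
    linarith
  have hψd : DifferentiableOn ℂ ψ (ball 0 1) := by fun_prop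
  have ha : |1 - τ| < 1 := by rw [abs_of_nonneg (by linarith)]; linarith
  have hψa : ψ ((1 - τ : ℝ) : ℂ) = c₀ + ((1 - τ : ℝ) ^ 2 : ℂ) • e + ξ := by
    simp only [hψ, pow_two]
  set H : ℂ → ℝ := fun ζ => 4 * ‖1 - (1 - τ : ℝ) * ζ‖ ^ 2 / ((1 - (1 - τ) ^ 2) * (1 - ‖ζ‖ ^ 2))
    with hH
  have hH1 : ∀ ζ : ℂ, ‖ζ‖ < 1 → 1 ≤ H ζ := by
    intro ζ hζ
    have h1 := norm_one_add_sq_sub (-(1 - τ)) ζ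
    have h2 : 0 < (1 - (1 - τ) ^ 2) * (1 - ‖ζ‖ ^ 2) := by
      refine mul_pos ?_ ?_
      · linarith [(sq_lt_one_iff_abs_lt_one (1 - τ)).2 ha]
      · linarith [pow_lt_one₀ (norm_nonneg ζ) hζ two_ne_zero]
    have h3 : ‖1 + (-(1 - τ) : ℝ) * ζ‖ = ‖1 - (1 - τ : ℝ) * ζ‖ := by congr 1; push_cast; ring
    rw [h3, neg_sq] at h1
    simp only [hH]
    rw [one_le_div h2]
    linarith [sq_nonneg ‖ζ + (-(1 - τ) : ℝ)‖, sq_nonneg ‖1 - (1 - τ : ℝ) * ζ‖]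
  have hbound : ∀ φ : E → E, DifferentiableOn ℂ φ (ball c₀ ‖e‖) → MapsTo φ (ball c₀ ‖e‖) X →
      ∀ ζ : ℂ, ‖ζ‖ < 1 → peakSize L p (φ (ψ ζ)) ≤
        H ζ ^ A * (C * peakSize L p (φ (c₀ + ((1 - τ : ℝ) ^ 2 : ℂ) • e))) := by
    intro φ hφd hφX ζ hζ
    refine (hA (fun ζ => φ (ψ ζ)) (hφd.comp hψd hmaps) (hφX.comp hmaps) (1 - τ) ha ζ hζ).trans ?_
    have h1 := hC c₀ e φ hφd hφX he τ hτ hτ' ξ hξ hξ'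
    simp only [hψa]
    have := (hH1 ζ hζ)
    gcongr
  have hf1 := hbound f hfd hfX
  have hh1 := hbound h hhd hhX
  rw [← hx] at hf1
  rw [← hy] at hh1
  have hsmall : ∀ ζ : ℂ, ‖ζ‖ ≤ r → ‖ψ ζ - c₀‖ ≤ 2 * r * ‖e‖ := by
    intro ζ hζ
    have h1 : ψ ζ - c₀ = ((1 - τ : ℝ) * ζ) • e + ξ := by simp only [hψ]; abel
    rw [h1]
    have h2 : ‖ξ‖ ≤ r * ‖e‖ := by
      refine le_of_sq_le_sq ?_ (by positivity)
      rw [mul_pow]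
      have h3 : τ * ‖e‖ ^ 2 ≤ r ^ 2 * ‖e‖ ^ 2 := by gcongr
      linarith [sq_nonneg ‖ξ‖]
    have h3 : ‖((1 - τ : ℝ) * ζ) • e‖ ≤ r * ‖e‖ := by
      rw [norm_smul, norm_mul, Complex.norm_real, Real.norm_of_nonneg (by linarith)]
      gcongr
      calc (1 - τ) * ‖ζ‖ ≤ 1 * ‖ζ‖ := by gcongr; linarith
        _ ≤ r := by rwa [one_mul]
    linarith [norm_add_le (((1 - τ : ℝ) * ζ) • e) ξ]
  have hLd : Differentiable ℂ L := hP.contDiff.differentiable (by norm_num)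
  constructor
  · refine norm_le_of_growth (f := fun ζ => L (f (ψ ζ)) - L (h (ψ ζ))) hτ hτ' hr hr'
      (by positivity) ?_ ?_ ?_ hb
    · exact (hLd.comp_differentiableOn (hfd.comp hψd hmaps)).sub
        (hLd.comp_differentiableOn (hhd.comp hψd hmaps))
    · intro ζ hζ
      have h1 : ‖L (f (ψ ζ))‖ ≤ peakSize L p (f (ψ ζ)) := by
        unfold peakSize; linarith [sq_nonneg ‖f (ψ ζ) - p‖]
      have h2 : ‖L (h (ψ ζ))‖ ≤ peakSize L p (h (ψ ζ)) := by
        unfold peakSize; linarith [sq_nonneg ‖h (ψ ζ) - p‖]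
      have h3 : 0 ≤ H ζ ^ A * τ := by have := hH1 ζ hζ; positivity
      change _ ≤ H ζ ^ A * _
      linarith [hf1 ζ hζ, hh1 ζ hζ, norm_sub_le (L (f (ψ ζ))) (L (h (ψ ζ)))]
    · intro ζ hζ
      refine (hs _ (hsmall ζ hζ)).2.trans ?_
      gcongr
      linarith [mul_nonneg (by linarith : 0 ≤ C) (add_nonneg hx0 hy0)]
  · refine norm_le_of_growth (f := fun ζ => f (ψ ζ) - h (ψ ζ)) hτ hτ' hr hr'
      (by positivity) ?_ ?_ ?_ hb
    · exact (hfd.comp hψd hmaps).sub (hhd.comp hψd hmaps)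
    · intro ζ hζ
      have hH0 : 1 ≤ H ζ ^ A := one_le_pow₀ (hH1 ζ hζ)
      have hroot : ∀ (w : E) (t : ℝ), 0 ≤ t → t ≤ x + y →
          peakSize L p w ≤ H ζ ^ A * (C * t) → ‖w - p‖ ≤ H ζ ^ A * √(C * (x + y)) := by
        intro w t ht htxy hw
        have h1 : ‖w - p‖ ^ 2 ≤ H ζ ^ A * (C * (x + y)) := by
          have : ‖w - p‖ ^ 2 ≤ peakSize L p w := by
            unfold peakSize; linarith [norm_nonneg (L w)]
          refine (this.trans hw).trans ?_
          gcongr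
        refine le_of_sq_le_sq ?_ (by positivity)
        rw [mul_pow, Real.sq_sqrt (by positivity)]
        refine h1.trans ?_
        gcongr
        exact le_self_pow₀ hH0 two_ne_zero
      have h1 := hroot _ x hx0 (by linarith) (hf1 ζ hζ)
      have h2 := hroot _ y hy0 (by linarith) (hh1 ζ hζ)
      have h3 : 0 ≤ H ζ ^ A * τ := by positivity
      have h4 := norm_sub_le_norm_sub_add_norm_sub (f (ψ ζ)) p (h (ψ ζ))
      rw [norm_sub_rev p] at h4
      change _ ≤ H ζ ^ A * _
      linarith
    · intro ζ hζ
      refine (hs _ (hsmall ζ hζ)).1.trans ?_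
      gcongr
      linarith [Real.sqrt_nonneg (C * (x + y))]

end Comparison

section SmallComparison

variable {E : Type*} [NormedAddCommGroup E] [InnerProductSpace ℂ E]

/-- Self-improvement of the comparison estimate: if the size `x` of `f` is `O(τ)` and the damping
factor `t` is small, then the size `y` of `h` is `O(τ)` too. -/
theorem le_of_damped_comparison {C x y t τ : ℝ} (hC : 1 ≤ C) (hx : 0 ≤ x) (hy : 0 ≤ y) (ht : 0 ≤ t)
    (hτ : 0 ≤ τ) (hτ1 : τ ≤ 1) (htC : 34 * C * t ≤ 1) {a a' b b' : ℝ} (ha : 0 ≤ a)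
    (hb' : 0 ≤ b')
    (hxa : x = a + b ^ 2) (hya : y = a' + b' ^ 2) (ha' : a' ≤ a + t * (C * (x + y) + τ))
    (hbb' : b' ≤ b + t * (2 * √(C * (x + y)) + τ)) : y ≤ 5 * x + τ := by
  set S := C * (x + y) with hS
  have hS0 : 0 ≤ S := by positivity
  have ht1 : t ≤ 1 := by
    have := mul_le_mul_of_nonneg_right hC ht
    linarith
  have h1 : (2 * √S + τ) ^ 2 ≤ 8 * (S + τ) := by
    have e1 := Real.sq_sqrt hS0
    have e2 := sq_nonneg (2 * √S - τ)
    have e3 : τ ^ 2 ≤ τ := pow_le_of_le_one hτ hτ1 two_ne_zero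
    have e4 : (2 * √S + τ) ^ 2 + (2 * √S - τ) ^ 2 = 8 * √S ^ 2 + 2 * τ ^ 2 := by ring
    rw [e1] at e4
    linarith
  have h2 : b' ^ 2 ≤ 2 * b ^ 2 + 16 * t * (S + τ) := by
    have e0 : 0 ≤ t * (2 * √S + τ) := by positivity
    have e1 : b' ^ 2 ≤ (b + t * (2 * √S + τ)) ^ 2 := pow_le_pow_left₀ hb' hbb' 2
    have e2 := sq_nonneg (b - t * (2 * √S + τ))
    have e3 : t ^ 2 * (2 * √S + τ) ^ 2 ≤ t * (8 * (S + τ)) :=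
      mul_le_mul (pow_le_of_le_one ht ht1 two_ne_zero) h1 (sq_nonneg _) ht
    have e4 : (b + t * (2 * √S + τ)) ^ 2 + (b - t * (2 * √S + τ)) ^ 2 =
      2 * b ^ 2 + 2 * (t ^ 2 * (2 * √S + τ) ^ 2) := by ring
    linarith
  have h3 : 34 * t * S ≤ x + y := by
    calc 34 * t * S = 34 * C * t * (x + y) := by rw [hS]; ring
      _ ≤ 1 * (x + y) := by gcongr
      _ = _ := one_mul _
  have h4 : 34 * t * τ ≤ τ := by
    calc 34 * t * τ ≤ 1 * τ := by
          gcongr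
          have := mul_le_mul_of_nonneg_right hC ht
          linarith
      _ = _ := one_mul _
  have h5 : t * (S + τ) = t * S + t * τ := by ring
  have hb2 := sq_nonneg b
  linarith

variable [FiniteDimensional ℂ E]

theorem IsPeakFunction.exists_comparison_small {L : E → ℂ} {X : Set E} {p : E}
    {c δ : ℝ} (hP : IsPeakFunction L X p c δ) (hX : IsCompact X) {K ϑ : ℝ} (hK : 0 ≤ K)
    (hϑ : 0 < ϑ) :
    ∃ M > 0, ∀ (c₀ e : E) (f h : E → E), e ≠ 0 →
      DifferentiableOn ℂ f (ball c₀ ‖e‖) → MapsTo f (ball c₀ ‖e‖) X →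
      DifferentiableOn ℂ h (ball c₀ ‖e‖) → MapsTo h (ball c₀ ‖e‖) X →
      ∀ (τ r : ℝ) (q : ℕ), 0 < τ → τ ≤ r ^ 2 → 0 < r → r ≤ 1 / 4 → M ≤ q * τ →
      peakSize L p (f (c₀ + ((1 - τ : ℝ) ^ 2 : ℂ) • e)) ≤ K * τ →
      (∀ w, ‖w - c₀‖ ≤ 2 * r * ‖e‖ → ‖f w - h w‖ ≤ τ * r ^ q ∧
        ‖L (f w) - L (h w)‖ ≤ τ * r ^ q) →
      ∀ ξ, inner ℂ e ξ = 0 → 4 * ‖ξ‖ ^ 2 ≤ τ * ‖e‖ ^ 2 → ∀ b : ℂ, ‖b - (1 - τ : ℝ)‖ ≤ τ / 4 →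
        ‖L (f (c₀ + ((1 - τ : ℝ) * b) • e + ξ)) - L (h (c₀ + ((1 - τ : ℝ) * b) • e + ξ))‖ ≤ ϑ * τ ∧
        ‖f (c₀ + ((1 - τ : ℝ) * b) • e + ξ) - h (c₀ + ((1 - τ : ℝ) * b) • e + ξ)‖ ≤ ϑ * √τ := by
  obtain ⟨A, C, hC1, hC⟩ := hP.exists_comparison hX
  have hC0 : 0 < C := by linarith
  set C₄ : ℝ := C * (6 * K + 1) + 1 with hC₄
  have hC₄0 : 0 < C₄ := by positivity
  set t₀ : ℝ := min (1 / (34 * C)) (ϑ / (C₄ + 2 * √C₄ + 1)) with ht₀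
  have ht₀0 : 0 < t₀ := by positivity
  have hlim : Tendsto (fun M : ℝ => 72 ^ A * Real.exp (-(M / 4))) atTop (𝓝 (72 ^ A * 0)) :=
    (Real.tendsto_exp_neg_atTop_nhds_zero.comp
      (tendsto_id.atTop_div_const (by norm_num))).const_mul _
  rw [mul_zero] at hlim
  obtain ⟨M, hM0, hM⟩ := ((eventually_gt_atTop (0 : ℝ)).and
    (hlim.eventually (eventually_lt_nhds ht₀0))).exists
  refine ⟨M, hM0, fun c₀ e f h he hfd hfX hhd hhX τ r q hτ hτr hr hr' hMq hxK hs => ?_⟩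
  have hτ1 : τ ≤ 1 := hτr.trans (pow_le_one₀ hr.le (by linarith))
  set t : ℝ := 72 ^ A * (1 - τ / 4) ^ q with ht
  have ht0 : 0 ≤ t := by
    have : 0 ≤ 1 - τ / 4 := by linarith
    positivity
  have htt : t ≤ t₀ := by
    refine le_trans ?_ hM.le
    rw [ht]
    gcongr
    calc (1 - τ / 4) ^ q ≤ Real.exp (-(τ / 4)) ^ q := by
          gcongr
          · linarith
          · linarith [Real.add_one_le_exp (-(τ / 4))]
      _ = Real.exp (-(q * τ / 4)) := by rw [← Real.exp_nat_mul]; congr 1; ring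
      _ ≤ _ := by gcongr
  have hcmp := hC c₀ e f h he hfd hfX hhd hhX τ r q hτ hτr hr hr' hs
  set x := peakSize L p (f (c₀ + ((1 - τ : ℝ) ^ 2 : ℂ) • e)) with hx
  set y := peakSize L p (h (c₀ + ((1 - τ : ℝ) ^ 2 : ℂ) • e)) with hy
  have hx0 : 0 ≤ x := peakSize_nonneg _ _ _
  have hy0 : 0 ≤ y := peakSize_nonneg _ _ _
  have hyx : y ≤ 5 * x + τ := by
    have h1 := hcmp 0 (inner_zero_right e) (by simp; positivity) (1 - τ : ℝ)
      (by rw [sub_self, norm_zero]; positivity)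
    rw [add_zero, ← pow_two] at h1
    refine le_of_damped_comparison hC1 hx0 hy0 ht0 hτ.le hτ1 ?_ (norm_nonneg _)
      (norm_nonneg _) hx hy ?_ ?_
    · calc 34 * C * t ≤ 34 * C * (1 / (34 * C)) := by
            gcongr; exact htt.trans (min_le_left _ _)
        _ = 1 := by field_simp
    · have h2 := norm_sub_norm_le (L (h (c₀ + ((1 - τ : ℝ) ^ 2 : ℂ) • e)))
        (L (f (c₀ + ((1 - τ : ℝ) ^ 2 : ℂ) • e)))
      rw [norm_sub_rev] at h2
      have h3 := h2.trans h1.1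
      have h4 : 72 ^ A * (C * (x + y) + τ) * (1 - τ / 4) ^ q = t * (C * (x + y) + τ) := by
        rw [ht]; ring
      linarith
    · have h2 := norm_sub_le_norm_sub_add_norm_sub (h (c₀ + ((1 - τ : ℝ) ^ 2 : ℂ) • e))
        (f (c₀ + ((1 - τ : ℝ) ^ 2 : ℂ) • e)) p
      rw [norm_sub_rev (h _) (f _)] at h2
      have h3 := h1.2
      have h4 : 72 ^ A * (2 * √(C * (x + y)) + τ) * (1 - τ / 4) ^ q =
        t * (2 * √(C * (x + y)) + τ) := by rw [ht]; ring
      linarith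
  have hxy : C * (x + y) ≤ C * (6 * K + 1) * τ := by
    rw [mul_assoc]; gcongr; linarith
  have hϑt : t * (C₄ + 2 * √C₄ + 1) ≤ ϑ := by
    calc t * (C₄ + 2 * √C₄ + 1) ≤ ϑ / (C₄ + 2 * √C₄ + 1) * (C₄ + 2 * √C₄ + 1) := by
          gcongr; exact htt.trans (min_le_right _ _)
      _ = ϑ := by field_simp
  have hsq := Real.sqrt_nonneg C₄
  refine fun ξ hξ hξ' b hb => ⟨(hcmp ξ hξ hξ' b hb).1.trans ?_, (hcmp ξ hξ hξ' b hb).2.trans ?_⟩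
  · calc 72 ^ A * (C * (x + y) + τ) * (1 - τ / 4) ^ q = t * (C * (x + y) + τ) := by rw [ht]; ring
      _ ≤ t * (C₄ * τ) := by gcongr; rw [hC₄]; linarith
      _ = t * C₄ * τ := by ring
      _ ≤ ϑ * τ := by
        gcongr
        refine le_trans ?_ hϑt
        gcongr
        linarith
  · have h1 : τ ≤ √τ := Real.le_sqrt_of_sq_le (pow_le_of_le_one hτ.le hτ1 two_ne_zero)
    have h2 : √(C * (x + y)) ≤ √C₄ * √τ := by
      rw [← Real.sqrt_mul hC₄0.le]
      refine Real.sqrt_le_sqrt (hxy.trans ?_)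
      rw [hC₄]; linarith
    calc 72 ^ A * (2 * √(C * (x + y)) + τ) * (1 - τ / 4) ^ q = t * (2 * √(C * (x + y)) + τ) := by
          rw [ht]; ring
      _ ≤ t * ((2 * √C₄ + 1) * √τ) := by gcongr; linarith
      _ = t * (2 * √C₄ + 1) * √τ := by ring
      _ ≤ ϑ * √τ := by
        gcongr
        refine le_trans ?_ hϑt
        gcongr
        linarith

end SmallComparison

section AnisotropicDerivative

variable {E V : Type*} [NormedAddCommGroup E] [InnerProductSpace ℂ E] [NormedAddCommGroup V]
  [NormedSpace ℂ V]

theorem add_sq_smul_add_smul_mem_ball {c₀ e v : E} (he : e ≠ 0) {τ : ℝ} (hτ : 0 < τ)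
    (hτ' : τ ≤ 1 / 2) (hv : inner ℂ e v = 0) (h4 : 4 * ‖v‖ ^ 2 ≤ τ * ‖e‖ ^ 2) :
    c₀ + ((1 - τ : ℝ) ^ 2 : ℂ) • e + v ∈ ball c₀ ‖e‖ := by
  refine add_smul_add_mem_ball hv ?_
  rw [norm_pow, Complex.norm_real, Real.norm_of_nonneg (by linarith), ← pow_mul]
  have he2 : 0 < ‖e‖ ^ 2 := by have := norm_pos_iff.2 he; positivity
  have h1 : (1 - τ) ^ (2 * 2) * ‖e‖ ^ 2 ≤ (1 - τ) * ‖e‖ ^ 2 := by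
    gcongr
    exact pow_le_of_le_one (by linarith) (by linarith) (by norm_num)
  have h2 := mul_pos hτ he2
  linarith

theorem norm_fderiv_apply_tangential_le {G : E → V} {c₀ e v : E} {τ B : ℝ} (he : e ≠ 0)
    (hd : DifferentiableOn ℂ G (ball c₀ ‖e‖)) (hτ : 0 < τ) (hτ' : τ ≤ 1 / 2)
    (hB : ∀ ξ, inner ℂ e ξ = 0 → 4 * ‖ξ‖ ^ 2 ≤ τ * ‖e‖ ^ 2 →
      ‖G (c₀ + ((1 - τ : ℝ) ^ 2 : ℂ) • e + ξ)‖ ≤ B) (hv : inner ℂ e v = 0) :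
    ‖fderiv ℂ G (c₀ + ((1 - τ : ℝ) ^ 2 : ℂ) • e) v‖ ≤ 4 * B / ‖e‖ / √τ * ‖v‖ := by
  have he0 := norm_pos_iff.2 he
  have hs : 0 < √τ := Real.sqrt_pos.2 hτ
  rcases eq_or_ne v 0 with rfl | hv0
  · simp
  have hv1 := norm_pos_iff.2 hv0
  have hξ : ∀ ζ : ℂ, ‖ζ‖ < √τ * ‖e‖ / (2 * ‖v‖) →
      inner ℂ e (ζ • v) = 0 ∧ 4 * ‖ζ • v‖ ^ 2 ≤ τ * ‖e‖ ^ 2 := by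
    intro ζ hζ
    refine ⟨by rw [inner_smul_right, hv, mul_zero], ?_⟩
    rw [lt_div_iff₀ (by positivity)] at hζ
    rw [norm_smul]
    calc 4 * (‖ζ‖ * ‖v‖) ^ 2 = (‖ζ‖ * (2 * ‖v‖)) ^ 2 := by ring
      _ ≤ (√τ * ‖e‖) ^ 2 := by gcongr
      _ = τ * ‖e‖ ^ 2 := by rw [mul_pow, Real.sq_sqrt hτ.le]
  refine (norm_fderiv_apply_le (r := √τ * ‖e‖ / (2 * ‖v‖)) (B := B) (by positivity)
    (fun ζ hζ => ?_) (fun ζ hζ => hB _ (hξ ζ hζ).1 (hξ ζ hζ).2)).trans_eq ?_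
  · exact hd.differentiableAt (isOpen_ball.mem_nhds
      (add_sq_smul_add_smul_mem_ball he hτ hτ' (hξ ζ hζ).1 (hξ ζ hζ).2))
  · field_simp
    ring

theorem norm_fderiv_apply_normal_le {G : E → V} {c₀ e : E} {τ B : ℝ} (he : e ≠ 0)
    (hd : DifferentiableOn ℂ G (ball c₀ ‖e‖)) (hτ : 0 < τ) (hτ' : τ ≤ 1 / 2)
    (hB : ∀ b : ℂ, ‖b - (1 - τ : ℝ)‖ ≤ τ / 4 → ‖G (c₀ + ((1 - τ : ℝ) * b) • e)‖ ≤ B) :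
    ‖fderiv ℂ G (c₀ + ((1 - τ : ℝ) ^ 2 : ℂ) • e) e‖ ≤ 16 * B / τ := by
  have he0 := norm_pos_iff.2 he
  have h1τ : 0 < 1 - τ := by linarith
  have hne : ((1 - τ : ℝ) : ℂ) ≠ 0 := by exact_mod_cast h1τ.ne'
  have hpt : ∀ ζ : ℂ, c₀ + ((1 - τ : ℝ) ^ 2 : ℂ) • e + ζ • e =
      c₀ + ((1 - τ : ℝ) * ((1 - τ : ℝ) + ζ / (1 - τ : ℝ)) : ℂ) • e := by
    intro ζ
    rw [add_assoc, ← add_smul, mul_add, mul_div_cancel₀ _ hne, pow_two]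
  refine (norm_fderiv_apply_le (r := τ / 8) (B := B) (by positivity)
    (fun ζ hζ => ?_) (fun ζ hζ => ?_)).trans_eq ?_
  · refine hd.differentiableAt (isOpen_ball.mem_nhds ?_)
    rw [mem_ball, dist_eq_norm, add_assoc, add_sub_cancel_left, ← add_smul, norm_smul]
    have h1 : ‖((1 - τ : ℝ) ^ 2 : ℂ) + ζ‖ < 1 := by
      refine (norm_add_le _ _).trans_lt ?_
      rw [norm_pow, Complex.norm_real, Real.norm_of_nonneg h1τ.le]
      have := pow_le_of_le_one h1τ.le (by linarith) two_ne_zero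
      linarith
    exact mul_lt_of_lt_one_left he0 h1
  · rw [hpt]
    refine hB _ ?_
    rw [add_sub_cancel_left, norm_div, Complex.norm_real, Real.norm_of_nonneg h1τ.le,
      div_le_iff₀ h1τ]
    have : τ / 4 * (1 / 2) ≤ τ / 4 * (1 - τ) := by gcongr; linarith
    linarith
  · field_simp
    ring

end AnisotropicDerivative

section NearIdentity

variable {E : Type*} [NormedAddCommGroup E] [NormedSpace ℂ E]

theorem norm_add_sq_smul_sub_le {p e : E} {τ : ℝ} (hτ : 0 < τ) (hτ' : τ ≤ 1) :
    ‖p - e + ((1 - τ : ℝ) ^ 2 : ℂ) • e - p‖ ≤ 2 * τ * ‖e‖ := by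
  have h1 : p - e + ((1 - τ : ℝ) ^ 2 : ℂ) • e - p = ((τ ^ 2 - 2 * τ : ℝ) : ℂ) • e := by
    have : ((1 - τ : ℝ) ^ 2 : ℂ) = ((τ ^ 2 - 2 * τ : ℝ) : ℂ) + 1 := by push_cast; ring
    rw [this, add_smul, one_smul]; abel
  rw [h1, norm_smul, Complex.norm_real, Real.norm_eq_abs]
  gcongr
  rw [abs_le]
  have h2 := pow_le_of_le_one hτ.le hτ' two_ne_zero
  have h3 := sq_nonneg τ
  constructor <;> linarith

theorem ball_add_sq_smul_subset {c₀ e : E} {τ : ℝ} (hτ : 0 < τ) (hτ' : τ ≤ 1) :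
    ball (c₀ + ((1 - τ : ℝ) ^ 2 : ℂ) • e) (τ * ‖e‖) ⊆ ball c₀ ‖e‖ := by
  refine ball_subset_ball' ?_
  rw [dist_eq_norm, add_sub_cancel_left, norm_smul, norm_pow, Complex.norm_real,
    Real.norm_of_nonneg (by linarith), ← add_mul]
  refine mul_le_of_le_one_left (norm_nonneg _) ?_
  have := pow_le_of_le_one (by linarith : 0 ≤ 1 - τ) (by linarith) two_ne_zero
  linarith

/-- A holomorphic map uniformly close to the identity has a derivative bounded below. -/
theorem norm_half_le_norm_fderiv {f : E → E} {z : E} {r ε : ℝ} (hr : 0 < r)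
    (hd : DifferentiableOn ℂ f (ball z r)) (hε : 4 * ε ≤ r)
    (hB : ∀ x ∈ ball z r, ‖f x - x‖ ≤ ε) (v : E) : ‖v‖ / 2 ≤ ‖fderiv ℂ f z v‖ := by
  have hfz := hd.differentiableAt (ball_mem_nhds z hr)
  have h1 := norm_fderiv_center_le hr (hd.sub differentiableOn_id) hB
  rw [fderiv_sub hfz differentiableAt_id, fderiv_id] at h1
  have h2 : ‖(fderiv ℂ f z - ContinuousLinearMap.id ℂ E) v‖ ≤ 1 / 2 * ‖v‖ := by
    refine (ContinuousLinearMap.le_opNorm _ _).trans ?_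
    gcongr
    refine h1.trans ?_
    rw [div_le_iff₀ hr]
    linarith
  rw [_root_.sub_apply, ContinuousLinearMap.id_apply, norm_sub_rev] at h2
  linarith [norm_sub_norm_le v (fderiv ℂ f z v)]

end NearIdentity

section Injectivity

variable {E : Type*} [NormedAddCommGroup E] [InnerProductSpace ℂ E] [FiniteDimensional ℂ E]

theorem IsPeakFunction.exists_injective_fderiv {L : E → ℂ} {X : Set E} {p e : E}
    {c δ : ℝ} (hP : IsPeakFunction L X p c δ) (hX : IsCompact X) (hpX : p ∈ X)
    (hball : ball (p - e) ‖e‖ ⊆ X) (hLe : fderiv ℂ L p e ≠ 0) :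
    ∃ M > 0, ∃ ε > 0, ∃ τ₁ > 0, ∀ (f h : E → E),
      DifferentiableOn ℂ f (ball (p - e) ‖e‖) → MapsTo f (ball (p - e) ‖e‖) X →
      DifferentiableOn ℂ h (ball (p - e) ‖e‖) → MapsTo h (ball (p - e) ‖e‖) X →
      ∀ (τ r : ℝ) (q : ℕ), 0 < τ → τ < τ₁ → τ ≤ r ^ 2 → 0 < r → r ≤ 1 / 4 → M ≤ q * τ →
      (∀ w, ‖w - (p - e)‖ ≤ 2 * r * ‖e‖ → ‖f w - h w‖ ≤ τ * r ^ q ∧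
        ‖L (f w) - L (h w)‖ ≤ τ * r ^ q) →
      (∀ w ∈ ball (p - e) ‖e‖, ‖w - p‖ ≤ 3 * ‖e‖ * τ → ‖f w - w‖ ≤ ε * τ) →
      Injective (fderiv ℂ h (p - e + ((1 - τ : ℝ) ^ 2 : ℂ) • e)) := by
  have he : e ≠ 0 := by rintro rfl; simp at hLe
  have he0 := norm_pos_iff.2 he
  obtain ⟨K, hK1, hK⟩ := hP.contDiff.exists_norm_sub_le hX.isBounded
  obtain ⟨C, hC1, hC⟩ := hP.exists_harnack_tangential hX
  have hK0 : 0 < K := by linarith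
  have hC0 : 0 < C := by linarith
  set d : ℝ := ‖fderiv ℂ L p e‖ with hd
  have hd0 : 0 < d := norm_pos_iff.2 hLe
  set Ks : ℝ := K * (3 * ‖e‖) + (3 * ‖e‖) ^ 2 with hKs
  have hKs0 : 0 < Ks := by positivity
  set C' : ℝ := 4 * (C * Ks) / ‖e‖ with hC'
  have hC'0 : 0 < C' := by positivity
  set D : ℝ := 2 * (C' + 1) / (d / 2) + 1 with hD
  have hD0 : 0 < D := by positivity
  set ϑ : ℝ := min (d / 64) (min (‖e‖ / 4) (1 / (4 * D * (16 + 4 / ‖e‖)))) with hϑ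
  have hϑ0 : 0 < ϑ := by positivity
  have hϑ1 : ϑ ≤ d / 64 := min_le_left _ _
  have hϑ2 : ϑ ≤ ‖e‖ / 4 := (min_le_right _ _).trans (min_le_left _ _)
  have hϑ3 : ϑ ≤ 1 / (4 * D * (16 + 4 / ‖e‖)) := (min_le_right _ _).trans (min_le_right _ _)
  obtain ⟨M, hM0, hM⟩ := hP.exists_comparison_small hX hKs0.le hϑ0
  have hcont : Tendsto (fun z => ‖fderiv ℂ L z e‖) (𝓝 p) (𝓝 d) :=
    ((hP.contDiff.continuous_fderiv_apply (by norm_num)).comp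
      (continuous_id.prodMk continuous_const)).norm.tendsto p
  obtain ⟨η, hη0, hη⟩ := Metric.eventually_nhds_iff.1
    (hcont.eventually (eventually_gt_nhds (show 3 / 4 * d < d by linarith)))
  refine ⟨M, hM0, min (‖e‖ / 4) (d / (8 * K)), by positivity, min (1 / 2) (η / (2 * ‖e‖)),
    by positivity, fun f h hfd hfX hhd hhX τ r q hτ hττ hτr hr hr' hMq hs hdrift => ?_⟩
  set ε := min (‖e‖ / 4) (d / (8 * K)) with hε
  have hε1 : ε ≤ ‖e‖ / 4 := min_le_left _ _
  have hε2 : ε ≤ d / (8 * K) := min_le_right _ _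
  have hε0 : 0 < ε := by positivity
  have hτ2 : τ ≤ 1 / 2 := (hττ.trans_le (min_le_left _ _)).le
  have hτ3 : 2 * τ * ‖e‖ < η := by
    have := hττ.trans_le (min_le_right _ _)
    rw [lt_div_iff₀ (by positivity)] at this
    linarith
  have hs0 : 0 < √τ := Real.sqrt_pos.2 hτ
  have hss : √τ * √τ = τ := Real.mul_self_sqrt hτ.le
  set z := p - e + ((1 - τ : ℝ) ^ 2 : ℂ) • e with hz
  have hzp : ‖z - p‖ ≤ 2 * τ * ‖e‖ := norm_add_sq_smul_sub_le hτ (by linarith)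
  have hρ : 0 < τ * ‖e‖ := by positivity
  have hsub : ball z (τ * ‖e‖) ⊆ ball (p - e) ‖e‖ := ball_add_sq_smul_subset hτ (by linarith)
  have hzB : z ∈ ball (p - e) ‖e‖ := hsub (mem_ball_self hρ)
  have hdr : ∀ w ∈ ball z (τ * ‖e‖), ‖f w - w‖ ≤ ε * τ := by
    intro w hw
    refine hdrift w (hsub hw) ?_
    rw [mem_ball, dist_eq_norm] at hw
    linarith [norm_sub_le_norm_sub_add_norm_sub w z p]
  have hLd : Differentiable ℂ L := hP.contDiff.differentiable (by norm_num)
  have hLfd : DifferentiableOn ℂ (L ∘ f) (ball (p - e) ‖e‖) := hLd.comp_differentiableOn hfd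
  have hLhd : DifferentiableOn ℂ (L ∘ h) (ball (p - e) ‖e‖) := hLd.comp_differentiableOn hhd
  have hnb : ball (p - e) ‖e‖ ∈ 𝓝 z := isOpen_ball.mem_nhds hzB
  have hfz := hfd.differentiableAt hnb
  have hhz := hhd.differentiableAt hnb
  have hLfz := hLfd.differentiableAt hnb
  have hLhz := hLhd.differentiableAt hnb
  have hx : peakSize L p (f z) ≤ Ks * τ := by
    have h1 : ‖f z - p‖ ≤ 3 * ‖e‖ * τ := by
      have h2 := hdr z (mem_ball_self hρ)
      have h3 : ε * τ ≤ ‖e‖ / 4 * τ := by gcongr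
      linarith [norm_sub_le_norm_sub_add_norm_sub (f z) z p]
    have h2 := hK (f z) (hfX hzB) p hpX
    rw [hP.map_point, sub_zero] at h2
    have h3 : K * ‖f z - p‖ ≤ K * (3 * ‖e‖ * τ) := by gcongr
    have h4 : ‖f z - p‖ ^ 2 ≤ (3 * ‖e‖ * τ) ^ 2 := by gcongr
    have h5 : (3 * ‖e‖ * τ) ^ 2 ≤ (3 * ‖e‖) ^ 2 * τ := by
      rw [mul_pow]
      gcongr
      exact pow_le_of_le_one hτ.le (by linarith) two_ne_zero
    unfold peakSize
    rw [hKs]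
    linarith
  have hcmp := hM (p - e) e f h he hfd hfX hhd hhX τ r q hτ hτr hr hr' hMq hx hs
  have hcmpT : ∀ ξ, inner ℂ e ξ = 0 → 4 * ‖ξ‖ ^ 2 ≤ τ * ‖e‖ ^ 2 →
      ‖L (f (z + ξ)) - L (h (z + ξ))‖ ≤ ϑ * τ ∧ ‖f (z + ξ) - h (z + ξ)‖ ≤ ϑ * √τ := by
    intro ξ hξ hξ'
    have := hcmp ξ hξ hξ' (1 - τ : ℝ) (by rw [sub_self, norm_zero]; positivity)
    rwa [← pow_two] at this
  have hcmpN : ∀ b : ℂ, ‖b - (1 - τ : ℝ)‖ ≤ τ / 4 →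
      ‖L (f (p - e + ((1 - τ : ℝ) * b) • e)) - L (h (p - e + ((1 - τ : ℝ) * b) • e))‖ ≤ ϑ * τ ∧
      ‖f (p - e + ((1 - τ : ℝ) * b) • e) - h (p - e + ((1 - τ : ℝ) * b) • e)‖ ≤ ϑ * √τ := by
    intro b hb
    have := hcmp 0 (inner_zero_right e) (by simp; positivity) b hb
    rwa [add_zero] at this
  have hdiv : ∀ x : ℝ, x * √τ / τ = x / √τ := fun x => by
    rw [div_eq_div_iff hτ.ne' hs0.ne', mul_assoc, hss]
  refine injective_of_anisotropic_estimates (e := e) (T := fderiv ℂ f z)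
    (f := fderiv ℂ (L ∘ f) z) (h := fderiv ℂ (L ∘ h) z) (c := d / 2) (C := C') (s := √τ)
    (η := ϑ * (16 + 4 / ‖e‖)) he (by positivity) hC'0.le hs0 (by positivity) ?_ ?_ ?_ ?_ ?_ ?_ ?_
    ?_ ?_
  · rw [← hD]
    calc ϑ * (16 + 4 / ‖e‖) * D ≤ 1 / (4 * D * (16 + 4 / ‖e‖)) * (16 + 4 / ‖e‖) * D := by gcongr
      _ = 1 / 4 := by
        have : 16 + 4 / ‖e‖ ≠ 0 := by positivity
        field_simp
      _ < 1 / 2 := by norm_num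
  · refine norm_half_le_norm_fderiv hρ (hfd.mono hsub) ?_ hdr
    have : ε * τ ≤ ‖e‖ / 4 * τ := by gcongr
    linarith
  · intro v hv
    rw [fderiv_comp z (hLd _) hhz, ContinuousLinearMap.comp_apply, hv, map_zero]
  · have h1 : ‖fderiv ℂ (fun w => (L ∘ f) w - L w) z‖ ≤ 2 * (K * (ε * τ)) / (τ * ‖e‖) := by
      refine norm_fderiv_center_le hρ ((hLfd.mono hsub).sub hLd.differentiableOn) fun w hw => ?_
      refine (hK _ (hfX (hsub hw)) _ (hball (hsub hw))).trans ?_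
      gcongr
      exact hdr w hw
    have h2 : ‖fderiv ℂ (fun w => (L ∘ f) w - L w) z e‖ ≤ d / 4 := by
      refine (ContinuousLinearMap.le_opNorm _ _).trans ?_
      calc _ ≤ 2 * (K * (ε * τ)) / (τ * ‖e‖) * ‖e‖ := by gcongr
        _ = 2 * K * ε := by field_simp
        _ ≤ 2 * K * (d / (8 * K)) := by gcongr
        _ = d / 4 := by field_simp; norm_num
    rw [fderiv_fun_sub hLfz (hLd _), _root_.sub_apply, norm_sub_rev] at h2
    have h3 : 3 / 4 * d < ‖fderiv ℂ L z e‖ := hη (by rw [dist_eq_norm]; linarith)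
    linarith [norm_sub_norm_le (fderiv ℂ L z e) (fderiv ℂ (L ∘ f) z e)]
  · intro v hv
    refine (norm_fderiv_apply_tangential_le (B := C * (Ks * τ)) he hLfd hτ hτ2
      (fun ξ hξ hξ' => ?_) hv).trans_eq ?_
    · refine le_trans ?_ ((hC (p - e) e f hfd hfX he τ hτ hτ2 ξ hξ hξ').trans
        (mul_le_mul_of_nonneg_left hx hC0.le))
      exact le_add_of_nonneg_right (sq_nonneg _)
    · congr 1
      rw [hC', div_eq_iff hs0.ne', mul_assoc, hss]
      ring
  · rw [← fderiv_sub hLfz hLhz]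
    refine (norm_fderiv_apply_normal_le he (hLfd.sub hLhd) hτ hτ2
      (fun b hb => (hcmpN b hb).1)).trans ?_
    rw [div_le_iff₀ hτ]
    have : ϑ * τ ≤ d / 64 * τ := by gcongr
    linarith
  · intro v hv
    rw [← fderiv_sub hLfz hLhz]
    refine (norm_fderiv_apply_tangential_le he (hLfd.sub hLhd) hτ hτ2
      (fun ξ hξ hξ' => (hcmpT ξ hξ hξ').1) hv).trans ?_
    gcongr
    rw [div_div, div_le_iff₀ (by positivity)]
    have h1 : ϑ * τ ≤ ‖e‖ / 4 * τ := by gcongr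
    have h2 : √τ * (‖e‖ * √τ) = ‖e‖ * (√τ * √τ) := by ring
    rw [h2, hss]
    linarith
  · rw [← fderiv_sub hfz hhz]
    refine (norm_fderiv_apply_normal_le he (hfd.sub hhd) hτ hτ2
      (fun b hb => (hcmpN b hb).2)).trans ?_
    have : 0 < ϑ * (4 / ‖e‖) := by positivity
    rw [← mul_assoc, hdiv]
    exact div_le_div_of_nonneg_right (by linarith) hs0.le
  · intro v hv
    rw [← fderiv_sub hfz hhz]
    refine (norm_fderiv_apply_tangential_le he (hfd.sub hhd) hτ hτ2
      (fun ξ hξ hξ' => (hcmpT ξ hξ hξ').2) hv).trans ?_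
    gcongr
    have h1 : 4 * (ϑ * √τ) / ‖e‖ / √τ = ϑ * (4 / ‖e‖) := by field_simp
    rw [h1]
    linarith

end Injectivity

section LimitIsIdentity

theorem exists_nat_scales {r D : ℝ} (hr : 0 < r) (hD : 0 ≤ D) :
    ∃ t : ℕ, ∀ M : ℝ, 0 < M → ∃ τ₂ : ℝ, 0 < τ₂ ∧ ∀ τ : ℝ, 0 < τ → τ < τ₂ →
      ∃ q : ℕ, M ≤ q * τ ∧ q * τ ≤ M + 1 ∧ D * (1 / 2) ^ (t * q) ≤ τ * r ^ q := by
  obtain ⟨t, ht⟩ := exists_pow_lt_of_lt_one (show 0 < r / 2 by positivity)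
    (by norm_num : (1 / 2 : ℝ) < 1)
  refine ⟨t, fun M hM => ?_⟩
  have hlim : Tendsto (fun q : ℕ => (D / M + D) * ((q : ℝ) * (1 / 2) ^ q)) atTop (𝓝 0) := by
    simpa using (tendsto_self_mul_const_pow_of_lt_one (r := (1 / 2 : ℝ)) (by norm_num)
      (by norm_num)).const_mul (D / M + D)
  obtain ⟨Q, hQ⟩ := eventually_atTop.1 (hlim.eventually (eventually_lt_nhds one_pos))
  refine ⟨min 1 (M / (Q + 1)), by positivity, fun τ hτ hττ => ⟨⌈M / τ⌉₊, ?_, ?_, ?_⟩⟩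
  · exact (div_le_iff₀ hτ).1 (Nat.le_ceil _)
  · have h1 := (Nat.ceil_lt_add_one (div_pos hM hτ).le).le
    have h2 : τ ≤ 1 := (hττ.trans_le (min_le_left _ _)).le
    calc (⌈M / τ⌉₊ : ℝ) * τ ≤ (M / τ + 1) * τ := by gcongr
      _ = M + τ := by field_simp
      _ ≤ M + 1 := by gcongr
  · set q := ⌈M / τ⌉₊ with hq
    have hMq : M ≤ q * τ := (div_le_iff₀ hτ).1 (Nat.le_ceil _)
    have hτ2 : τ < M / (Q + 1) := hττ.trans_le (min_le_right _ _)
    have hQq : Q ≤ q := by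
      rw [lt_div_iff₀ (by positivity)] at hτ2
      have : (Q : ℝ) * τ ≤ q * τ := by linarith
      exact_mod_cast le_of_mul_le_mul_right this hτ
    have h1 : (D / M + D) * ((q : ℝ) * (1 / 2) ^ q) ≤ 1 := (hQ q hQq).le
    have h2 : D * (1 / 2) ^ q ≤ τ := by
      have e1 : D / M * M = D := div_mul_cancel₀ _ hM.ne'
      have e2 : D * (1 / 2) ^ q ≤ D / M * (q * τ) * (1 / 2) ^ q := by
        rw [← e1]; gcongr ?_ * _
        rw [mul_div_cancel_right₀ _ hM.ne']; gcongr
      have e3 : 0 ≤ D * ((q : ℝ) * (1 / 2) ^ q) := by positivity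
      calc D * (1 / 2) ^ q ≤ D / M * (q * τ) * (1 / 2) ^ q := e2
        _ = (D / M * (q * (1 / 2) ^ q)) * τ := by ring
        _ ≤ 1 * τ := by gcongr; linarith
        _ = τ := one_mul _
    calc D * (1 / 2) ^ (t * q) = D * ((1 / 2) ^ t) ^ q := by rw [pow_mul]
      _ ≤ D * (r / 2) ^ q := by gcongr
      _ = D * (1 / 2) ^ q * r ^ q := by rw [mul_assoc, ← mul_pow]; congr 2; ring
      _ ≤ τ * r ^ q := by gcongr

variable {E : Type*} [NormedAddCommGroup E] [NormedSpace ℂ E] [FiniteDimensional ℂ E]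

/-- A limit of iterates which is a submersion somewhere is the identity. -/
theorem IsIterateLimit.eq_self_of_surjective {F g : E → E} {Ω : Set E} {U : Ultrafilter ℕ}
    (h : IsIterateLimit F Ω U g) (hΩ : IsOpen Ω) (hc : IsPreconnected Ω)
    (hb : Bornology.IsBounded Ω) (hF : DifferentiableOn ℂ F Ω) (hFΩ : MapsTo F Ω Ω) {x : E}
    (hx : x ∈ Ω) (hsurj : Surjective (fderiv ℂ g x)) : ∀ z ∈ Ω, g z = z := by
  have : CompleteSpace E := FiniteDimensional.complete ℂ E
  obtain ⟨B, hB⟩ := hb.exists_norm_le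
  have hgd := h.differentiableOn hΩ hb hF hFΩ
  obtain ⟨r, hr, hball⟩ := Metric.isOpen_iff.1 hΩ x hx
  have hst := hasStrictFDerivAt_of_differentiableOn_of_norm_le hr (hgd.mono hball)
    (fun y hy => h.norm_le hB (hball hy))
  have hmap := hst.map_nhds_eq_of_surj (LinearMap.range_eq_top.2 hsurj)
  have hN : g '' Ω ∈ 𝓝 (g x) := by
    rw [← hmap]; exact image_mem_map (hΩ.mem_nhds hx)
  obtain ⟨y, hy, hyΩ⟩ := mem_closure_iff.1 (h.mem_closure x hx) _ isOpen_interior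
    (mem_interior_iff_mem_nhds.2 hN)
  have hid : ∀ᶠ w in 𝓝 y, g w - w = 0 := by
    filter_upwards [mem_interior_iff_mem_nhds.1 hy, hΩ.mem_nhds hyΩ] with w hw hwΩ
    obtain ⟨u, hu, rfl⟩ := hw
    rw [h.idem u hu hwΩ, sub_self]
  have key := eqOn_zero_of_eventuallyEq_zero (B := 2 * B) hΩ hc (hgd.sub differentiableOn_id)
    (fun w hw => by
      rw [Pi.sub_apply, id]
      linarith [norm_sub_le (g w) w, hB w hw, h.norm_le hB hw]) hyΩ hid
  exact fun z hz => sub_eq_zero.1 (key z hz)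

end LimitIsIdentity

section LimitIsIdentity

variable {E : Type*} [NormedAddCommGroup E] [InnerProductSpace ℂ E] [FiniteDimensional ℂ E]

/-- The limit of iterates of a map fixing an interior point and tangent to the identity of order
two at a peak point is the identity. -/
theorem IsIterateLimit.eq_self {F g : E → E} {Ω : Set E} {U : Ultrafilter ℕ}
    (h : IsIterateLimit F Ω U g) (hΩ : IsOpen Ω) (hc : IsPreconnected Ω)
    (hb : Bornology.IsBounded Ω) (hF : DifferentiableOn ℂ F Ω) (hFΩ : MapsTo F Ω Ω) {z₀ : E}
    (hz₀ : z₀ ∈ Ω) (hfix : F z₀ = z₀) {L : E → ℂ} {p e : E} {c δ : ℝ}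
    (hP : IsPeakFunction L Ω p c δ) (hp : p ∈ closure Ω)
    (hball : ball (p - e) ‖e‖ ⊆ Ω) (hLe : fderiv ℂ L p e ≠ 0)
    (ho : ∀ ε > 0, ∃ η > 0, ∀ z ∈ Ω, ‖z - p‖ < η → ‖F z - z‖ ≤ ε * ‖z - p‖ ^ 2) :
    ∀ z ∈ Ω, g z = z := by
  have : ProperSpace E := FiniteDimensional.proper ℂ E
  have he : e ≠ 0 := by rintro rfl; simp at hLe
  have he0 := norm_pos_iff.2 he
  have hX : IsCompact (closure Ω) := hb.isCompact_closure
  obtain ⟨B, hB⟩ := hb.exists_norm_le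
  have hB0 : 0 ≤ B := (norm_nonneg _).trans (hB z₀ hz₀)
  have hgd := h.differentiableOn hΩ hb hF hFΩ
  obtain ⟨K, hK1, hK⟩ := hP.contDiff.exists_norm_sub_le hX.isBounded
  obtain ⟨M, hM, ε, hε, τ₁, hτ₁, hinj⟩ := hP.closure.exists_injective_fderiv hX hp
    (hball.trans subset_closure) hLe
  obtain ⟨R, hR, m, hm, hdec⟩ := h.decaysAt hΩ hc hb hF hFΩ hB hz₀ hfix (p - e)
    (hball (mem_ball_self he0))
  set r : ℝ := min (1 / 4) (R / (4 * ‖e‖)) with hr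
  have hr0 : 0 < r := by positivity
  have hrR : 2 * r * ‖e‖ < R := by
    have h1 : r * (4 * ‖e‖) ≤ R := (le_div_iff₀ (by positivity)).1 (min_le_right _ _)
    linarith
  obtain ⟨t, ht⟩ := exists_nat_scales hr0 (show 0 ≤ K * (2 * B) by positivity)
  obtain ⟨τ₂, hτ₂, hq⟩ := ht M hM
  obtain ⟨τ₀, hτ₀, hdrift⟩ := exists_norm_iterate_sub_le hFΩ ho
    (show 0 < 3 * ‖e‖ by positivity) (show 0 < ((m * t : ℕ) : ℝ) * (M + 1) + 1 by positivity) hε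
  obtain ⟨τ, hτ, hτm⟩ := exists_between (show 0 < min (min τ₀ τ₁) (min τ₂ (r ^ 2)) by positivity)
  have hτ0 : τ < τ₀ := hτm.trans_le ((min_le_left _ _).trans (min_le_left _ _))
  have hτ1 : τ < τ₁ := hτm.trans_le ((min_le_left _ _).trans (min_le_right _ _))
  have hτ2 : τ < τ₂ := hτm.trans_le ((min_le_right _ _).trans (min_le_left _ _))
  have hτr : τ ≤ r ^ 2 := (hτm.trans_le ((min_le_right _ _).trans (min_le_right _ _))).le
  obtain ⟨q, hMq, hqM, hsmall⟩ := hq τ hτ hτ2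
  set k := m * (t * q) with hk
  have hkM : (k : ℝ) * τ ≤ ((m * t : ℕ) : ℝ) * (M + 1) + 1 := by
    have h1 : (k : ℝ) * τ = ((m * t : ℕ) : ℝ) * (q * τ) := by rw [hk]; push_cast; ring
    have h2 : ((m * t : ℕ) : ℝ) * (q * τ) ≤ ((m * t : ℕ) : ℝ) * (M + 1) := by gcongr
    linarith
  have hFk := hF.iterate' hFΩ k
  have hFkm : MapsTo F^[k] Ω Ω := hFΩ.iterate k
  have hr4 : r ≤ 1 / 4 := min_le_left _ _
  have hi := hinj F^[k] (g ∘ F^[k]) (hFk.mono hball)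
    (fun w hw => subset_closure (hFkm (hball hw)))
    ((hgd.comp hFk hFkm).mono hball) (fun w hw => h.mem_closure _ (hFkm (hball hw)))
    τ r q hτ hτ1 hτr hr0 hr4 hMq (fun w hw => ?_)
    (fun w hw hwp => hdrift τ hτ hτ0 w (hball hw) hwp k hkM)
  · have hzB : p - e + ((1 - τ : ℝ) ^ 2 : ℂ) • e ∈ Ω := by
      have hτ1' : τ ≤ 1 := hτr.trans (pow_le_one₀ hr0.le (by linarith))
      exact hball (ball_add_sq_smul_subset hτ hτ1' (mem_ball_self (by positivity)))
    have hfz := hFk.differentiableAt (hΩ.mem_nhds hzB)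
    have hgz := hgd.differentiableAt (hΩ.mem_nhds (hFkm hzB))
    refine h.eq_self_of_surjective hΩ hc hb hF hFΩ (hFkm hzB) ?_
    rw [fderiv_comp _ hgz hfz] at hi
    have hs : Surjective ((fderiv ℂ g (F^[k] (p - e + ((1 - τ : ℝ) ^ 2 : ℂ) • e))).comp
      (fderiv ℂ F^[k] (p - e + ((1 - τ : ℝ) ^ 2 : ℂ) • e))) :=
      LinearMap.injective_iff_surjective.1 hi
    exact Surjective.of_comp hs
  · have hwR : w ∈ ball (p - e) R := by rw [mem_ball, dist_eq_norm]; linarith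
    have hwe : w ∈ Ω := hball (by
      rw [mem_ball, dist_eq_norm]
      have : 2 * r * ‖e‖ ≤ 2 * (1 / 4) * ‖e‖ := by gcongr
      linarith)
    have h1 := hdec w hwR (t * q)
    have h2 : K * ‖F^[k] w - g (F^[k] w)‖ ≤ τ * r ^ q := by
      refine le_trans ?_ hsmall
      rw [mul_assoc]
      gcongr
    refine ⟨le_trans (le_mul_of_one_le_left (norm_nonneg _) hK1) h2, le_trans ?_ h2⟩
    exact hK _ (subset_closure (hFkm hwe)) _ (h.mem_closure _ (hFkm hwe))

end LimitIsIdentity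

section Eigenfunctions

variable {E V : Type*} [NormedAddCommGroup E] [NormedSpace ℂ E] [NormedAddCommGroup V]
  [NormedSpace ℂ V]

/-- An eigenfunction of composition with a map close to the identity is small. -/
theorem norm_le_pow_of_comp_eq_smul {F : E → E} {f : E → V} {z : E} {R B ε s : ℝ} {μ : ℂ}
    (hμ : μ ≠ 1) (hd : DifferentiableOn ℂ f (ball z R)) (hB : ∀ w ∈ ball z R, ‖f w‖ ≤ B)
    (heq : ∀ w ∈ ball z R, f (F w) = μ • f w) (hF : ∀ w ∈ ball z R, ‖F w - w‖ ≤ ε)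
    (hεs : ε < s) (hμs : 4 * ε ≤ ‖μ - 1‖ * s) (hs : 0 < s) (m : ℕ) :
    ∀ w ∈ ball z (R - m * s), ‖f w‖ ≤ B * (1 / 2) ^ m := by
  have hμ0 : 0 < ‖μ - 1‖ := norm_pos_iff.2 (sub_ne_zero.2 hμ)
  induction m with
  | zero => intro w hw; simpa using hB w (by simpa using hw)
  | succ m ih =>
    intro w hw
    push_cast at hw
    have hsub : ball w s ⊆ ball z (R - m * s) := ball_subset_ball' (by
      rw [mem_ball] at hw; linarith)
    have hsubR : ball z (R - m * s) ⊆ ball z R := ball_subset_ball (by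
      have : 0 ≤ m * s := by positivity
      linarith)
    have hwR := hsubR (hsub (mem_ball_self hs))
    have h1 := norm_sub_center_le (hd.mono (hsub.trans hsubR)) (fun x hx => ih x (hsub hx))
      (w := F w) (by rw [mem_ball, dist_eq_norm]; exact (hF w hwR).trans_lt hεs)
    have h2 : f (F w) - f w = (μ - 1) • f w := by rw [heq w hwR, sub_smul, one_smul]
    have hS : 0 ≤ B * (1 / 2) ^ m := (norm_nonneg _).trans (ih w (hsub (mem_ball_self hs)))
    rw [h2, norm_smul] at h1
    refine le_of_mul_le_mul_left (h1.trans ?_) hμ0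
    calc 2 * (B * (1 / 2) ^ m) / s * ‖F w - w‖ ≤ 2 * (B * (1 / 2) ^ m) / s * ε := by
          gcongr; exact hF w hwR
      _ = B * (1 / 2) ^ m / (2 * s) * (4 * ε) := by field_simp; ring
      _ ≤ B * (1 / 2) ^ m / (2 * s) * (‖μ - 1‖ * s) := by gcongr
      _ = ‖μ - 1‖ * (B * (1 / 2) ^ (m + 1)) := by rw [pow_succ]; field_simp

/-- A bounded holomorphic map on the disc that is very small near points tending to `1` along the
radius vanishes. -/
theorem eq_zero_of_small_near_one {f : ℂ → V} {B r : ℝ} (hr : 0 < r) (hr1 : r < 1)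
    (hd : DifferentiableOn ℂ f (ball 0 1)) (hB : ∀ ζ : ℂ, ‖ζ‖ < 1 → ‖f ζ‖ ≤ B)
    (hs : ∀ K : ℝ, ∃ τ : ℝ, 0 < τ ∧ τ ≤ 1 ∧ ∃ P : ℕ, K ≤ P * τ ∧ ∀ ζ : ℂ, ‖ζ‖ < 1 →
      ‖ζ - (1 - τ : ℝ)‖ ≤ 2 * τ * r / (1 - r) → ‖f ζ‖ ≤ B * r ^ P) {ζ : ℂ} (hζ : ‖ζ‖ < 1) :
    f ζ = 0 := by
  have hB0 : 0 ≤ B := (norm_nonneg _).trans (hB ζ hζ)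
  have hζ2 : ‖ζ‖ ^ 2 < 1 := pow_lt_one₀ (norm_nonneg _) hζ two_ne_zero
  set κ : ℝ := min ((1 - ‖ζ‖ ^ 2) / 8) (-Real.log r) with hκ
  have hκ0 : 0 < κ := lt_min (by linarith) (by linarith [Real.log_neg hr hr1])
  have key : ∀ K : ℝ, ‖f ζ‖ ≤ B * Real.exp (-(κ * K)) := by
    intro K
    obtain ⟨τ, hτ, hτ1, P, hP, hsm⟩ := hs K
    set a : ℝ := 1 - τ with ha
    have haa : |a| < 1 := by rw [abs_of_nonneg (by linarith)]; linarith
    have haa' : |-a| < 1 := by rwa [abs_neg]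
    set w : ℂ := (ζ + (-a : ℝ)) / (1 + (-a : ℝ) * ζ) with hw
    obtain ⟨hne, hw1⟩ := norm_moebius_lt_one haa' hζ
    have hpos : 0 < ‖1 + (-a : ℝ) * ζ‖ := norm_pos_iff.2 hne
    set G : ℂ → V := fun w => f ((w + a) / (1 + a * w)) with hG
    have hGd : DifferentiableOn ℂ G (ball 0 1) := by
      have h1 : DifferentiableOn ℂ (fun w : ℂ => (w + a) / (1 + a * w)) (ball 0 1) :=
        DifferentiableOn.div (by fun_prop) (by fun_prop) fun w hw =>
          (norm_moebius_lt_one haa (by simpa using hw)).1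
      exact hd.comp h1 fun w hw => by
        simpa using (norm_moebius_lt_one haa (w := w) (by simpa using hw)).2
    have hGw : G w = f ζ := by
      have h1 : (1 : ℂ) + (-a : ℝ) * ζ ≠ 0 := hne
      have h2 : 1 + a * w = (1 - a ^ 2) / (1 + (-a : ℝ) * ζ) := by
        rw [hw, eq_div_iff h1, add_mul, mul_assoc, div_mul_cancel₀ _ h1]
        push_cast; ring
      have h3 : w + a = (1 - a ^ 2) * ζ / (1 + (-a : ℝ) * ζ) := by
        rw [hw, eq_div_iff h1, add_mul, div_mul_cancel₀ _ h1]
        push_cast; ring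
      have h4 : (1 - a ^ 2 : ℂ) ≠ 0 := by
        have : 1 - a ^ 2 ≠ 0 := by
          have := (sq_lt_one_iff_abs_lt_one a).2 haa
          linarith
        exact_mod_cast this
      simp only [hG]
      rw [h2, h3, div_div_div_cancel_right₀ h1, mul_div_cancel_left₀ _ h4]
    have hsmall : ∀ v : ℂ, ‖v‖ ≤ r → ‖G v‖ ≤ B * r ^ P := by
      intro v hv
      have hv1 : ‖v‖ < 1 := hv.trans_lt hr1
      obtain ⟨hne', hlt'⟩ := norm_moebius_lt_one haa hv1
      refine hsm _ hlt' ?_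
      have h1 : (v + a) / (1 + a * v) - (a : ℝ) = (1 - a ^ 2 : ℝ) * v / (1 + a * v) := by
        rw [eq_div_iff hne', sub_mul, div_mul_cancel₀ _ hne']
        push_cast; ring
      have h2 : 1 - r ≤ ‖1 + a * v‖ := by
        have e1 := norm_sub_norm_le (1 : ℂ) (-(a * v))
        rw [norm_neg, norm_mul, Complex.norm_real, norm_one, sub_neg_eq_add, Real.norm_eq_abs] at e1
        have e2 : |a| * ‖v‖ ≤ 1 * r := by gcongr
        linarith
      have h3 : 1 - a ^ 2 = 2 * τ - τ ^ 2 := by rw [ha]; ring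
      have h4 : τ ^ 2 ≤ τ := pow_le_of_le_one hτ.le hτ1 two_ne_zero
      have h5 := sq_nonneg τ
      rw [h1, norm_div, norm_mul, Complex.norm_real, h3, Real.norm_of_nonneg (by linarith)]
      have h6 : 0 < 1 - r := by linarith
      gcongr
      linarith
    have hmax : ‖f ζ‖ ≤ B * (max r ‖w‖) ^ P := by
      rw [← hGw]
      rcases le_total ‖w‖ r with hwr | hwr
      · refine (hsmall w hwr).trans ?_
        gcongr
        exact le_max_left _ _
      · have h1 := norm_le_pow_of_norm_le_on_small_disc (f := G) (R := 1) (p := P) hr hGd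
          (fun v hv => hB _ (norm_moebius_lt_one haa hv).2) (by simpa using hsmall) hwr hw1
        rw [div_one] at h1
        refine h1.trans ?_
        gcongr
        exact le_max_right _ _
    refine hmax.trans ?_
    gcongr
    have hwe : ‖w‖ ≤ Real.exp (-(κ * τ)) := by
      have h1 := norm_one_add_sq_sub (-a) ζ
      have h2 : ‖w‖ ^ 2 = ‖ζ + (-a : ℝ)‖ ^ 2 / ‖1 + (-a : ℝ) * ζ‖ ^ 2 := by
        rw [hw, norm_div, div_pow]
      have h3 : ‖1 + (-a : ℝ) * ζ‖ ^ 2 ≤ 4 := by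
        have e1 := norm_add_le (1 : ℂ) ((-a : ℝ) * ζ)
        rw [norm_mul, Complex.norm_real, norm_one, Real.norm_eq_abs] at e1
        have e2 : |-a| * ‖ζ‖ ≤ 1 * 1 := by gcongr
        calc ‖1 + (-a : ℝ) * ζ‖ ^ 2 ≤ 2 ^ 2 := by gcongr; linarith
          _ = 4 := by norm_num
      have h4 : τ ≤ 1 - (-a) ^ 2 := by
        have e1 : 1 - (-a) ^ 2 = 2 * τ - τ ^ 2 := by rw [ha]; ring
        have e2 : τ ^ 2 ≤ τ := pow_le_of_le_one hτ.le hτ1 two_ne_zero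
        linarith
      have h5 : τ * (1 - ‖ζ‖ ^ 2) ≤ (1 - (-a) ^ 2) * (1 - ‖ζ‖ ^ 2) := by
        have : 0 ≤ 1 - ‖ζ‖ ^ 2 := by linarith
        gcongr
      have h6 : κ ≤ (1 - ‖ζ‖ ^ 2) / 8 := min_le_left _ _
      have h7 : 8 * (κ * τ) ≤ τ * (1 - ‖ζ‖ ^ 2) := by
        have := mul_le_mul_of_nonneg_right h6 hτ.le
        linarith
      have h8 : ‖w‖ ^ 2 ≤ 1 - 2 * (κ * τ) := by
        rw [h2, div_le_iff₀ (by positivity)]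
        have e1 : 2 * (κ * τ) * ‖1 + (-a : ℝ) * ζ‖ ^ 2 ≤ 2 * (κ * τ) * 4 := by gcongr
        linarith
      have h9 : ‖w‖ ^ 2 ≤ Real.exp (-(κ * τ)) ^ 2 := by
        rw [← Real.exp_nat_mul]
        have := Real.add_one_le_exp (((2 : ℕ) : ℝ) * -(κ * τ))
        push_cast at this ⊢
        linarith
      exact le_of_sq_le_sq h9 (Real.exp_pos _).le
    have hre : r ≤ Real.exp (-(κ * τ)) := by
      rw [← Real.log_le_iff_le_exp hr]
      have h1 : κ ≤ -Real.log r := min_le_right _ _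
      have h2 : κ * τ ≤ κ * 1 := by gcongr
      linarith
    calc (max r ‖w‖) ^ P ≤ Real.exp (-(κ * τ)) ^ P := by
          gcongr; exact max_le hre hwe
      _ = Real.exp (-(κ * (P * τ))) := by rw [← Real.exp_nat_mul]; congr 1; ring
      _ ≤ Real.exp (-(κ * K)) := by gcongr
  have hlim : Tendsto (fun K : ℝ => B * Real.exp (-(κ * K))) atTop (𝓝 (B * 0)) :=
    (Real.tendsto_exp_neg_atTop_nhds_zero.comp
      (tendsto_id.const_mul_atTop hκ0)).const_mul _
  rw [mul_zero] at hlim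
  exact norm_le_zero_iff.1 (ge_of_tendsto' hlim key)

end Eigenfunctions

section Slices

variable {E V : Type*} [NormedAddCommGroup E] [InnerProductSpace ℂ E] [NormedAddCommGroup V]
  [NormedSpace ℂ V]

theorem norm_add_one_sub_smul_sq {e u : E} (hu : inner ℂ e u = -((‖u‖ ^ 2 : ℝ) : ℂ)) (ζ : ℂ) :
    ‖e + (1 - ζ) • u‖ ^ 2 = ‖e‖ ^ 2 - (1 - ‖ζ‖ ^ 2) * ‖u‖ ^ 2 := by
  generalize hq : ‖u‖ ^ 2 = q at *
  rw [@norm_add_sq ℂ, inner_smul_right, hu, norm_smul, mul_pow, Complex.sq_norm, Complex.sq_norm,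
    Complex.normSq_apply, Complex.normSq_apply, hq]
  simp
  ring

/-- Every point of a ball lies on a linear disc through a given boundary point. -/
theorem exists_slice {p e w : E} (hw : w ∈ ball (p - e) ‖e‖) :
    ∃ (u : E) (ζ : ℂ), u ≠ 0 ∧ inner ℂ e u = -((‖u‖ ^ 2 : ℝ) : ℂ) ∧ ‖ζ‖ < 1 ∧
      w = p + (1 - ζ) • u := by
  set v := w - p with hv
  have h0 : ‖e + v‖ ^ 2 < ‖e‖ ^ 2 := by
    have : e + v = w - (p - e) := by rw [hv]; abel
    rw [this, ← dist_eq_norm]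
    exact pow_lt_pow_left₀ (mem_ball.1 hw) dist_nonneg two_ne_zero
  have hin : inner ℂ e v ≠ 0 := by
    intro h
    rw [@norm_add_sq ℂ, h] at h0
    have := sq_nonneg ‖v‖
    simp at h0
    linarith
  have hv0 : v ≠ 0 := by rintro h; simp [h] at hin
  have hvn : ((‖v‖ ^ 2 : ℝ) : ℂ) ≠ 0 := by
    exact_mod_cast (pow_pos (norm_pos_iff.2 hv0) 2).ne'
  set β : ℂ := -(starRingEnd ℂ (inner ℂ e v)) / ((‖v‖ ^ 2 : ℝ) : ℂ) with hβ
  have hβ0 : β ≠ 0 := div_ne_zero (neg_ne_zero.2 ((map_ne_zero _).2 hin)) hvn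
  have hu : inner ℂ e (β • v) = -((‖β • v‖ ^ 2 : ℝ) : ℂ) := by
    have h1 : starRingEnd ℂ β * ((‖v‖ ^ 2 : ℝ) : ℂ) = -inner ℂ e v := by
      rw [hβ, map_div₀, map_neg, Complex.conj_conj, Complex.conj_ofReal, div_mul_cancel₀ _ hvn]
    have h2 : ((‖β • v‖ ^ 2 : ℝ) : ℂ) = β * (starRingEnd ℂ β * ((‖v‖ ^ 2 : ℝ) : ℂ)) := by
      rw [norm_smul, mul_pow, ← mul_assoc, Complex.mul_conj, Complex.normSq_eq_norm_sq]
      push_cast; ring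
    rw [h2, h1, inner_smul_right]; ring
  have hvβ : (1 - (1 - β⁻¹)) • (β • v) = v := by
    rw [sub_sub_cancel, smul_smul, inv_mul_cancel₀ hβ0, one_smul]
  have hne : β • v ≠ 0 := smul_ne_zero hβ0 hv0
  refine ⟨β • v, 1 - β⁻¹, hne, hu, ?_, by rw [hvβ, hv]; abel⟩
  have h1 := norm_add_one_sub_smul_sq hu (1 - β⁻¹)
  rw [hvβ] at h1
  have h2 : 0 < (1 - ‖1 - β⁻¹‖ ^ 2) * ‖β • v‖ ^ 2 := by linarith
  have h3 := pos_of_mul_pos_left h2 (sq_nonneg _)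
  exact (sq_lt_one_iff₀ (norm_nonneg _)).1 (by linarith)

/-- Eigenfunctions of composition, for an eigenvalue other than `1`, vanish on discs through the
boundary fixed point. -/
theorem eq_zero_on_slice {F : E → E} {f : E → V} {Ω : Set E} {p e : E} {B : ℝ} {μ : ℂ} (hμ : μ ≠ 1)
    (hball : ball (p - e) ‖e‖ ⊆ Ω) (hd : DifferentiableOn ℂ f Ω) (hB : ∀ w ∈ Ω, ‖f w‖ ≤ B)
    (heq : ∀ w ∈ Ω, f (F w) = μ • f w)
    (ho : ∀ ε > 0, ∃ η > 0, ∀ z ∈ Ω, ‖z - p‖ < η → ‖F z - z‖ ≤ ε * ‖z - p‖ ^ 2)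
    {u : E} (hu0 : u ≠ 0) (hu : inner ℂ e u = -((‖u‖ ^ 2 : ℝ) : ℂ)) {ζ : ℂ} (hζ : ‖ζ‖ < 1) :
    f (p + (1 - ζ) • u) = 0 := by
  have hu1 := norm_pos_iff.2 hu0
  have hμ0 : 0 < ‖μ - 1‖ := norm_pos_iff.2 (sub_ne_zero.2 hμ)
  have hue : ‖u‖ ≤ ‖e‖ := by
    have h1 := norm_inner_le_norm (𝕜 := ℂ) e u
    rw [hu, norm_neg, Complex.norm_real, Real.norm_of_nonneg (sq_nonneg _), pow_two] at h1
    exact le_of_mul_le_mul_right h1 hu1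
  have he1 : 0 < ‖e‖ := hu1.trans_le hue
  have hdisc : ∀ ζ : ℂ, ‖ζ‖ < 1 → p + (1 - ζ) • u ∈ ball (p - e) ‖e‖ := by
    intro ζ hζ
    rw [mem_ball, dist_eq_norm]
    have h1 := norm_add_one_sub_smul_sq hu ζ
    have h2 : p + (1 - ζ) • u - (p - e) = e + (1 - ζ) • u := by abel
    rw [h2]
    have h3 : 0 < (1 - ‖ζ‖ ^ 2) * ‖u‖ ^ 2 := by
      have := pow_lt_one₀ (norm_nonneg _) hζ two_ne_zero
      exact mul_pos (by linarith) (by positivity)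
    exact lt_of_pow_lt_pow_left₀ 2 he1.le (by linarith)
  have hB0 : 0 ≤ B := (norm_nonneg _).trans (hB _ (hball (hdisc ζ hζ)))
  set c₁ : ℝ := ‖u‖ ^ 2 / (2 * ‖e‖) with hc₁
  have hc₁0 : 0 < c₁ := by positivity
  have hc₁u : c₁ ≤ ‖u‖ / 2 := by
    rw [hc₁, div_le_iff₀ (by positivity)]
    have := mul_le_mul_of_nonneg_left hue hu1.le
    linarith
  set r : ℝ := c₁ / (16 * ‖u‖) with hr
  have hr0 : 0 < r := by positivity
  have hru : r * (16 * ‖u‖) = c₁ := div_mul_cancel₀ _ (by positivity)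
  have hr2 : r ≤ 1 / 2 := by
    rw [hr, div_le_iff₀ (by positivity)]; linarith
  obtain ⟨t, ht⟩ := exists_pow_lt_of_lt_one hr0 (by norm_num : (1 / 2 : ℝ) < 1)
  have hinner : ∀ τ : ℝ, 0 < τ → τ ≤ 1 →
      ball (p + (τ : ℂ) • u) (c₁ * τ) ⊆ ball (p - e) ‖e‖ := by
    intro τ hτ hτ1
    refine ball_subset_ball' ?_
    have h1 := norm_add_one_sub_smul_sq hu (1 - τ : ℝ)
    have h2 : (1 : ℂ) - ((1 - τ : ℝ) : ℂ) = τ := by push_cast; ring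
    rw [h2, Complex.norm_real, Real.norm_of_nonneg (by linarith)] at h1
    have h3 : p + (τ : ℂ) • u - (p - e) = e + (τ : ℂ) • u := by abel
    rw [dist_eq_norm, h3]
    have h4 : c₁ * (2 * ‖e‖) = ‖u‖ ^ 2 := div_mul_cancel₀ _ (by positivity)
    have h5 : c₁ * τ ≤ ‖e‖ := by
      calc c₁ * τ ≤ ‖u‖ / 2 * 1 := by gcongr
        _ ≤ ‖e‖ := by linarith
    have h6 : τ ^ 2 ≤ τ := pow_le_of_le_one hτ.le hτ1 two_ne_zero
    have h7 : ‖u‖ ^ 2 * τ ^ 2 ≤ ‖u‖ ^ 2 * τ := by gcongr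
    have h8 : ‖e + (τ : ℂ) • u‖ ^ 2 ≤ (‖e‖ - c₁ * τ) ^ 2 := by
      have e1 : (‖e‖ - c₁ * τ) ^ 2 = ‖e‖ ^ 2 - c₁ * (2 * ‖e‖) * τ + (c₁ * τ) ^ 2 := by ring
      have e2 := sq_nonneg (c₁ * τ)
      have e3 : (1 - (1 - τ) ^ 2) * ‖u‖ ^ 2 = 2 * (‖u‖ ^ 2 * τ) - ‖u‖ ^ 2 * τ ^ 2 := by ring
      rw [h4] at e1
      linarith
    have := le_of_sq_le_sq h8 (by linarith)
    linarith
  refine eq_zero_of_small_near_one (f := fun ζ => f (p + (1 - ζ) • u)) (B := B) hr0 (by linarith)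
    ?_ (fun ζ hζ => hB _ (hball (hdisc ζ hζ))) ?_ hζ
  · exact hd.comp (f := fun ζ : ℂ => p + (1 - ζ) • u) (by fun_prop)
      fun ζ hζ => hball (hdisc ζ (by simpa using hζ))
  intro K
  set K' : ℝ := max K 1 with hK'
  have hK'0 : 0 < K' := lt_max_of_lt_right one_pos
  set σ : ℝ := c₁ / (2 * (t + 1) * (K' + 1)) with hσ
  have hσ0 : 0 < σ := by positivity
  set ν : ℝ := min ‖μ - 1‖ 1 with hν
  have hν0 : 0 < ν := lt_min hμ0 one_pos
  obtain ⟨η, hη, hη'⟩ := ho (ν * σ / (16 * ‖u‖ ^ 2)) (by positivity)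
  obtain ⟨τ, hτ, hττ⟩ := exists_between (show 0 < min 1 (η / (2 * ‖u‖)) by positivity)
  have hτ1 : τ ≤ 1 := (hττ.trans_le (min_le_left _ _)).le
  have hτη : 2 * ‖u‖ * τ < η := by
    have := hττ.trans_le (min_le_right _ _)
    rw [lt_div_iff₀ (by positivity)] at this
    linarith
  refine ⟨τ, hτ, hτ1, ⌈K' / τ⌉₊, ?_, fun ζ hζ hζτ => ?_⟩
  · exact (le_max_left _ _).trans ((div_le_iff₀ hτ).1 (Nat.le_ceil _))
  set P := ⌈K' / τ⌉₊ with hP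
  have hsubΩ := (hinner τ hτ hτ1).trans hball
  have hdr : ∀ w ∈ ball (p + (τ : ℂ) • u) (c₁ * τ), ‖F w - w‖ ≤ ν * (σ * τ ^ 2) / 4 := by
    intro w hw
    have h1 : ‖w - p‖ ≤ 2 * ‖u‖ * τ := by
      rw [mem_ball, dist_eq_norm] at hw
      have e1 := norm_sub_le_norm_sub_add_norm_sub w (p + (τ : ℂ) • u) p
      rw [add_sub_cancel_left, norm_smul, Complex.norm_real, Real.norm_of_nonneg hτ.le] at e1
      have e2 : c₁ * τ ≤ ‖u‖ / 2 * τ := by gcongr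
      have e3 := mul_pos hu1 hτ
      linarith
    calc ‖F w - w‖ ≤ ν * σ / (16 * ‖u‖ ^ 2) * ‖w - p‖ ^ 2 :=
          hη' w (hsubΩ hw) (h1.trans_lt hτη)
      _ ≤ ν * σ / (16 * ‖u‖ ^ 2) * (2 * ‖u‖ * τ) ^ 2 := by gcongr
      _ = ν * (σ * τ ^ 2) / 4 := by field_simp; norm_num
  have hs0 : 0 < σ * τ ^ 2 := by positivity
  have hsm := norm_le_pow_of_comp_eq_smul hμ (hd.mono hsubΩ) (fun w hw => hB w (hsubΩ hw))
    (fun w hw => heq w (hsubΩ hw)) hdr (s := σ * τ ^ 2)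
    (by
      have : ν * (σ * τ ^ 2) ≤ 1 * (σ * τ ^ 2) := by gcongr; exact min_le_right _ _
      linarith)
    (by
      have : ν * (σ * τ ^ 2) ≤ ‖μ - 1‖ * (σ * τ ^ 2) := by gcongr; exact min_le_left _ _
      linarith) hs0 (t * P)
  have hm : ((t * P : ℕ) : ℝ) * (σ * τ ^ 2) ≤ c₁ * τ / 2 := by
    have h1 : (P : ℝ) * τ ≤ K' + 1 := by
      have h1 := (Nat.ceil_lt_add_one (div_pos hK'0 hτ).le).le
      calc (P : ℝ) * τ ≤ (K' / τ + 1) * τ := by gcongr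
        _ = K' + τ := by field_simp
        _ ≤ K' + 1 := by gcongr
    calc ((t * P : ℕ) : ℝ) * (σ * τ ^ 2) = t * ((P * τ) * (σ * τ)) := by push_cast; ring
      _ ≤ (t + 1) * ((K' + 1) * (σ * τ)) := by gcongr; linarith
      _ = c₁ * τ / 2 := by rw [hσ]; field_simp
  refine (hsm _ ?_).trans ?_
  · rw [mem_ball, dist_eq_norm]
    have h1 : p + (1 - ζ) • u - (p + (τ : ℂ) • u) = -((ζ - (1 - τ : ℝ)) • u) := by
      rw [add_sub_add_left_eq_sub, ← sub_smul, ← neg_smul]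
      congr 1; push_cast; ring
    rw [h1, norm_neg, norm_smul]
    have h2 : 2 * τ * r / (1 - r) ≤ 4 * τ * r := by
      rw [div_le_iff₀ (by linarith)]
      have : 4 * τ * r * (1 / 2) ≤ 4 * τ * r * (1 - r) := by gcongr; linarith
      linarith
    have h3 : ‖ζ - (1 - τ : ℝ)‖ * ‖u‖ ≤ 4 * τ * r * ‖u‖ := by
      gcongr; exact hζτ.trans h2
    have h4 : 4 * τ * r * ‖u‖ = c₁ * τ / 4 := by rw [← hru]; ring
    have h5 := mul_pos hc₁0 hτ
    linarith
  · rw [pow_mul]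
    gcongr

/-- Bounded holomorphic eigenfunctions of composition, for an eigenvalue other than `1`, vanish. -/
theorem eq_zero_of_comp_eq_smul {F : E → E} {f : E → V} {Ω : Set E} {p e : E} {B : ℝ} {μ : ℂ}
    (hμ : μ ≠ 1) (hΩ : IsOpen Ω) (hc : IsPreconnected Ω) (he : e ≠ 0)
    (hball : ball (p - e) ‖e‖ ⊆ Ω) (hd : DifferentiableOn ℂ f Ω) (hB : ∀ w ∈ Ω, ‖f w‖ ≤ B)
    (heq : ∀ w ∈ Ω, f (F w) = μ • f w)
    (ho : ∀ ε > 0, ∃ η > 0, ∀ z ∈ Ω, ‖z - p‖ < η → ‖F z - z‖ ≤ ε * ‖z - p‖ ^ 2) :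
    ∀ z ∈ Ω, f z = 0 := by
  have he0 := norm_pos_iff.2 he
  refine eqOn_zero_of_eventuallyEq_zero hΩ hc hd hB (hball (mem_ball_self he0)) ?_
  filter_upwards [ball_mem_nhds (p - e) he0] with w hw
  obtain ⟨u, ζ, hu0, hu, hζ, rfl⟩ := exists_slice hw
  exact eq_zero_on_slice hμ hball hd hB heq ho hu0 hu hζ

end Slices

section Conclusion

variable {E : Type*} [NormedAddCommGroup E] [NormedSpace ℂ E]

theorem norm_eq_one_of_tendsto_pow {l : Filter ℕ} [l.NeBot] (h1 : ∀ᶠ k in l, 1 ≤ k) {x : ℝ}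
    (hx : 0 ≤ x) (hlim : Tendsto (fun k => x ^ k) l (𝓝 1)) : x = 1 := by
  rcases lt_trichotomy x 1 with h | h | h
  · have h2 : (1 : ℝ) ≤ x := le_of_tendsto hlim (h1.mono fun k hk =>
      pow_le_of_le_one hx h.le (by omega))
    linarith
  · exact h
  · have h2 : x ≤ 1 := ge_of_tendsto hlim (h1.mono fun k hk => le_self_pow₀ h.le (by omega))
    linarith

/-- A linear map, some of whose powers tend to the identity, and whose only unimodular eigenvalue
is `1`, is the identity. -/
theorem eq_one_of_tendsto_pow_one [FiniteDimensional ℂ E] {A : E →L[ℂ] E} {l : Filter ℕ} [l.NeBot]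
    (h1 : ∀ᶠ k in l, 1 ≤ k) (hlim : Tendsto (fun k => A ^ k) l (𝓝 1))
    (hev : ∀ (μ : ℂ) (v : E), v ≠ 0 → A v = μ • v → ‖μ‖ = 1 → μ = 1) : A = 1 := by
  have hlimv : ∀ v, Tendsto (fun k => (A ^ k) v) l (𝓝 v) := fun v =>
    ((ContinuousLinearMap.apply ℂ E v).continuous.tendsto 1).comp hlim
  have hev' : ∀ (μ : ℂ) (v : E), v ≠ 0 → A v = μ • v → μ = 1 := by
    intro μ v hv hAv
    refine hev μ v hv hAv (norm_eq_one_of_tendsto_pow h1 (norm_nonneg _) ?_)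
    have hpow : ∀ k : ℕ, (A ^ k) v = μ ^ k • v := by
      intro k
      induction k with
      | zero => simp
      | succ k ih =>
        rw [pow_succ, mul_apply_eq_comp, hAv, map_smul, ih, smul_smul, pow_succ']
    have h2 := ((hlimv v).norm).div_const ‖v‖
    simp only [hpow, norm_smul, norm_pow, mul_div_cancel_right₀ _ (norm_ne_zero_iff.2 hv),
      div_self (norm_ne_zero_iff.2 hv)] at h2
    exact h2
  by_contra hA
  set N : E →ₗ[ℂ] E := (A : E →ₗ[ℂ] E) - 1 with hN
  have hNv : ∀ v, N v = A v - v := fun v => rfl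
  have hmaps : ∀ w ∈ LinearMap.range N, (A : E →ₗ[ℂ] E) w ∈ LinearMap.range N := by
    rintro _ ⟨v, rfl⟩
    exact ⟨A v, by rw [hNv, hNv, ContinuousLinearMap.coe_coe, map_sub]⟩
  have hnt : Nontrivial (LinearMap.range N) := by
    rw [Submodule.nontrivial_iff_ne_bot, ne_eq, LinearMap.range_eq_bot]
    intro h
    refine hA (ContinuousLinearMap.ext fun v => ?_)
    have := hNv v
    rw [h, LinearMap.zero_apply] at this
    rw [one_apply_eq_self]
    exact (sub_eq_zero.1 this.symm)
  obtain ⟨μ, hμ⟩ := Module.End.exists_eigenvalue ((A : E →ₗ[ℂ] E).restrict hmaps)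
  obtain ⟨⟨w, v, hvw⟩, hw⟩ := hμ.exists_hasEigenvector
  have hw0 : w ≠ 0 := fun h => hw.2 (Subtype.ext h)
  have hAw : A w = μ • w := congrArg Subtype.val hw.apply_eq_smul
  rw [hev' μ w hw0 hAw, one_smul] at hAw
  have hAv : A v = v + w := by rw [← hvw, hNv]; abel
  have hpow : ∀ k : ℕ, (A ^ k) v = v + (k : ℂ) • w := by
    intro k
    induction k with
    | zero => simp
    | succ k ih =>
      rw [pow_succ', mul_apply_eq_comp, ih, map_add, map_smul, hAv, hAw]
      push_cast
      rw [add_smul, one_smul]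
      abel
  have h2 : Tendsto (fun k : ℕ => ‖(k : ℂ) • w‖) l (𝓝 0) := by
    have := ((hlimv v).sub_const v).norm
    simpa only [hpow, add_sub_cancel_left, sub_self, norm_zero] using this
  have h3 : ‖w‖ ≤ 0 := ge_of_tendsto h2 (h1.mono fun k hk => by
    rw [norm_smul, Complex.norm_natCast]
    exact le_mul_of_one_le_left (norm_nonneg _) (by exact_mod_cast hk))
  exact hw0 (norm_le_zero_iff.1 h3)

/-- Twisted ergodic averages of the iterates converge to eigenfunctions of composition. -/
theorem exists_eigenfunction [FiniteDimensional ℂ E] {F : E → E} {Ω : Set E} {B : ℝ} {μ : ℂ}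
    (hΩ : IsOpen Ω) (hB : ∀ z ∈ Ω, ‖z‖ ≤ B) (hF : DifferentiableOn ℂ F Ω) (hFΩ : MapsTo F Ω Ω)
    {z₀ : E} (hz₀ : z₀ ∈ Ω) (hfix : F z₀ = z₀) (hμ : ‖μ‖ = 1) :
    ∃ f : E → E, DifferentiableOn ℂ f Ω ∧ (∀ z ∈ Ω, ‖f z‖ ≤ B) ∧ (∀ z ∈ Ω, f (F z) = μ • f z) ∧
      ∀ v, fderiv ℂ F z₀ v = μ • v → fderiv ℂ f z₀ v = v := by
  have : ProperSpace E := FiniteDimensional.proper ℂ E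
  have hB0 : 0 ≤ B := (norm_nonneg _).trans (hB z₀ hz₀)
  have hμ0 : μ ≠ 0 := by rintro rfl; simp at hμ
  have hμinv : ‖μ⁻¹‖ = 1 := by rw [norm_inv, hμ, inv_one]
  set S : ℕ → E → E := fun N z =>
    ((N : ℂ) + 1)⁻¹ • ∑ k ∈ Finset.range (N + 1), μ⁻¹ ^ k • F^[k] z with hS
  have hN0 : ∀ N : ℕ, (N : ℂ) + 1 ≠ 0 := fun N => Nat.cast_add_one_ne_zero N
  have hnN : ∀ N : ℕ, ‖(N : ℂ) + 1‖ = N + 1 := fun N => by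
    exact_mod_cast Complex.norm_natCast (N + 1)
  have hSB : ∀ N, ∀ z ∈ Ω, ‖S N z‖ ≤ B := by
    intro N z hz
    have h1 : ‖∑ k ∈ Finset.range (N + 1), μ⁻¹ ^ k • F^[k] z‖ ≤ (N + 1) * B := by
      refine (norm_sum_le_of_le _ (f := fun k => μ⁻¹ ^ k • F^[k] z) (n := fun _ => B)
        fun k _ => ?_).trans_eq (by simp)
      rw [norm_smul, norm_pow, hμinv, one_pow, one_mul]
      exact hB _ (hFΩ.iterate k hz)
    simp only [hS]
    rw [norm_smul, norm_inv, hnN]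
    exact (inv_mul_le_iff₀ (by positivity)).2 h1
  have hSd : ∀ N, DifferentiableOn ℂ (S N) Ω := fun N =>
    (DifferentiableOn.fun_sum fun k _ => (hF.iterate' hFΩ k).const_smul _).const_smul _
  set U : Ultrafilter ℕ := hyperfilter ℕ with hU
  have hlim : ∀ z ∈ Ω, ∃ x ∈ closedBall (0 : E) B, Tendsto (fun N => S N z) U (𝓝 x) := by
    intro z hz
    obtain ⟨x, hx, hx'⟩ := (isCompact_closedBall (0 : E) B).ultrafilter_le_nhds
      (U.map fun N => S N z)
      (le_principal_iff.2 (Ultrafilter.mem_map.2 (Filter.univ_mem' fun N => by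
        simpa using hSB N z hz)))
    exact ⟨x, hx, hx'⟩
  choose! f hfB hf using hlim
  have hder : ∀ z ∈ Ω, ∃ D : E →L[ℂ] E, HasFDerivAt f D z ∧
      Tendsto (fun N => fderiv ℂ (S N) z) U (𝓝 D) := fun z hz =>
    exists_hasFDerivAt_of_ultrafilter_tendsto U hΩ hSd hSB hf hz
  refine ⟨f, fun z hz => ?_, fun z hz => by simpa using hfB z hz, fun z hz => ?_, fun v hv => ?_⟩
  · obtain ⟨D, hD, -⟩ := hder z hz
    exact hD.differentiableAt.differentiableWithinAt
  · have h1 : ∀ N, S N (F z) - μ • S N z =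
        ((N : ℂ) + 1)⁻¹ • (μ • (μ⁻¹ ^ (N + 1) • F^[N + 1] z - z)) := by
      intro N
      have e1 : ∀ k, μ⁻¹ ^ k • F^[k] (F z) = μ • (μ⁻¹ ^ (k + 1) • F^[k + 1] z) := by
        intro k
        rw [smul_smul, pow_succ', mul_inv_cancel_left₀ hμ0, iterate_succ_apply]
      have e2 := Finset.sum_range_sub (fun k => μ⁻¹ ^ k • F^[k] z) (N + 1)
      simp only [pow_zero, one_smul, iterate_zero, id, Finset.sum_sub_distrib] at e2
      simp only [hS, e1]
      rw [← Finset.smul_sum, smul_comm μ, ← smul_sub, ← smul_sub, e2]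
    have h2 : Tendsto (fun N => S N (F z) - μ • S N z) U (𝓝 (f (F z) - μ • f z)) :=
      (hf _ (hFΩ hz)).sub ((hf z hz).const_smul μ)
    have h3 : Tendsto (fun N => S N (F z) - μ • S N z) U (𝓝 0) := by
      refine squeeze_zero_norm (a := fun N : ℕ => 1 / ((N : ℝ) + 1) * (2 * B)) (fun N => ?_) ?_
      · rw [h1, norm_smul, norm_smul, hμ, one_mul, norm_inv, hnN, one_div]
        gcongr
        refine (norm_sub_le _ _).trans ?_
        rw [norm_smul, norm_pow, hμinv, one_pow, one_mul]
        linarith [hB _ (hFΩ.iterate (N + 1) hz), hB z hz]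
      · have := (tendsto_one_div_add_atTop_nhds_zero_nat (𝕜 := ℝ)).mul_const (2 * B)
        rw [zero_mul] at this
        exact this.mono_left Nat.hyperfilter_le_atTop
    exact sub_eq_zero.1 (tendsto_nhds_unique h2 h3)
  · obtain ⟨D, hD, hDlim⟩ := hder z₀ hz₀
    rw [hD.fderiv]
    have hFz := (hF.differentiableAt (hΩ.mem_nhds hz₀)).hasFDerivAt
    have hpow : ∀ k : ℕ, ((fderiv ℂ F z₀) ^ k) v = μ ^ k • v := by
      intro k
      induction k with
      | zero => simp
      | succ k ih =>
        rw [pow_succ, mul_apply_eq_comp, hv, map_smul, ih, smul_smul, pow_succ']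
    have h1 : ∀ N, fderiv ℂ (S N) z₀ v = v := by
      intro N
      have e1 : HasFDerivAt (S N) (((N : ℂ) + 1)⁻¹ •
          ∑ k ∈ Finset.range (N + 1), μ⁻¹ ^ k • (fderiv ℂ F z₀) ^ k) z₀ :=
        (HasFDerivAt.fun_sum fun k _ => (hFz.iterate hfix k).const_smul _).const_smul _
      rw [e1.fderiv]
      simp only [_root_.smul_apply, _root_.sum_apply, hpow, smul_smul, ← mul_pow,
        inv_mul_cancel₀ hμ0, one_pow, Finset.sum_const, Finset.card_range, one_smul]
      rw [← Nat.cast_smul_eq_nsmul ℂ, smul_smul]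
      push_cast
      rw [inv_mul_cancel₀ (hN0 N), one_smul]
    have h2 : Tendsto (fun N => fderiv ℂ (S N) z₀ v) U (𝓝 (D v)) :=
      ((ContinuousLinearMap.apply ℂ E v).continuous.tendsto D).comp hDlim
    simp only [h1] at h2
    exact tendsto_nhds_unique h2 tendsto_const_nhds

/-- Cartan's uniqueness theorem at an interior fixed point. -/
theorem eq_self_of_fderiv_eq_one [FiniteDimensional ℂ E] {F : E → E} {Ω : Set E}
    (hΩ : IsOpen Ω) (hc : IsPreconnected Ω) (hb : Bornology.IsBounded Ω)
    (hF : DifferentiableOn ℂ F Ω) (hFΩ : MapsTo F Ω Ω)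
    {z₀ : E} (hz₀ : z₀ ∈ Ω) (hfix : F z₀ = z₀) (hA : fderiv ℂ F z₀ = 1) : ∀ z ∈ Ω, F z = z := by
  obtain ⟨B, hB⟩ := hb.exists_norm_le
  obtain ⟨f, hfd, hfB, hfF, hfz⟩ := exists_eigenfunction (μ := 1) hΩ hB hF hFΩ hz₀ hfix norm_one
  have hf1 : fderiv ℂ f z₀ = 1 := ContinuousLinearMap.ext fun v => hfz v (by simp [hA])
  obtain ⟨r, hr, hball⟩ := Metric.isOpen_iff.1 hΩ z₀ hz₀
  have hst := hasStrictFDerivAt_of_differentiableOn_of_norm_le hr (hfd.mono hball)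
    (fun y hy => hfB y (hball hy))
  have hsmall := hst.isLittleO.def (show (0 : ℝ) < 1 / 2 by norm_num)
  have hcont : Tendsto (fun z => (F z, z)) (𝓝 z₀) (𝓝 (z₀, z₀)) := by
    have h1 : Tendsto F (𝓝 z₀) (𝓝 z₀) := by
      have := (hF.differentiableAt (hΩ.mem_nhds hz₀)).continuousAt.tendsto
      rwa [hfix] at this
    exact h1.prodMk_nhds tendsto_id
  have hnear : ∀ᶠ z in 𝓝 z₀, F z - z = 0 := by
    filter_upwards [hcont.eventually hsmall, hΩ.mem_nhds hz₀] with z hz hzΩ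
    rw [hfF z hzΩ, one_smul, sub_self, hf1, one_apply_eq_self, zero_sub, norm_neg] at hz
    exact norm_le_zero_iff.1 (by linarith)
  have key := eqOn_zero_of_eventuallyEq_zero (B := 2 * B) hΩ hc (hF.sub differentiableOn_id)
    (fun w hw => by
      rw [Pi.sub_apply, id]
      linarith [norm_sub_le (F w) w, hB w hw, hB _ (hFΩ hw)]) hz₀ hnear
  exact fun z hz => sub_eq_zero.1 (key z hz)

end Conclusion

section Conclusion

variable {E : Type*} [NormedAddCommGroup E] [InnerProductSpace ℂ E] [FiniteDimensional ℂ E]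

theorem eq_self_of_isPeakFunction {F : E → E} {Ω : Set E} (hΩ : IsOpen Ω) (hc : IsPreconnected Ω)
    (hb : Bornology.IsBounded Ω) (hF : DifferentiableOn ℂ F Ω) (hFΩ : MapsTo F Ω Ω) {z₀ : E}
    (hz₀ : z₀ ∈ Ω) (hfix : F z₀ = z₀) {L : E → ℂ} {p e : E} {c δ : ℝ}
    (hP : IsPeakFunction L Ω p c δ) (hp : p ∈ closure Ω)
    (hball : ball (p - e) ‖e‖ ⊆ Ω) (hLe : fderiv ℂ L p e ≠ 0)
    (ho : ∀ ε > 0, ∃ η > 0, ∀ z ∈ Ω, ‖z - p‖ < η → ‖F z - z‖ ≤ ε * ‖z - p‖ ^ 2) :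
    ∀ z ∈ Ω, F z = z := by
  have he : e ≠ 0 := by rintro rfl; simp at hLe
  obtain ⟨B, hB⟩ := hb.exists_norm_le
  obtain ⟨U, g, h⟩ := exists_isIterateLimit hΩ hb hF hFΩ
  have hg := h.eq_self hΩ hc hb hF hFΩ hz₀ hfix hP hp hball hLe ho
  obtain ⟨D, hD, hDlim⟩ := h.exists_hasFDerivAt hΩ hb hF hFΩ hz₀
  have hD1 : D = 1 := by
    refine hD.unique ((hasFDerivAt_id z₀).congr_of_eventuallyEq ?_)
    filter_upwards [hΩ.mem_nhds hz₀] with z hz using hg z hz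
  have hFz := (hF.differentiableAt (hΩ.mem_nhds hz₀)).hasFDerivAt
  simp only [fun k => (hFz.iterate hfix k).fderiv, hD1] at hDlim
  refine eq_self_of_fderiv_eq_one hΩ hc hb hF hFΩ hz₀ hfix
    (eq_one_of_tendsto_pow_one h.one_le hDlim fun μ v hv hAv hμ => ?_)
  by_contra hμ1
  obtain ⟨f, hfd, hfB, hfF, hfz⟩ := exists_eigenfunction hΩ hB hF hFΩ hz₀ hfix hμ
  have hf0 := eq_zero_of_comp_eq_smul hμ1 hΩ hc he hball hfd hfB hfF ho
  have h1 : fderiv ℂ f z₀ = 0 := by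
    refine HasFDerivAt.fderiv ((hasFDerivAt_const (0 : E) z₀).congr_of_eventuallyEq ?_)
    filter_upwards [hΩ.mem_nhds hz₀] with z hz using hf0 z hz
  have h2 := hfz v hAv
  rw [h1, _root_.zero_apply] at h2
  exact hv h2.symm

end Conclusion

theorem LittleOh.exists_norm_sub_le {n : ℕ} {Ω : Set (En n)} {F : En n → En n} {p : En n} {k : ℕ}
    (ho : LittleOh Ω F p k) (hp : p ∉ Ω) :
    ∀ ε > 0, ∃ η > 0, ∀ z ∈ Ω, ‖z - p‖ < η → ‖F z - z‖ ≤ ε * ‖z - p‖ ^ k := by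
  intro ε hε
  obtain ⟨η, hη, h⟩ := Metric.mem_nhdsWithin_iff.1 (ho.eventually (eventually_lt_nhds hε))
  refine ⟨η, hη, fun z hz hzp => ?_⟩
  have hne : 0 < ‖z - p‖ := norm_pos_iff.2 (sub_ne_zero.2 (by rintro rfl; exact hp hz))
  have h1 : ‖F z - z‖ / ‖z - p‖ ^ k < ε := h ⟨by rwa [mem_ball, dist_eq_norm], hz⟩
  rw [div_lt_iff₀ (by positivity)] at h1
  exact h1.le

theorem huang_conjecture
    {n : ℕ} (hn : 2 ≤ n) (Ω : Set (En n)) (ρ : En n → ℝ)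
    (hΩ : IsDomain' Ω) (hbd : Bornology.IsBounded Ω)
    (hρ : IsPcxCinfBoundary Ω ρ)
    (p : En n) (hp : p ∈ frontier Ω) (hspc : StronglyPcxAt ρ p)
    (F : En n → En n) (hF : DifferentiableOn ℂ F Ω) (hFself : MapsTo F Ω Ω)
    (z₀ : En n) (hz₀ : z₀ ∈ Ω) (hfix : F z₀ = z₀)
    (ho : LittleOh Ω F p 2) :
    ∀ z ∈ Ω, F z = z := by
  obtain ⟨L, e, c, δ, hL, hLp, hc, hδ, hre, -, hball, hLe⟩ := exists_peak_function hρ.1 hp hspc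
  rw [hΩ.1.frontier_eq] at hp
  exact eq_self_of_isPeakFunction hΩ.1 hΩ.2.isPreconnected hbd hF hFself hz₀ hfix
    ⟨hL, hLp, hc, hδ, hre⟩ hp.1 hball hLe (ho.exists_norm_sub_le hp.2)
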